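/- arXiv:1406.6386 — 2 statements merged into one kernel-verified Lean document; each statement's English description precedes it below -/
import Mathlib

section
/- For every function φ : n^{<ω} → m^{<ω} there exists T ⊆ n^{<ω} with T ≈ n^{<ω} such that φ(A) ≈ φ(B) whenever A ∪ B ⊆ T and A ≈ B. -/
/-- The meet of two nodes of a tree: the longest common initial segment. -/
def lmeet {α : Type*} [DecidableEq α] : List α → List α → List α
  | a :: s, b :: t => if a = b then a :: lmeet s t else []
  | _, _ => []

/-- The well-order `≺` on the `n`-adic tree: by level, then lexicographically. -/
def lprec {α : Type*} [LT α] (s t : List α) : Prop :=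
  s.length < t.length ∨ (s.length = t.length ∧ List.Lex (· < ·) s t)

/-- A set of nodes is meet-closed. -/
def MeetClosed {α : Type*} [DecidableEq α] (A : Set (List α)) : Prop :=
  ∀ s ∈ A, ∀ t ∈ A, lmeet s t ∈ A

/-- The meet-closure of a set of nodes: the smallest meet-closed set containing it. -/
def mcl {α : Type*} [DecidableEq α] (A : Set (List α)) : Set (List α) :=
  ⋂₀ {B | A ⊆ B ∧ MeetClosed B}

/-- `A ≈ B`: first-move equivalence of subsets of the `n`-adic tree, i.e. a bijection
between the meet-closures carrying `A` onto `B` and preserving meets, the order `≺`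
and first moves. -/
def FME {n : ℕ} (A B : Set (List (Fin n))) : Prop :=
  ∃ f : List (Fin n) → List (Fin n),
    Set.BijOn f (mcl A) (mcl B) ∧ f '' A = B ∧
    ∀ s ∈ mcl A, ∀ t ∈ mcl A,
      f (lmeet s t) = lmeet (f s) (f t) ∧
      (lprec s t ↔ lprec (f s) (f t)) ∧
      ∀ i : Fin n, (s ++ [i]) <+: t → (f s ++ [i]) <+: f t

/-- The standard `(i,j)`-comb `{(j), (i,i,j), (i,i,i,i,j), …}`. -/
def combSet {n : ℕ} (i j : Fin n) : Set (List (Fin n)) :=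
  Set.range fun k : ℕ => List.replicate (2 * k) i ++ [j]

/-- `X` is an `(i,j)`-comb if it is first-move equivalent to the standard comb. -/
def IsComb {n : ℕ} (i j : Fin n) (X : Set (List (Fin n))) : Prop :=
  FME X (combSet i j)

/-- `Γ_S`: the family of all `(i,j)`-combs for `(i,j) ∈ S`. -/
def combFam {n : ℕ} (S : Set (Fin n × Fin n)) : Set (Set (List (Fin n))) :=
  {X | ∃ p ∈ S, IsComb p.1 p.2 X}

/-- Baire measurable: belongs to the σ-algebra generated by open sets and meager sets. -/
def BaireMeas {α : Type*} [TopologicalSpace α] (s : Set α) : Prop :=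
  @MeasurableSet _ (MeasurableSpace.generateFrom {t : Set α | IsOpen t ∨ IsMeagre t}) s

/-!
A coloring of the finite strong subtrees of the tree is constant on the strong subtrees of a fixed
height of some strong subtree (Milliken). This follows by fusion from the Halpern–Läuchli theorem,
which is the Carlson–Simpson theorem for words over the alphabet `κ → α`, where `κ` indexes the
nodes of a level; the Carlson–Simpson theorem in turn comes from an idempotent ultrafilter
of variable words lying below a minimal idempotent of words.

Let `E` be a strong embedding homogeneous for the coloring of small families of nodes by the
first-move type of their image under `φ`, and compose it with the embedding that puts the node of
rank `r` in the well-order `≺` on level `r`. Distinct nodes of the image of the latter lie on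
distinct levels, so two of its finite subfamilies of the same first-move type are images of one
family, of bounded height, under two strong embeddings. Hence `φ` maps them to families of the same
first-move type. First-move equivalence, even of infinite families, only has to be tested on four
nodes at a time, so subfamilies of bounded size suffice.
-/

section Prefix

variable {α : Type*} {s t : List α} {i j : α}

theorem exists_snoc_prefix (h : s <+: t) (hne : s ≠ t) : ∃ i, s ++ [i] <+: t := by
  obtain ⟨_ | ⟨i, r⟩, rfl⟩ := h
  · simp at hne
  · exact ⟨i, r, by simp⟩

theorem prefix_of_snoc_prefix (h : s ++ [i] <+: t) : s <+: t :=
  (List.prefix_append s [i]).trans h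

theorem prefix_iff_eq_or_snoc_prefix : s <+: t ↔ s = t ∨ ∃ i, s ++ [i] <+: t := by
  refine ⟨fun h => or_iff_not_imp_left.2 (exists_snoc_prefix h), ?_⟩
  rintro (rfl | ⟨i, hi⟩)
  · exact List.prefix_rfl
  · exact prefix_of_snoc_prefix hi

theorem length_lt_of_snoc_prefix (h : s ++ [i] <+: t) : s.length < t.length := by
  simpa [Nat.succ_le_iff] using h.length_le

theorem snoc_prefix_unique (hi : s ++ [i] <+: t) (hj : s ++ [j] <+: t) : i = j := by
  have := (List.prefix_of_prefix_length_le hi hj (by simp)).eq_of_length (by simp)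
  simpa using this

theorem prefix_or_prefix_or_branch (s t : List α) :
    s <+: t ∨ t <+: s ∨ ∃ u i j, i ≠ j ∧ u ++ [i] <+: s ∧ u ++ [j] <+: t := by
  induction s generalizing t with
  | nil => exact .inl List.nil_prefix
  | cons a s ih =>
    rcases t with _ | ⟨b, t⟩
    · exact .inr (.inl List.nil_prefix)
    · obtain rfl | hab := eq_or_ne a b
      · rcases ih t with h | h | ⟨u, i, j, hij, hi, hj⟩
        · exact .inl (by simpa using h)
        · exact .inr (.inl (by simpa using h))
        · exact .inr (.inr ⟨a :: u, i, j, hij, by simpa using hi, by simpa using hj⟩)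
      · exact .inr (.inr ⟨[], a, b, hab, by simp, by simp⟩)

end Prefix

section Meet

variable {α : Type*} [DecidableEq α] {s t u : List α} {i j : α}

theorem lmeet_prefix_left (s t : List α) : lmeet s t <+: s := by
  induction s generalizing t with
  | nil => simp [lmeet]
  | cons a s ih =>
    rcases t with _ | ⟨b, t⟩
    · simp [lmeet]
    · rw [lmeet]
      split_ifs <;> simp [ih]

theorem lmeet_comm (s t : List α) : lmeet s t = lmeet t s := by
  induction s generalizing t with
  | nil => cases t <;> simp [lmeet]
  | cons a s ih =>
    rcases t with _ | ⟨b, t⟩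
    · simp [lmeet]
    · rw [lmeet, lmeet]
      split_ifs with h h' h' <;> simp_all

theorem lmeet_prefix_right (s t : List α) : lmeet s t <+: t :=
  lmeet_comm t s ▸ lmeet_prefix_left t s

theorem prefix_lmeet (hs : u <+: s) (ht : u <+: t) : u <+: lmeet s t := by
  induction u generalizing s t with
  | nil => exact List.nil_prefix
  | cons a u ih =>
    obtain ⟨s, rfl⟩ := hs
    obtain ⟨t, rfl⟩ := ht
    simpa [lmeet] using ih (List.prefix_append u s) (List.prefix_append u t)

theorem lmeet_eq_left (h : s <+: t) : lmeet s t = s :=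
  (lmeet_prefix_left s t).eq_of_length_le (prefix_lmeet List.prefix_rfl h).length_le

theorem lmeet_eq_right (h : t <+: s) : lmeet s t = t := by
  rw [lmeet_comm, lmeet_eq_left h]

theorem lmeet_self (s : List α) : lmeet s s = s :=
  lmeet_eq_left List.prefix_rfl

theorem lmeet_eq_of_branch (hij : i ≠ j) (hi : u ++ [i] <+: s) (hj : u ++ [j] <+: t) :
    lmeet s t = u := by
  by_contra hne
  obtain ⟨k, hk⟩ := exists_snoc_prefix
    (prefix_lmeet (prefix_of_snoc_prefix hi) (prefix_of_snoc_prefix hj)) (Ne.symm hne)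
  exact hij ((snoc_prefix_unique hi (hk.trans (lmeet_prefix_left s t))).trans
    (snoc_prefix_unique (hk.trans (lmeet_prefix_right s t)) hj))

end Meet

/-- A map of trees preserving first moves: it sends the part of the tree above `s ⌢ i` into the
part of the tree above `F s ⌢ i`. -/
def PreservesMoves {α : Type*} (F : List α → List α) : Prop :=
  ∀ s i, F s ++ [i] <+: F (s ++ [i])

namespace PreservesMoves

variable {α : Type*} {F G : List α → List α} {s t : List α} {i : α}

theorem snoc_prefix (hF : PreservesMoves F) (h : s ++ [i] <+: t) : F s ++ [i] <+: F t := by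
  obtain ⟨r, rfl⟩ := h
  induction r using List.reverseRecOn with
  | nil => simpa using hF s i
  | append_singleton r j ih =>
    rw [← List.append_assoc]
    exact ih.trans (prefix_of_snoc_prefix (hF _ j))

theorem map_prefix (hF : PreservesMoves F) (h : s <+: t) : F s <+: F t := by
  obtain rfl | hst := eq_or_ne s t
  · exact List.prefix_rfl
  · obtain ⟨i, hi⟩ := exists_snoc_prefix h hst
    exact prefix_of_snoc_prefix (hF.snoc_prefix hi)

theorem snoc_prefix_iff (hF : PreservesMoves F) : F s ++ [i] <+: F t ↔ s ++ [i] <+: t := by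
  refine ⟨fun h => ?_, hF.snoc_prefix⟩
  have hlen := length_lt_of_snoc_prefix h
  rcases prefix_or_prefix_or_branch s t with hst | hts | ⟨u, a, b, hab, ha, hb⟩
  · obtain ⟨j, hj⟩ := exists_snoc_prefix hst (by rintro rfl; exact lt_irrefl _ hlen)
    rwa [snoc_prefix_unique h (hF.snoc_prefix hj)]
  · exact absurd (hF.map_prefix hts).length_le hlen.not_ge
  · exact absurd (snoc_prefix_unique ((hF.snoc_prefix ha).trans (prefix_of_snoc_prefix h))
      (hF.snoc_prefix hb)) hab

protected theorem id : PreservesMoves (id : List α → List α) := fun _ _ => List.prefix_rfl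

theorem comp (hF : PreservesMoves F) (hG : PreservesMoves G) : PreservesMoves (F ∘ G) :=
  fun s i => hF.snoc_prefix (hG s i)

theorem map_lmeet [DecidableEq α] (hF : PreservesMoves F) (s t : List α) :
    F (lmeet s t) = lmeet (F s) (F t) := by
  rcases prefix_or_prefix_or_branch s t with h | h | ⟨u, a, b, hab, ha, hb⟩
  · rw [lmeet_eq_left h, lmeet_eq_left (hF.map_prefix h)]
  · rw [lmeet_eq_right h, lmeet_eq_right (hF.map_prefix h)]
  · rw [lmeet_eq_of_branch hab ha hb,
      lmeet_eq_of_branch hab (hF.snoc_prefix ha) (hF.snoc_prefix hb)]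

theorem take_eq_of_fixes (hF : PreservesMoves F) {j : ℕ} (hfix : ∀ s, s.length ≤ j → F s = s)
    (t : List α) : (F t).take j = t.take j := by
  have h : t.take j <+: F t := by
    simpa [hfix (t.take j) (by simp)] using hF.map_prefix (List.take_prefix j t)
  rcases le_total t.length j with hj | hj
  · rw [hfix t hj]
  · rw [List.prefix_iff_eq_take.1 h, List.length_take, min_eq_left hj]

end PreservesMoves

/-- The map of trees `[a₁, …, aₖ] ↦ b [] ⌢ a₁ ⌢ b [a₁] ⌢ a₂ ⌢ ⋯ ⌢ aₖ ⌢ b [a₁, …, aₖ]`, which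
inserts after each node `u` the block `b u`. -/
def insertBlocks {α : Type*} : (List α → List α) → List α → List α
  | b, [] => b []
  | b, a :: s => b [] ++ a :: insertBlocks (fun u => b (a :: u)) s

section InsertBlocks

variable {α : Type*} (b : List α → List α)

theorem insertBlocks_nil : insertBlocks b [] = b [] := rfl

theorem insertBlocks_snoc (s : List α) (a : α) :
    insertBlocks b (s ++ [a]) = insertBlocks b s ++ a :: b (s ++ [a]) := by
  induction s generalizing b with
  | nil => rfl
  | cons c s ih => simp [insertBlocks, ih]

theorem preservesMoves_insertBlocks : PreservesMoves (insertBlocks b) :=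
  fun s i => ⟨b (s ++ [i]), by simp [insertBlocks_snoc]⟩

theorem length_insertBlocks {b : List α → List α} {ℓ : ℕ → ℕ}
    (hb : ∀ s, (b s).length = ℓ s.length) (s : List α) :
    (insertBlocks b s).length = ∑ k ∈ Finset.range (s.length + 1), ℓ k + s.length := by
  induction s using List.reverseRecOn with
  | nil => simp [insertBlocks_nil, hb]
  | append_singleton s a ih =>
    rw [insertBlocks_snoc, List.length_append, ih, List.length_cons, hb, List.length_append,
      List.length_singleton, Finset.sum_range_succ _ (s.length + 1)]
    omega

end InsertBlocks

/-- A strong embedding of the tree into itself: a map preserving first moves whose values on each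
level lie on a common level. -/
structure StrongEmb {α : Type*} (e : List α → List α) : Prop where
  preservesMoves : PreservesMoves e
  exists_level : ∃ ℓ : ℕ → ℕ, ∀ s, (e s).length = ℓ s.length

namespace StrongEmb

variable {α : Type*} {e f : List α → List α}

protected theorem id : StrongEmb (id : List α → List α) :=
  ⟨PreservesMoves.id, id, fun _ => rfl⟩

theorem comp (he : StrongEmb e) (hf : StrongEmb f) : StrongEmb (e ∘ f) := by
  obtain ⟨ℓ, hℓ⟩ := he.exists_level
  obtain ⟨ℓ', hℓ'⟩ := hf.exists_level
  exact ⟨he.preservesMoves.comp hf.preservesMoves, ℓ ∘ ℓ', fun s => by simp [hℓ, hℓ']⟩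

theorem length_congr (he : StrongEmb e) {s t : List α} (h : s.length = t.length) :
    (e s).length = (e t).length := by
  obtain ⟨ℓ, hℓ⟩ := he.exists_level
  rw [hℓ, hℓ, h]

theorem length_lt (he : StrongEmb e) {s t : List α} (h : s.length < t.length) :
    (e s).length < (e t).length := by
  have hlen : (t.take s.length).length = s.length := by simp [h.le]
  obtain ⟨i, hi⟩ := exists_snoc_prefix (List.take_prefix s.length t)
    (fun heq => h.ne (by rw [← hlen, heq]))
  rw [← he.length_congr hlen]
  exact length_lt_of_snoc_prefix (he.preservesMoves.snoc_prefix hi)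

theorem length_lt_length_iff (he : StrongEmb e) {s t : List α} :
    (e s).length < (e t).length ↔ s.length < t.length := by
  refine ⟨fun h => ?_, he.length_lt⟩
  by_contra! hts
  rcases hts.eq_or_lt with hts | hts
  · exact h.ne (he.length_congr hts.symm)
  · exact lt_asymm h (he.length_lt hts)

end StrongEmb

section Semigroup

variable {S : Type*} [Semigroup S] [TopologicalSpace S] [T2Space S]

theorem exists_minimal_closed_left_ideal [CompactSpace S] [Nonempty S]
    (hc : ∀ r : S, Continuous (· * r)) :
    ∃ L : Set S, IsCompact L ∧ L.Nonempty ∧ (∀ x, ∀ y ∈ L, x * y ∈ L) ∧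
      ∀ e ∈ L, ∀ y ∈ L, ∃ x, x * e = y := by
  let P : Set (Set S) := {L | IsClosed L ∧ L.Nonempty ∧ ∀ x, ∀ y ∈ L, x * y ∈ L}
  obtain ⟨L, hL⟩ : ∃ L, Minimal (· ∈ P) L := by
    refine zorn_superset P fun c hcP hchain => ?_
    rcases c.eq_empty_or_nonempty with rfl | hne
    · exact ⟨Set.univ, ⟨isClosed_univ, Set.univ_nonempty, fun _ _ _ => trivial⟩, by simp⟩
    · refine ⟨⋂₀ c, ⟨isClosed_sInter fun s hs => (hcP hs).1, ?_, ?_⟩,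
        fun s hs => Set.sInter_subset_of_mem hs⟩
      · have := hne.to_subtype
        exact IsCompact.nonempty_sInter_of_directed_nonempty_isCompact_isClosed
          (fun a ha b hb => (hchain.total ha hb).elim
            (fun hab => ⟨a, ha, subset_rfl, hab⟩) fun hba => ⟨b, hb, hba, subset_rfl⟩)
          (fun s hs => (hcP hs).2.1) (fun s hs => (hcP hs).1.isCompact)
          (fun s hs => (hcP hs).1)
      · exact fun x y hy s hs => (hcP hs).2.2 x y (hy s hs)
  obtain ⟨hcl, hne, hid⟩ := hL.prop
  refine ⟨L, hcl.isCompact, hne, hid, fun e he y hy => ?_⟩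
  have hP : Set.range (· * e) ∈ P := by
    refine ⟨(isCompact_range (hc e)).isClosed, Set.range_nonempty _, ?_⟩
    rintro x _ ⟨z, rfl⟩
    exact ⟨x * z, mul_assoc x z e⟩
  have hsub : Set.range (· * e) ⊆ L := Set.range_subset_iff.2 fun z => hid z e he
  exact hL.le_of_le hP hsub hy

theorem exists_minimal_idempotent [CompactSpace S] [Nonempty S]
    (hc : ∀ r : S, Continuous (· * r)) :
    ∃ u : S, u * u = u ∧ ∀ e, e * e = e → u * e = e → e * u = e → e = u := by
  obtain ⟨L, hLc, hLne, hLid, hLmin⟩ := exists_minimal_closed_left_ideal hc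
  obtain ⟨u, huL, huu⟩ := exists_idempotent_in_compact_subsemigroup hc L hLne hLc
    fun x _ y hy => hLid x y hy
  refine ⟨u, huu, fun e hee hue heu => ?_⟩
  obtain ⟨x, hx⟩ := hLmin e (heu ▸ hLid e u huL) u huL
  rw [← hue, ← hx, mul_assoc, hee]

theorem exists_idempotent_le_mem_ideal (hc : ∀ r : S, Continuous (· * r)) {w : S}
    (hw : w * w = w) {J : Set S} (hJc : IsCompact J) (hJ : J.Nonempty)
    (hJl : ∀ x, ∀ y ∈ J, x * y ∈ J) (hJr : ∀ x ∈ J, ∀ y, x * y ∈ J) :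
    ∃ v ∈ J, v * v = v ∧ w * v = v ∧ v * w = v := by
  obtain ⟨_, ⟨p, hp, rfl⟩, hpw⟩ := exists_idempotent_in_compact_subsemigroup hc ((· * w) '' J)
    (hJ.image _) (hJc.image (hc w)) (by
      rintro _ ⟨p, -, rfl⟩ _ ⟨q, hq, rfl⟩
      exact ⟨p * w * q, hJl _ _ hq, mul_assoc _ _ _⟩)
  beta_reduce at hpw
  refine ⟨w * (p * w), hJl w _ (hJr p hp w), ?_, by rw [← mul_assoc, hw],
    by simp only [mul_assoc, hw]⟩
  calc w * (p * w) * (w * (p * w)) = w * (p * (w * w) * (p * w)) := by simp only [mul_assoc]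
    _ = w * (p * w) := by rw [hw, hpw]

end Semigroup

section Ultrafilter

open Filter

attribute [local instance] Ultrafilter.semigroup

variable {M N : Type*} [Semigroup M] [Semigroup N]

theorem ultrafilter_map_mul (h : M →ₙ* N) (U V : Ultrafilter M) :
    (U * V).map h = U.map h * V.map h := by
  refine Ultrafilter.coe_inj.1 (Filter.ext' fun p => ?_)
  simp only [Ultrafilter.eventually_mul, Ultrafilter.coe_map, eventually_map, map_mul]

theorem exists_ultrafilter_retract {κ : Type*} [Nonempty M] (ι : M →ₙ* N) (h : κ → N →ₙ* M)
    (hι : ∀ a x, h a (ι x) = x) (I : Set N) (hI : I.Nonempty)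
    (hIl : ∀ x, ∀ y ∈ I, x * y ∈ I) (hIr : ∀ x ∈ I, ∀ y, x * y ∈ I) :
    ∃ (u : Ultrafilter M) (v : Ultrafilter N), I ∈ v ∧ u.map ι * v = v ∧
      ∀ a, v.map (h a) = u := by
  obtain ⟨u, huu, humin⟩ :=
    exists_minimal_idempotent (S := Ultrafilter M) Ultrafilter.continuous_mul_left
  obtain ⟨x, hx⟩ := hI
  obtain ⟨v, hvI, hvv, huv, hvu⟩ :=
    exists_idempotent_le_mem_ideal (w := u.map ι) (J := {p : Ultrafilter N | I ∈ p})
      Ultrafilter.continuous_mul_left (by rw [← ultrafilter_map_mul, huu])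
      (ultrafilter_isClosed_basic I).isCompact ⟨pure x, hx⟩
      (fun p q hq => (Ultrafilter.eventually_mul p q (· ∈ I)).2 <|
        .of_forall fun x => mem_of_superset hq fun y hy => hIl x y hy)
      (fun p hp q => (Ultrafilter.eventually_mul p q (· ∈ I)).2 <|
        mem_of_superset hp fun x hx => .of_forall fun y => hIr x hx y)
  refine ⟨u, v, hvI, huv, fun a => ?_⟩
  have hmap : (u.map ι).map (h a) = u := by
    rw [Ultrafilter.map_map, show h a ∘ ι = id from funext (hι a), Ultrafilter.map_id]
  refine humin _ (by rw [← ultrafilter_map_mul, hvv]) ?_ ?_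
  · conv_lhs => rw [← hmap, ← ultrafilter_map_mul, huv]
  · conv_lhs => rw [← hmap, ← ultrafilter_map_mul, hvu]

end Ultrafilter

section CarlsonSimpson

open Filter

variable {Λ : Type*}

/-- The word obtained from the variable word `q`, in which `none` is the variable, by substituting
the letter `a` for the variable. -/
def substVar (q : List (Option Λ)) (a : Λ) : List Λ :=
  q.map (·.getD a)

/-- The constant word preceding the first occurrence of the variable `none` in a variable word. -/
def constPrefix (x : List (Option Λ)) : List Λ :=
  (x.takeWhile Option.isSome).reduceOption

theorem constPrefix_map_some_append (w : List Λ) (x : List (Option Λ)) :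
    constPrefix (w.map some ++ x) = w ++ constPrefix x := by
  induction w with
  | nil => rfl
  | cons a w ih => simpa [constPrefix] using ih

theorem exists_eq_constPrefix_append {x : List (Option Λ)} (hx : none ∈ x) :
    ∃ q, x = (constPrefix x).map some ++ none :: q := by
  induction x with
  | nil => simp at hx
  | cons o x ih =>
    rcases o with _ | a
    · exact ⟨x, rfl⟩
    · obtain ⟨q, hq⟩ := ih (by simpa using hx)
      exact ⟨q, by simpa [constPrefix] using hq⟩

theorem exists_varWord_ultrafilter (Λ : Type*) :
    ∃ v : Ultrafilter (List (Option Λ)), (∀ᶠ x : List (Option Λ) in v, none ∈ x) ∧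
      ∀ p : List (Option Λ) → Prop, (∀ᶠ x : List (Option Λ) in v, p x) → ∀ a,
        ∀ᶠ x : List (Option Λ) in v, ∀ᶠ y : List (Option Λ) in v,
          p ((substVar x a).map some ++ y) := by
  obtain ⟨u, v, hvI, huv, hva⟩ := exists_ultrafilter_retract
    (FreeMonoid.map some : FreeMonoid Λ →* FreeMonoid (Option Λ)).toMulHom
    (fun a => (FreeMonoid.map (·.getD a) : FreeMonoid (Option Λ) →* FreeMonoid Λ).toMulHom)
    (fun a x => FreeMonoid.map_map.trans (List.map_id x))
    {x | none ∈ x.toList} ⟨.ofList [none], by simp⟩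
    (fun x y hy => List.mem_append_right x.toList hy)
    (fun x hx y => List.mem_append_left y.toList hx)
  refine ⟨v.map FreeMonoid.toList, hvI, fun p hp a => ?_⟩
  replace hp : ∀ᶠ x : FreeMonoid (Option Λ) in v, p x.toList := hp
  rw [← huv, ← hva a] at hp
  exact (Ultrafilter.eventually_mul _ _ _).1 hp

theorem exists_color_extension {C : Type*} [Finite Λ] [Finite C] (χ : List Λ → C) :
    ∃ (c : C) (D : Set (List Λ)), [] ∈ D ∧ ∀ F : Set (List Λ), F.Finite → F ⊆ D →
      ∃ (p : List Λ) (q : List (Option Λ)), ∀ w ∈ F,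
        χ (w ++ p) = c ∧ ∀ a, w ++ p ++ a :: substVar q a ∈ D := by
  obtain ⟨v, hnone, hv⟩ := exists_varWord_ultrafilter Λ
  obtain ⟨c, hc⟩ : ∃ c, ∀ᶠ x : List (Option Λ) in v, χ (constPrefix x) = c :=
    Ultrafilter.eventually_exists_iff.1 (.of_forall fun x => ⟨_, rfl⟩)
  let D : Set (List Λ) := {w | ∀ᶠ x : List (Option Λ) in v, χ (w ++ constPrefix x) = c}
  have hD : ∀ w ∈ D, ∀ a, ∀ᶠ x : List (Option Λ) in v, w ++ substVar x a ∈ D := by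
    intro w hw a
    refine (hv _ hw a).mono fun x hx => hx.mono fun y hy => ?_
    rwa [constPrefix_map_some_append, ← List.append_assoc] at hy
  refine ⟨c, D, hc, fun F hF hFD => ?_⟩
  have hev : ∀ᶠ x : List (Option Λ) in v, none ∈ x ∧ ∀ w ∈ F,
      χ (w ++ constPrefix x) = c ∧ ∀ a, w ++ substVar x a ∈ D :=
    hnone.and <| (eventually_all_finite hF).2 fun w hw =>
      (hFD hw).and (eventually_all.2 (hD w (hFD hw)))
  obtain ⟨x, hx, hxF⟩ := hev.exists
  obtain ⟨q, hq⟩ := exists_eq_constPrefix_append hx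
  refine ⟨constPrefix x, q, fun w hw => ⟨(hxF w hw).1, fun a => ?_⟩⟩
  have hsubst : substVar x a = constPrefix x ++ a :: substVar q a := by
    conv_lhs => rw [hq]
    simp [substVar]
  simpa only [hsubst, List.append_assoc] using (hxF w hw).2 a

/-- The Carlson–Simpson subtree with constant words `P k` and left variable words
`none :: Q (k + 1)`: it sends the word `a₁ ⋯ aₖ` to
`P 0 ⌢ a₁ ⌢ (Q 1)(a₁) ⌢ P 1 ⌢ a₂ ⌢ (Q 2)(a₂) ⌢ P 2 ⌢ ⋯ ⌢ aₖ ⌢ (Q k)(aₖ) ⌢ P k`. -/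
def csTree (P : ℕ → List Λ) (Q : ℕ → List (Option Λ)) : List Λ → List Λ :=
  insertBlocks fun u => u.getLast?.elim [] (substVar (Q u.length)) ++ P u.length

variable (P : ℕ → List Λ) (Q : ℕ → List (Option Λ))

theorem csTree_snoc (w : List Λ) (a : Λ) :
    csTree P Q (w ++ [a]) =
      csTree P Q w ++ a :: (substVar (Q (w.length + 1)) a ++ P (w.length + 1)) := by
  simp [csTree, insertBlocks_snoc]

theorem exists_level_csTree (p q : ℕ → ℕ) :
    ∃ ℓ : ℕ → ℕ, ∀ (P : ℕ → List Λ) (Q : ℕ → List (Option Λ)),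
      (∀ k, (P k).length = p k) → (∀ k, (Q k).length = q k) →
        ∀ w, (csTree P Q w).length = ℓ w.length := by
  let b (k : ℕ) : ℕ := (if k = 0 then 0 else q k) + p k
  refine ⟨fun r => ∑ k ∈ Finset.range (r + 1), b k + r,
    fun P Q hP hQ => length_insertBlocks fun u => ?_⟩
  rcases u.eq_nil_or_concat with rfl | ⟨u, a, rfl⟩ <;> simp [b, substVar, hP, hQ]

theorem map_csTree {Λ' : Type*} (f : Λ → Λ') (w : List Λ) :
    (csTree P Q w).map f =
      csTree (fun k => (P k).map f) (fun k => (Q k).map (Option.map f)) (w.map f) := by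
  have hsubst (q : List (Option Λ)) (a : Λ) :
      (substVar q a).map f = substVar (q.map (Option.map f)) (f a) := by
    simp [substVar, Function.comp_def, Option.getD_map]
  induction w using List.reverseRecOn with
  | nil => rfl
  | append_singleton w a ih => simp [csTree_snoc, hsubst, ih]

theorem carlson_simpson {C : Type*} [Finite Λ] [Finite C] (χ : List Λ → C) :
    ∃ (c : C) (P : ℕ → List Λ) (Q : ℕ → List (Option Λ)), ∀ w, χ (csTree P Q w) = c := by
  obtain ⟨c, D, hD, hstep⟩ := exists_color_extension χ
  choose! p q hpq using hstep
  let next (F : Set (List Λ)) : Set (List Λ) :=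
    (fun x : List Λ × Λ => x.1 ++ p F ++ x.2 :: substVar (q F) x.2) '' (F ×ˢ Set.univ)
  let F (k : ℕ) : Set (List Λ) := next^[k] {[]}
  have hF_succ (k : ℕ) : F (k + 1) = next (F k) := Function.iterate_succ_apply' next k _
  have hF (k : ℕ) : (F k).Finite ∧ F k ⊆ D := by
    induction k with
    | zero => exact ⟨Set.finite_singleton _, Set.singleton_subset_iff.2 hD⟩
    | succ k ih =>
      rw [hF_succ]
      refine ⟨(ih.1.prod Set.finite_univ).image _, ?_⟩
      rintro _ ⟨⟨w, a⟩, ⟨hw, -⟩, rfl⟩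
      exact (hpq _ ih.1 ih.2 w hw).2 a
  refine ⟨c, fun k => p (F k), fun k => q (F (k - 1)), fun w => ?_⟩
  obtain ⟨v, hv, hw⟩ : ∃ v ∈ F w.length,
      csTree (fun k => p (F k)) (fun k => q (F (k - 1))) w = v ++ p (F w.length) := by
    induction w using List.reverseRecOn with
    | nil => exact ⟨[], rfl, rfl⟩
    | append_singleton w a ih =>
      obtain ⟨v, hv, hw⟩ := ih
      refine ⟨v ++ p (F w.length) ++ a :: substVar (q (F w.length)) a, ?_, ?_⟩
      · rw [List.length_append, List.length_singleton, hF_succ]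
        exact ⟨(v, a), ⟨hv, trivial⟩, rfl⟩
      · simp [csTree_snoc, hw]
  rw [hw, (hpq _ (hF _).1 (hF _).2 v hv).1]

end CarlsonSimpson

theorem halpern_lauchli {α κ C : Type*} [Finite α] [Finite κ] [Finite C]
    (χ : (κ → List α) → C) :
    ∃ (c : C) (ℓ : ℕ → ℕ) (g : κ → List α → List α),
      (∀ t, PreservesMoves (g t) ∧ ∀ s, (g t s).length = ℓ s.length) ∧
      ∀ (y : κ → List α) (r : ℕ), (∀ t, (y t).length = r) → χ (fun t => g t (y t)) = c := by
  obtain ⟨c, P, Q, hc⟩ := carlson_simpson fun w : List (κ → α) => χ fun t => w.map (· t)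
  obtain ⟨ℓ, hℓ⟩ := exists_level_csTree (Λ := α) (fun k => (P k).length) fun k => (Q k).length
  refine ⟨c, ℓ, fun t => csTree (fun k => (P k).map (· t)) fun k => (Q k).map (Option.map (· t)),
    fun t => ⟨preservesMoves_insertBlocks _, hℓ _ _ (by simp) (by simp)⟩, fun y r hy => ?_⟩
  let w : List (κ → α) := List.ofFn fun j : Fin r => fun t => (y t)[j]'(by simp [hy])
  have hw (t : κ) : w.map (· t) = y t :=
    List.ext_getElem (by simp [w, hy]) fun i h₁ h₂ => by simp [w]
  simpa only [map_csTree, hw] using hc w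

section Glue

variable {α : Type*} {j : ℕ}

/-- The map of trees which is the identity below level `j` and acts as `g t` above each node `t`
of level `j`. -/
def glue (j : ℕ) (g : {t : List α // t.length = j} → List α → List α) (s : List α) : List α :=
  if h : s.length < j then s
  else s.take j ++ g ⟨s.take j, List.length_take_of_le (not_lt.1 h)⟩ (s.drop j)

variable (g : {t : List α // t.length = j} → List α → List α)

theorem glue_of_length_lt {s : List α} (h : s.length < j) : glue j g s = s := dif_pos h

theorem glue_append (t : {t : List α // t.length = j}) (y : List α) :
    glue j g (t.1 ++ y) = t.1 ++ g t y := by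
  obtain ⟨t, rfl⟩ := t
  simp [glue]

theorem exists_append_of_length_ge {s : List α} (h : j ≤ s.length) :
    ∃ (t : {t : List α // t.length = j}) (y : List α), s = t.1 ++ y :=
  ⟨⟨s.take j, List.length_take_of_le h⟩, s.drop j, (List.take_append_drop j s).symm⟩

variable {g}

theorem preservesMoves_glue (hg : ∀ t, PreservesMoves (g t)) : PreservesMoves (glue j g) := by
  intro s i
  rcases lt_or_ge s.length j with hs | hs
  · rw [glue_of_length_lt g hs]
    rcases lt_or_ge (s ++ [i]).length j with hsi | hsi
    · rw [glue_of_length_lt g hsi]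
    · have := glue_append g ⟨s ++ [i], by simp at hsi ⊢; omega⟩ []
      rw [List.append_nil] at this
      exact this ▸ List.prefix_append _ _
  · obtain ⟨t, y, rfl⟩ := exists_append_of_length_ge hs
    simp only [List.append_assoc, glue_append, List.prefix_append_right_inj]
    exact hg t y i

theorem StrongEmb.glue {ℓ : ℕ → ℕ} (hg : ∀ t, PreservesMoves (g t))
    (hℓ : ∀ t s, (g t s).length = ℓ s.length) : StrongEmb (glue j g) := by
  refine ⟨preservesMoves_glue hg, fun r => if r < j then r else j + ℓ (r - j), fun s => ?_⟩
  rcases lt_or_ge s.length j with hs | hs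
  · simp [glue_of_length_lt g hs, hs]
  · obtain ⟨t, y, rfl⟩ := exists_append_of_length_ge hs
    simp [glue_append, hℓ, t.2]

end Glue

section Milliken

variable {α C : Type*} {f g : List α → List α} {k j : ℕ}

/-- Level `j` separates the values of `f` below level `k` from its values on level `k`. -/
def HasStem (f : List α → List α) (k j : ℕ) : Prop :=
  (∀ s, s.length < k → (f s).length < j) ∧ ∀ s, s.length = k → j ≤ (f s).length

theorem HasStem.take_injOn (hf : PreservesMoves f) (hstem : HasStem f k j) :
    Set.InjOn (fun s => (f s).take j) {s | s.length = k} := by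
  intro s hs t ht hst
  replace hs : s.length = k := hs
  replace ht : t.length = k := ht
  beta_reduce at hst
  rcases prefix_or_prefix_or_branch s t with h | h | ⟨u, a, b, hab, ha, hb⟩
  · exact h.eq_of_length (hs.trans ht.symm)
  · exact (h.eq_of_length (ht.trans hs.symm)).symm
  · have htake {c : α} {w : List α} (h : u ++ [c] <+: w) : f u ++ [c] <+: (f w).take j :=
      List.prefix_take_iff.2 ⟨hf.snoc_prefix h, by
        simpa using hstem.1 u (hs ▸ length_lt_of_snoc_prefix ha)⟩
    exact absurd (snoc_prefix_unique (htake ha) (hst ▸ htake hb)) hab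

theorem HasStem.comp_of_fixes {H : List α → List α} (hstem : HasStem f k j)
    (hH : PreservesMoves H) (hfix : ∀ s, s.length ≤ j → H s = s) : HasStem (H ∘ f) k j := by
  refine ⟨fun s hs => ?_, fun s hs => ?_⟩
  · simpa only [Function.comp_apply, hfix _ (hstem.1 s hs).le] using hstem.1 s hs
  · have := congrArg List.length (hH.take_eq_of_fixes hfix (f s))
    simpa [hstem.2 s hs] using this

theorem exists_common_stem [Inhabited α] (hf : StrongEmb f) (hg : StrongEmb g)
    (hfg : ∀ s, s.length < k → f s = g s) :
    ∃ j, HasStem f k j ∧ HasStem g k j ∧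
      ∀ s, s.length ≤ k → (f s).take j = (g s).take j := by
  rcases k with _ | k
  · exact ⟨0, ⟨by simp, by simp⟩, ⟨by simp, by simp⟩, by simp⟩
  have hr : (List.replicate k (default : α)).length = k := List.length_replicate
  have hstem {e : List α → List α} (he : StrongEmb e) :
      HasStem e (k + 1) ((e (List.replicate k default)).length + 1) := by
    refine ⟨fun s hs => Nat.lt_succ_of_le (not_lt.1 fun h => ?_), fun s hs => he.length_lt ?_⟩
    · have := he.length_lt_length_iff.1 h
      omega
    · omega
  refine ⟨_, hstem hf, hfg (List.replicate k default) (by simp) ▸ hstem hg, fun s hs => ?_⟩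
  rcases hs.lt_or_eq with hs | hs
  · rw [hfg s hs]
  · obtain ⟨u, i, rfl⟩ := s.eq_nil_or_concat'.resolve_left (by rintro rfl; simp at hs)
    rw [List.length_append, List.length_singleton, Nat.add_right_cancel_iff] at hs
    have htake {e : List α → List α} (he : StrongEmb e) (heu : e u = f u) :
        (e (u ++ [i])).take ((f (List.replicate k default)).length + 1) = f u ++ [i] := by
      have hprefix := he.preservesMoves u i
      rw [heu] at hprefix
      rw [List.prefix_iff_eq_take.1 hprefix, List.length_append, List.length_singleton,
        hf.length_congr (hs.trans hr.symm)]
    rw [htake hf rfl, htake hg (hfg u (by omega)).symm]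

theorem exists_glue_eq_glue_take [Inhabited α] (hf : StrongEmb f) (hstem : HasStem f k j) :
    ∃ (y : {t : List α // t.length = j} → List α) (r : ℕ), (∀ t, (y t).length = r) ∧
      ∀ g : {t : List α // t.length = j} → List α → List α, ∀ s, s.length ≤ k →
        glue j g (f s) = glue j (fun t _ => g t (y t)) ((f s).take j) := by
  obtain ⟨ℓ, hℓ⟩ := hf.exists_level
  let cut (s : {s : List α // s.length = k}) : {t : List α // t.length = j} :=
    ⟨(f s).take j, List.length_take_of_le (hstem.2 s s.2)⟩
  have hcut : Function.Injective cut := fun s t h =>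
    Subtype.ext (hstem.take_injOn hf.preservesMoves s.2 t.2 (congrArg Subtype.val h))
  let y := Function.extend cut (fun s => (f s).drop j) fun _ => List.replicate (ℓ k - j) default
  refine ⟨y, ℓ k - j, fun t => ?_, fun g s hs => ?_⟩
  · by_cases ht : ∃ s, cut s = t
    · obtain ⟨s, rfl⟩ := ht
      simp [y, hcut.extend_apply, hℓ, s.2]
    · simp [y, Function.extend_apply' _ _ _ ht]
  · rcases hs.lt_or_eq with hs | hs
    · rw [List.take_of_length_le (hstem.1 s hs).le, glue_of_length_lt _ (hstem.1 s hs),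
        glue_of_length_lt _ (hstem.1 s hs)]
    · have hleft := glue_append g (cut ⟨s, hs⟩) ((f s).drop j)
      have hright := glue_append (fun t _ => g t (y t)) (cut ⟨s, hs⟩) []
      rw [List.append_nil] at hright
      rw [List.take_append_drop] at hleft
      rw [hleft, hright, show y (cut ⟨s, hs⟩) = (f s).drop j from hcut.extend_apply _ _ _]

theorem exists_homogeneous_above_stem [Finite α] [Inhabited α] [Finite C] (k j : ℕ)
    (χ : ({s : List α // s.length < k + 1} → List α) → C) :
    ∃ h, StrongEmb h ∧ (∀ s, s.length < j → h s = s) ∧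
      ∀ f g, StrongEmb f → StrongEmb g → HasStem f k j → HasStem g k j →
        (∀ s, s.length ≤ k → (f s).take j = (g s).take j) →
          χ (fun s => h (f s)) = χ fun s => h (g s) := by
  have : Finite {t : List α // t.length = j} := List.finite_length_eq α j
  have : Finite {t : List α // t.length ≤ j} := List.finite_length_le α j
  have : Finite {s : List α // s.length < k + 1} := List.finite_length_lt α (k + 1)
  obtain ⟨c, ℓ, g, hg, hc⟩ := halpern_lauchli
    fun (z : {t : List α // t.length = j} → List α)
      (ρ : {s : List α // s.length < k + 1} → {t : List α // t.length ≤ j}) =>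
        χ fun s => glue j (fun t _ => z t) (ρ s)
  have hcolor {f : List α → List α} (hf : StrongEmb f) (hstem : HasStem f k j) :
      χ (fun s => glue j g (f s)) = c fun s => ⟨(f s).take j, List.length_take_le j _⟩ := by
    obtain ⟨y, r, hy, hyf⟩ := exists_glue_eq_glue_take hf hstem
    rw [← hc y r hy]
    exact congrArg χ (funext fun s => hyf g s (Nat.le_of_lt_succ s.2))
  refine ⟨glue j g, .glue (fun t => (hg t).1) fun t => (hg t).2, fun s => glue_of_length_lt g,
    fun f₁ f₂ hf₁ hf₂ hstem₁ hstem₂ htake => ?_⟩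
  rw [hcolor hf₁ hstem₁, hcolor hf₂ hstem₂]
  exact congrArg c (funext fun s => Subtype.ext (htake s (Nat.le_of_lt_succ s.2)))

/-- The composition `h j ∘ h (j + 1) ∘ ⋯ ∘ h (j + d - 1)`. -/
def compFrom (h : ℕ → List α → List α) : ℕ → ℕ → List α → List α
  | 0, _ => id
  | d + 1, j => h j ∘ compFrom h d (j + 1)

theorem compFrom_succ_apply (h : ℕ → List α → List α) (d j : ℕ) (s : List α) :
    compFrom h (d + 1) j s = h j (compFrom h d (j + 1) s) := rfl

theorem StrongEmb.compFrom {h : ℕ → List α → List α} (hh : ∀ j, StrongEmb (h j)) (d j : ℕ) :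
    StrongEmb (compFrom h d j) := by
  induction d generalizing j with
  | zero => exact StrongEmb.id
  | succ d ih => exact (hh j).comp (ih (j + 1))

theorem compFrom_eq_of_length_lt {h : ℕ → List α → List α}
    (hfix : ∀ j s, s.length < j → h j s = s) {d d' : ℕ} {s : List α} (hd : s.length < j + d)
    (hdd' : d ≤ d') : compFrom h d' j s = compFrom h d j s := by
  induction d generalizing j d' with
  | zero =>
    induction d' generalizing j with
    | zero => rfl
    | succ d' ih =>
      rw [compFrom_succ_apply, ih (by omega) (Nat.zero_le _)]
      exact hfix j s hd
  | succ d ih =>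
    obtain ⟨e, rfl⟩ := Nat.exists_eq_add_of_lt hdd'
    rw [compFrom_succ_apply, compFrom_succ_apply, ih (by omega) (Nat.le_add_right d e)]

theorem exists_compFrom_limit {h : ℕ → List α → List α} (hh : ∀ j, StrongEmb (h j))
    (hfix : ∀ j s, s.length < j → h j s = s) :
    ∃ H : ℕ → List α → List α, (∀ j, StrongEmb (H j)) ∧ (∀ j s, s.length < j → H j s = s) ∧
      ∀ j, H j = h j ∘ H (j + 1) := by
  let H (j : ℕ) (s : List α) : List α := compFrom h (s.length + 1) j s
  have hH {j d : ℕ} {s : List α} (hd : s.length < d) : compFrom h d j s = H j s :=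
    compFrom_eq_of_length_lt hfix (by omega) hd
  refine ⟨H, fun j => ⟨fun s i => ?_, ?_⟩, fun j s hs => ?_, fun j => funext fun s => ?_⟩
  · rw [← hH (d := s.length + 2) (by omega), ← hH (d := s.length + 2) (by simp)]
    exact (StrongEmb.compFrom hh _ j).preservesMoves s i
  · choose ℓ hℓ using fun d => (StrongEmb.compFrom hh d j).exists_level
    exact ⟨fun r => ℓ (r + 1) r, fun s => hℓ _ s⟩
  · exact compFrom_eq_of_length_lt (d := 0) hfix hs (Nat.zero_le _)
  · rw [← hH (d := s.length + 2) (by omega)]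
    rfl

theorem exists_fusion {P : ℕ → (List α → List α) → Prop}
    (hP : ∀ j E, ∃ h, StrongEmb h ∧ (∀ s, s.length < j → h s = s) ∧ P j (E ∘ h)) :
    ∃ E, StrongEmb E ∧ ∀ j, ∃ E' H, E = E' ∘ H ∧ P j E' ∧ StrongEmb H ∧
      ∀ s, s.length ≤ j → H s = s := by
  choose h hh hfix hhP using hP
  let E (j : ℕ) : List α → List α := Nat.rec id (fun j E => E ∘ h j E) j
  obtain ⟨H, hH, hHfix, hHsucc⟩ :=
    exists_compFrom_limit (fun j => hh j (E j)) fun j => hfix j (E j)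
  have hE (j : ℕ) : H 0 = E j ∘ H j := by
    induction j with
    | zero => rfl
    | succ j ih => rw [ih, hHsucc]; rfl
  exact ⟨H 0, hH 0, fun j => ⟨E (j + 1), H (j + 1), hE (j + 1), hhP j (E j), hH (j + 1),
    fun s hs => hHfix (j + 1) s (Nat.lt_succ_of_le hs)⟩⟩

theorem exists_end_homogeneous [Finite α] [Inhabited α] [Finite C] (k : ℕ)
    (χ : ({s : List α // s.length < k + 1} → List α) → C) :
    ∃ E, StrongEmb E ∧ ∀ f g, StrongEmb f → StrongEmb g →
      (∀ s, s.length < k → f s = g s) → χ (fun s => E (f s)) = χ fun s => E (g s) := by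
  obtain ⟨E, hE, hfusion⟩ := exists_fusion
    (P := fun j E => ∀ f g, StrongEmb f → StrongEmb g → HasStem f k j → HasStem g k j →
      (∀ s, s.length ≤ k → (f s).take j = (g s).take j) →
        χ (fun s => E (f s)) = χ fun s => E (g s))
    fun j E => exists_homogeneous_above_stem k j fun ρ => χ fun s => E (ρ s)
  refine ⟨E, hE, fun f g hf hg hfg => ?_⟩
  obtain ⟨j, hfj, hgj, htake⟩ := exists_common_stem hf hg hfg
  obtain ⟨E', H, rfl, hhom, hH, hfix⟩ := hfusion j
  refine hhom (H ∘ f) (H ∘ g) (hH.comp hf) (hH.comp hg)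
    (hfj.comp_of_fixes hH.preservesMoves hfix) (hgj.comp_of_fixes hH.preservesMoves hfix)
    fun s hs => ?_
  simp only [Function.comp_apply, hH.preservesMoves.take_eq_of_fixes hfix, htake s hs]

theorem milliken [Finite α] [Inhabited α] [Finite C] (k : ℕ)
    (χ : ({s : List α // s.length < k} → List α) → C) :
    ∃ E, StrongEmb E ∧ ∀ f g, StrongEmb f → StrongEmb g →
      χ (fun s => E (f s)) = χ fun s => E (g s) := by
  induction k with
  | zero =>
    exact ⟨id, StrongEmb.id, fun f g _ _ => congrArg χ (funext fun s => absurd s.2 (by simp))⟩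
  | succ k ih =>
    obtain ⟨E, hE, hhom⟩ := exists_end_homogeneous k χ
    let ext (ρ : {s : List α // s.length < k} → List α) : List α → List α :=
      Classical.epsilon fun f => StrongEmb f ∧ ∀ s, f s.1 = ρ s
    obtain ⟨E', hE', hconst⟩ := ih fun ρ => χ fun s => E (ext ρ s)
    have hext {f : List α → List α} (hf : StrongEmb f) :
        χ (fun s => E (ext (fun s => E' (f s)) s)) = χ fun s => E (E' (f s)) := by
      have hspec := Classical.epsilon_spec
        (p := fun e => StrongEmb e ∧ ∀ s : {s : List α // s.length < k}, e s.1 = E' (f s))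
        ⟨E' ∘ f, hE'.comp hf, fun _ => rfl⟩
      exact hhom _ (E' ∘ f) hspec.1 (hE'.comp hf) fun s hs => hspec.2 ⟨s, hs⟩
    exact ⟨E ∘ E', hE.comp hE', fun f g hf hg =>
      (hext hf).symm.trans ((hconst f g hf hg).trans (hext hg))⟩

end Milliken

section Order

variable {α : Type*}

theorem lprec_irrefl [Preorder α] (s : List α) : ¬ lprec s s := by
  rintro (h | ⟨-, h⟩)
  · exact lt_irrefl _ h
  · exact irrefl_of (List.Lex (· < ·)) s h

theorem lprec_iff_of_branch [Preorder α] {u s t : List α} {i j : α} (hij : i ≠ j)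
    (hs : u ++ [i] <+: s) (ht : u ++ [j] <+: t) (h : s.length = t.length) :
    lprec s t ↔ i < j := by
  obtain ⟨s, rfl⟩ := hs
  obtain ⟨t, rfl⟩ := ht
  simp only [lprec, h, lt_irrefl, true_and, false_or]
  clear h
  simp only [List.append_assoc, List.singleton_append]
  induction u with
  | nil => simp [List.cons_lex_cons_iff, hij]
  | cons a u ih => simpa [List.cons_lex_cons_iff] using ih

theorem StrongEmb.lprec_iff [Preorder α] {e : List α → List α} (he : StrongEmb e)
    {s t : List α} : lprec (e s) (e t) ↔ lprec s t := by
  by_cases hlen : s.length = t.length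
  · rcases prefix_or_prefix_or_branch s t with h | h | ⟨u, i, j, hij, hi, hj⟩
    · simp only [h.eq_of_length hlen, lprec_irrefl]
    · simp only [h.eq_of_length hlen.symm, lprec_irrefl]
    · rw [lprec_iff_of_branch hij hi hj hlen, lprec_iff_of_branch hij
        (he.preservesMoves.snoc_prefix hi) (he.preservesMoves.snoc_prefix hj)
        (he.length_congr hlen)]
  · have hlen' : (e s).length ≠ (e t).length := fun h =>
      (Ne.lt_or_gt hlen).elim (fun hlt => (he.length_lt hlt).ne h) fun hgt =>
        (he.length_lt hgt).ne' h
    simp only [lprec, hlen, hlen', false_and, or_false, he.length_lt_length_iff]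

theorem lex_snoc_iff [LT α] {s t : List α} (h : s.length = t.length) {i j : α} :
    List.Lex (· < ·) (s ++ [i]) (t ++ [j]) ↔ List.Lex (· < ·) s t ∨ s = t ∧ i < j := by
  induction s generalizing t with
  | nil =>
    obtain rfl : t = [] := by simpa using h.symm
    simp [List.cons_lex_cons_iff]
  | cons a s ih =>
    rcases t with _ | ⟨b, t⟩
    · simp at h
    · simp only [List.cons_append, List.cons_lex_cons_iff, ih (t := t) (by simpa using h),
        List.cons.injEq]
      tauto

theorem lprec_snoc_iff [LT α] {s t : List α} {i j : α} :
    lprec (s ++ [i]) (t ++ [j]) ↔ lprec s t ∨ s = t ∧ i < j := by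
  by_cases h : s.length = t.length
  · simp [lprec, h, lex_snoc_iff h]
  · simp [lprec, h, show s ≠ t from fun hst => h (hst ▸ rfl)]

end Order

section Rank

variable {n : ℕ}

/-- The position of a node of the `n`-adic tree in the well-order `≺`. -/
def rank (s : List (Fin n)) : ℕ :=
  s.foldl (fun r i => n * r + i + 1) 0

theorem rank_nil : rank ([] : List (Fin n)) = 0 := rfl

theorem rank_snoc (s : List (Fin n)) (i : Fin n) : rank (s ++ [i]) = n * rank s + i + 1 := by
  simp [rank]

theorem rank_snoc_lt_rank_snoc_iff {s t : List (Fin n)} {i j : Fin n} :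
    rank (s ++ [i]) < rank (t ++ [j]) ↔ rank s < rank t ∨ rank s = rank t ∧ i < j := by
  have hlt {a b : ℕ} (h : a < b) : n * a + n ≤ n * b := Nat.mul_le_mul_left n h
  rw [rank_snoc, rank_snoc, Fin.lt_def]
  have := i.2
  have := j.2
  rcases lt_trichotomy (rank s) (rank t) with h | h | h
  · have := hlt h
    omega
  · rw [h]
    omega
  · have := hlt h
    omega

theorem rank_injective : Function.Injective (rank : List (Fin n) → ℕ) := by
  intro s t h
  induction s using List.reverseRecOn generalizing t with
  | nil =>
    rcases t.eq_nil_or_concat' with rfl | ⟨t, j, rfl⟩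
    · rfl
    · simp [rank_nil, rank_snoc] at h
  | append_singleton s i ih =>
    rcases t.eq_nil_or_concat' with rfl | ⟨t, j, rfl⟩
    · simp [rank_nil, rank_snoc] at h
    · have hst := mt rank_snoc_lt_rank_snoc_iff.2 h.not_lt
      have hts := mt rank_snoc_lt_rank_snoc_iff.2 h.not_gt
      push Not at hst hts
      obtain rfl : s = t := ih (le_antisymm hts.1 hst.1)
      rw [le_antisymm (hts.2 rfl) (hst.2 rfl)]

theorem lprec_iff_rank_lt {s t : List (Fin n)} : lprec s t ↔ rank s < rank t := by
  induction s using List.reverseRecOn generalizing t with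
  | nil =>
    rcases t.eq_nil_or_concat' with rfl | ⟨t, j, rfl⟩
    · simp [lprec_irrefl]
    · simp [lprec, rank_nil, rank_snoc]
  | append_singleton s i ih =>
    rcases t.eq_nil_or_concat' with rfl | ⟨t, j, rfl⟩
    · simp [lprec, rank_nil]
    · rw [lprec_snoc_iff, rank_snoc_lt_rank_snoc_iff, ih, rank_injective.eq_iff]

theorem eq_iff_not_lprec {s t : List (Fin n)} : s = t ↔ ¬ lprec s t ∧ ¬ lprec t s := by
  rw [lprec_iff_rank_lt, lprec_iff_rank_lt, ← rank_injective.eq_iff]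
  omega

theorem rank_lt_rank_of_snoc_prefix {s t : List (Fin n)} {i : Fin n} (h : s ++ [i] <+: t) :
    rank s < rank t :=
  lprec_iff_rank_lt.1 (.inl (length_lt_of_snoc_prefix h))

end Rank

section MeetClosure

variable {α ι : Type*} [DecidableEq α]

theorem lmeet_lmeet_mem (a b c d : List α) :
    lmeet (lmeet a b) (lmeet c d) ∈ ({lmeet a b, lmeet c d, lmeet a c} : Set (List α)) := by
  rcases prefix_or_prefix_or_branch (lmeet a b) (lmeet c d) with h | h | ⟨u, i, j, hij, hi, hj⟩
  · exact .inl (lmeet_eq_left h)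
  · exact .inr (.inl (lmeet_eq_right h))
  · refine .inr (.inr ?_)
    exact (lmeet_eq_of_branch hij hi hj).trans (lmeet_eq_of_branch hij
      (hi.trans (lmeet_prefix_left a b)) (hj.trans (lmeet_prefix_left c d))).symm

theorem subset_mcl (A : Set (List α)) : A ⊆ mcl A :=
  Set.subset_sInter fun _ hB => hB.1

theorem meetClosed_mcl (A : Set (List α)) : MeetClosed (mcl A) :=
  fun s hs t ht B hB => hB.2 s (hs B hB) t (ht B hB)

/-- The pairwise meets of a family of nodes, indexed by pairs of indices of the family. -/
def meets (x : ι → List α) (p : ι × ι) : List α :=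
  lmeet (x p.1) (x p.2)

theorem meets_diag (x : ι → List α) (i : ι) : meets x (i, i) = x i :=
  lmeet_self (x i)

theorem exists_meets_eq_lmeet (x : ι → List α) (p q : ι × ι) :
    ∃ r, meets x r = lmeet (meets x p) (meets x q) := by
  rcases lmeet_lmeet_mem (x p.1) (x p.2) (x q.1) (x q.2) with h | h | h
  · exact ⟨p, h.symm⟩
  · exact ⟨q, h.symm⟩
  · exact ⟨(p.1, q.1), h.symm⟩

theorem mcl_range (x : ι → List α) : mcl (Set.range x) = Set.range (meets x) := by
  apply Set.Subset.antisymm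
  · refine Set.sInter_subset_of_mem ⟨?_, ?_⟩
    · rintro _ ⟨i, rfl⟩
      exact ⟨(i, i), meets_diag x i⟩
    · rintro _ ⟨p, rfl⟩ _ ⟨q, rfl⟩
      exact exists_meets_eq_lmeet x p q
  · rintro _ ⟨p, rfl⟩
    exact meetClosed_mcl _ _ (subset_mcl _ (Set.mem_range_self p.1)) _
      (subset_mcl _ (Set.mem_range_self p.2))

end MeetClosure

/-- The first-move type of a family of nodes: which pairs of its meets are in the order `≺`, and
which first moves lead from one of its meets towards another. Families `x` and `y` have the same
type if and only if `x i ↦ y i` is a first-move equivalence. -/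
def moveType {n : ℕ} {ι : Type*} (x : ι → List (Fin n)) :
    (ι × ι → ι × ι → Prop) × (ι × ι → ι × ι → Fin n → Prop) :=
  (fun p q => lprec (meets x p) (meets x q), fun p q i => meets x p ++ [i] <+: meets x q)

section MoveType

variable {n : ℕ} {ι : Type*} {x y : ι → List (Fin n)} {p q r : ι × ι}

theorem moveType_eq_iff : moveType x = moveType y ↔ ∀ p q,
    (lprec (meets x p) (meets x q) ↔ lprec (meets y p) (meets y q)) ∧
    ∀ i, meets x p ++ [i] <+: meets x q ↔ meets y p ++ [i] <+: meets y q := by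
  simp only [moveType, Prod.ext_iff, funext_iff, eq_iff_iff, ← forall_and]

theorem lprec_meets_iff (h : moveType x = moveType y) :
    lprec (meets x p) (meets x q) ↔ lprec (meets y p) (meets y q) :=
  (moveType_eq_iff.1 h p q).1

theorem snoc_prefix_meets_iff (h : moveType x = moveType y) {i : Fin n} :
    meets x p ++ [i] <+: meets x q ↔ meets y p ++ [i] <+: meets y q :=
  (moveType_eq_iff.1 h p q).2 i

theorem meets_eq_meets_iff (h : moveType x = moveType y) :
    meets x p = meets x q ↔ meets y p = meets y q := by
  rw [eq_iff_not_lprec, eq_iff_not_lprec, lprec_meets_iff h, lprec_meets_iff h]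

theorem prefix_meets_iff (h : moveType x = moveType y) :
    meets x p <+: meets x q ↔ meets y p <+: meets y q := by
  rw [prefix_iff_eq_or_snoc_prefix, prefix_iff_eq_or_snoc_prefix, meets_eq_meets_iff h]
  simp only [snoc_prefix_meets_iff h]

theorem meets_eq_lmeet_of_moveType_eq (h : moveType x = moveType y)
    (hr : meets x r = lmeet (meets x p) (meets x q)) :
    meets y r = lmeet (meets y p) (meets y q) := by
  have hp : meets y r <+: meets y p := (prefix_meets_iff h).1 (hr ▸ lmeet_prefix_left _ _)
  have hq : meets y r <+: meets y q := (prefix_meets_iff h).1 (hr ▸ lmeet_prefix_right _ _)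
  obtain ⟨r', hr'⟩ := exists_meets_eq_lmeet y p q
  have hle : meets x r' <+: meets x r := hr ▸ prefix_lmeet
    ((prefix_meets_iff h).2 (hr' ▸ lmeet_prefix_left _ _))
    ((prefix_meets_iff h).2 (hr' ▸ lmeet_prefix_right _ _))
  exact (prefix_lmeet hp hq).eq_of_length_le (hr' ▸ ((prefix_meets_iff h).1 hle).length_le)

theorem fme_range_of_moveType_eq (h : moveType x = moveType y) :
    FME (Set.range x) (Set.range y) := by
  have hfactors : Function.FactorsThrough (meets y) (meets x) :=
    fun p q => (meets_eq_meets_iff h).1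
  let f := Function.extend (meets x) (meets y) fun _ => []
  have hf (p) : f (meets x p) = meets y p := hfactors.extend_apply _ p
  have hfx (i) : f (x i) = y i := by simpa only [meets_diag] using hf (i, i)
  refine ⟨f, ?_, by rw [← Set.range_comp]; exact congrArg Set.range (funext hfx), ?_⟩
  · rw [mcl_range, mcl_range]
    refine ⟨?_, ?_, ?_⟩
    · rintro _ ⟨p, rfl⟩
      exact ⟨p, (hf p).symm⟩
    · rintro _ ⟨p, rfl⟩ _ ⟨q, rfl⟩ hpq
      rw [hf, hf] at hpq
      exact (meets_eq_meets_iff h).2 hpq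
    · rintro _ ⟨p, rfl⟩
      exact ⟨meets x p, ⟨p, rfl⟩, hf p⟩
  · rw [mcl_range]
    rintro _ ⟨p, rfl⟩ _ ⟨q, rfl⟩
    obtain ⟨r, hr⟩ := exists_meets_eq_lmeet x p q
    rw [← hr, hf, hf, hf]
    exact ⟨meets_eq_lmeet_of_moveType_eq h hr, lprec_meets_iff h,
      fun i => (snoc_prefix_meets_iff h).1⟩

theorem FME.exists_moveType_eq {A B : Set (List (Fin n))} (h : FME A B) :
    ∃ f : List (Fin n) → List (Fin n), f '' A = B ∧
      moveType (fun a : A => (a : List (Fin n))) = moveType fun a : A => f a := by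
  obtain ⟨f, hf, hAB, hfm⟩ := h
  refine ⟨f, hAB, moveType_eq_iff.2 fun p q => ?_⟩
  have hmem (p : A × A) : meets (fun a : A => (a : List (Fin n))) p ∈ mcl A :=
    meetClosed_mcl A _ (subset_mcl A p.1.2) _ (subset_mcl A p.2.2)
  have hmeets (p : A × A) : meets (fun a : A => f a) p = f (meets (fun a : A => a) p) :=
    (hfm _ (subset_mcl A p.1.2) _ (subset_mcl A p.2.2)).1.symm
  rw [hmeets, hmeets]
  generalize meets (fun a : A => (a : List (Fin n))) p = s, hmem p = hs
  generalize meets (fun a : A => (a : List (Fin n))) q = t, hmem q = ht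
  obtain ⟨hmeet, hlprec, hmove⟩ := hfm s hs t ht
  refine ⟨hlprec, fun i => ⟨hmove i, fun hi => ?_⟩⟩
  have hst : lmeet s t = s := hf.injOn (meetClosed_mcl A s hs t ht) hs
    (hmeet.trans (lmeet_eq_left (prefix_of_snoc_prefix hi)))
  have hne : s ≠ t := by
    rintro rfl
    exact lt_irrefl _ (length_lt_of_snoc_prefix hi)
  obtain ⟨j, hj⟩ := exists_snoc_prefix (hst ▸ lmeet_prefix_right s t) hne
  rwa [snoc_prefix_unique hi (hmove j hj)]

theorem moveType_comp_congr {κ : Type*} (h : moveType x = moveType y) (v : κ → ι) :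
    moveType (x ∘ v) = moveType (y ∘ v) :=
  moveType_eq_iff.2 fun p q => moveType_eq_iff.1 h (p.map v v) (q.map v v)

theorem moveType_eq_of_fin_four
    (h : ∀ v : Fin 4 → ι, moveType (x ∘ v) = moveType (y ∘ v)) : moveType x = moveType y :=
  moveType_eq_iff.2 fun p q =>
    moveType_eq_iff.1 (h ![p.1, p.2, q.1, q.2]) (0, 1) (2, 3)

theorem PreservesMoves.moveType_comp {F : List (Fin n) → List (Fin n)} (hF : PreservesMoves F)
    (hlprec : ∀ s t, lprec (F s) (F t) ↔ lprec s t) (x : ι → List (Fin n)) :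
    moveType (F ∘ x) = moveType x := by
  have hmeets (p) : meets (F ∘ x) p = F (meets x p) := (hF.map_lmeet _ _).symm
  exact moveType_eq_iff.2 fun p q => by
    simp only [hmeets, hlprec, hF.snoc_prefix_iff, implies_true, and_self]

end MoveType

section Skew

variable {n : ℕ} [NeZero n] {s t u v : List (Fin n)} {a : Fin n}

/-- The embedding of the tree that preserves first moves and puts the node of rank `r` on level
`r`, so that the order `≺` between images is the order between their levels. -/
def skew : List (Fin n) → List (Fin n) :=
  insertBlocks fun u => List.replicate (rank u - rank u.dropLast - 1) 0

theorem skew_snoc (s : List (Fin n)) (a : Fin n) :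
    skew (s ++ [a]) = skew s ++ a :: List.replicate (rank (s ++ [a]) - rank s - 1) 0 := by
  rw [skew, insertBlocks_snoc, List.dropLast_concat]

theorem preservesMoves_skew : PreservesMoves (skew : List (Fin n) → List (Fin n)) :=
  preservesMoves_insertBlocks _

theorem length_skew (s : List (Fin n)) : (skew s).length = rank s := by
  induction s using List.reverseRecOn with
  | nil => simp [skew, insertBlocks_nil, rank_nil]
  | append_singleton s a ih =>
    have := rank_lt_rank_of_snoc_prefix (List.prefix_refl (s ++ [a]))
    rw [skew_snoc, List.length_append, List.length_cons, List.length_replicate, ih]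
    omega

theorem lprec_skew (s t : List (Fin n)) : lprec (skew s) (skew t) ↔ lprec s t := by
  refine ⟨?_, fun h => .inl (by rwa [length_skew, length_skew, ← lprec_iff_rank_lt])⟩
  rintro (h | ⟨h, h'⟩)
  · rwa [length_skew, length_skew, ← lprec_iff_rank_lt] at h
  · rw [length_skew, length_skew] at h
    obtain rfl := rank_injective h
    exact absurd (.inr ⟨rfl, h'⟩) (lprec_irrefl (skew s))

theorem getElem?_skew_of_snoc_prefix (h : u ++ [a] <+: s) : (skew s)[rank u]? = some a := by
  obtain ⟨r, hr⟩ := preservesMoves_skew.snoc_prefix h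
  rw [← hr, ← length_skew u]
  simp

theorem getElem?_skew_of_forall_not_snoc_prefix (hlt : rank u < rank s)
    (h : ∀ a, ¬ u ++ [a] <+: s) : (skew s)[rank u]? = some 0 := by
  induction s using List.reverseRecOn with
  | nil => simp [rank_nil] at hlt
  | append_singleton s b ih =>
    rw [skew_snoc]
    rcases lt_trichotomy (rank u) (rank s) with hus | hus | hus
    · rw [List.getElem?_append_left (by rwa [length_skew])]
      exact ih hus fun a ha => h a (ha.trans (List.prefix_append s [b]))
    · obtain rfl := rank_injective hus
      exact absurd List.prefix_rfl (h b)
    · obtain ⟨d, hd⟩ := Nat.exists_eq_add_of_lt hus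
      rw [List.getElem?_append_right (by rw [length_skew]; exact hus.le), length_skew,
        show rank u - rank s = d + 1 by omega, List.getElem?_cons_succ,
        List.getElem?_replicate_of_lt (by omega)]

theorem getElem?_skew_congr (hs : rank u < rank s) (ht : rank v < rank t)
    (h : ∀ a, u ++ [a] <+: s ↔ v ++ [a] <+: t) : (skew s)[rank u]? = (skew t)[rank v]? := by
  by_cases hu : ∃ a, u ++ [a] <+: s
  · obtain ⟨a, ha⟩ := hu
    rw [getElem?_skew_of_snoc_prefix ha, getElem?_skew_of_snoc_prefix ((h a).1 ha)]
  · push Not at hu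
    rw [getElem?_skew_of_forall_not_snoc_prefix hs hu,
      getElem?_skew_of_forall_not_snoc_prefix ht fun a ha => hu a ((h a).2 ha)]

end Skew

theorem exists_strongEmb_eqOn {α : Type*} [Inhabited α] {D : Set (List α)} {g : List α → List α}
    {ℓ : ℕ → ℕ} (hD : ∀ s a, s ++ [a] ∈ D → s ∈ D)
    (hlen : ∀ s ∈ D, (g s).length = ℓ s.length)
    (hmove : ∀ s a, s ++ [a] ∈ D → g s ++ [a] <+: g (s ++ [a])) :
    ∃ e, StrongEmb e ∧ Set.EqOn e g D := by
  classical
  let start : ℕ → ℕ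
    | 0 => 0
    | k + 1 => ℓ k + 1
  let b (s : List α) : List α :=
    if s ∈ D then (g s).drop (start s.length)
    else List.replicate (ℓ s.length - start s.length) default
  have hb (s) : (b s).length = ℓ s.length - start s.length := by
    by_cases hs : s ∈ D <;> simp [b, hs, hlen]
  refine ⟨insertBlocks b, ⟨preservesMoves_insertBlocks b,
    fun k => ∑ j ∈ Finset.range (k + 1), (ℓ j - start j) + k, fun s => ?_⟩, fun s hs => ?_⟩
  · exact length_insertBlocks (ℓ := fun j => ℓ j - start j) hb s
  · induction s using List.reverseRecOn with
    | nil => simp [insertBlocks_nil, b, hs, start]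
    | append_singleton s a ih =>
      obtain ⟨r, hr⟩ := hmove s a hs
      have hr' : b (s ++ [a]) = r := by simp [b, hs, start, ← hr, ← hlen s (hD s a hs)]
      rw [insertBlocks_snoc, ih (hD s a hs), hr', ← hr, List.append_assoc, List.singleton_append]

/-- The word formed by the letters of `s` at the positions satisfying `P`. -/
noncomputable def trace {α : Type*} (P : ℕ → Prop) [DecidablePred P] (s : List α) : List α :=
  List.ofFn fun k : Fin (Nat.count P s.length) =>
    s[Nat.nth P k]'(Nat.nth_lt_of_lt_count k.2)

section Trace

variable {α : Type*} {P Q : ℕ → Prop} [DecidablePred P] [DecidablePred Q] {s t : List α} {k : ℕ}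

theorem length_trace (P : ℕ → Prop) [DecidablePred P] (s : List α) :
    (trace P s).length = Nat.count P s.length :=
  List.length_ofFn

theorem getElem?_trace (h : k < Nat.count P s.length) :
    (trace P s)[k]? = s[Nat.nth P k]? := by
  simp [trace, h, Nat.nth_lt_of_lt_count h]

theorem trace_congr (hcount : Nat.count P s.length = Nat.count Q t.length)
    (h : ∀ k < Nat.count P s.length, s[Nat.nth P k]? = t[Nat.nth Q k]?) :
    trace P s = trace Q t := by
  refine List.ext_getElem? fun k => ?_
  by_cases hk : k < Nat.count P s.length
  · rw [getElem?_trace hk, getElem?_trace (hcount ▸ hk), h k hk]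
  · rw [List.getElem?_eq_none (by rw [length_trace]; omega),
      List.getElem?_eq_none (by rw [length_trace]; omega)]

theorem getElem?_nth_of_prefix_trace (h : t <+: trace P s) (hk : k < t.length) :
    s[Nat.nth P k]? = some t[k] := by
  rw [← getElem?_trace (hk.trans_le (length_trace P s ▸ h.length_le)),
    List.getElem?_eq_getElem (hk.trans_le h.length_le), h.getElem hk]

theorem take_nth_eq_of_prefix_trace [DecidableEq α] {s' : List α} (hinf : {r | P r}.Infinite)
    (hP : P (lmeet s s').length) (h : t <+: trace P s) (h' : t <+: trace P s') :
    s.take (Nat.nth P t.length) = s'.take (Nat.nth P t.length) := by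
  rcases le_or_gt (Nat.nth P t.length) (lmeet s s').length with hle | hlt
  · obtain ⟨r, hr⟩ := lmeet_prefix_left s s'
    obtain ⟨r', hr'⟩ := lmeet_prefix_right s s'
    calc s.take (Nat.nth P t.length)
        = (lmeet s s').take (Nat.nth P t.length) := by
          rw [← List.take_append_of_le_length hle, hr]
      _ = s'.take (Nat.nth P t.length) := by rw [← List.take_append_of_le_length hle, hr']
  · have hnth := Nat.nth_count hP
    have hk := (Nat.nth_strictMono hinf).lt_iff_lt.1 (hnth.trans_lt hlt)
    have hs := getElem?_nth_of_prefix_trace h hk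
    have hs' := getElem?_nth_of_prefix_trace h' hk
    rw [hnth] at hs hs'
    have hsnoc {w : List α} (hw : lmeet s s' <+: w) {a : α}
        (ha : w[(lmeet s s').length]? = some a) : lmeet s s' ++ [a] <+: w := by
      obtain ⟨_ | ⟨b, r⟩, rfl⟩ := hw
      · simp at ha
      · obtain rfl : b = a := by simpa using ha
        simp
    exact absurd (length_lt_of_snoc_prefix (prefix_lmeet (hsnoc (lmeet_prefix_left s s') hs)
      (hsnoc (lmeet_prefix_right s s') hs'))) (lt_irrefl _)

theorem exists_strongEmb_trace [DecidableEq α] [Inhabited α] {ι : Type*} {x : ι → List α}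
    (hinf : {r | P r}.Infinite) (hP : ∀ p, P (meets x p).length) :
    ∃ e, StrongEmb e ∧ ∀ i, e (trace P (x i)) = x i := by
  have hlen (i) : (x i).length = Nat.nth P (trace P (x i)).length := by
    rw [length_trace, Nat.nth_count (meets_diag x i ▸ hP (i, i))]
  have hex (t) : ∃ w, ∀ i, t <+: trace P (x i) → w = (x i).take (Nat.nth P t.length) := by
    by_cases h : ∃ i, t <+: trace P (x i)
    · obtain ⟨i, hi⟩ := h
      exact ⟨_, fun j hj => take_nth_eq_of_prefix_trace (s := x i) hinf (hP (i, j)) hi hj⟩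
    · exact ⟨[], fun i hi => absurd ⟨i, hi⟩ h⟩
  choose g hg using hex
  have hmono := Nat.nth_strictMono hinf
  obtain ⟨e, he, heg⟩ := exists_strongEmb_eqOn (D := {t | ∃ i, t <+: trace P (x i)}) (g := g)
    (fun t a ⟨i, hi⟩ => ⟨i, prefix_of_snoc_prefix hi⟩)
    (fun t ⟨i, hi⟩ => by
      rw [hg t i hi, List.length_take, min_eq_left (hlen i ▸ hmono.monotone hi.length_le)])
    (fun t a ⟨i, hi⟩ => by
      have ha : (x i)[Nat.nth P t.length]? = some a := by
        simpa using getElem?_nth_of_prefix_trace hi (k := t.length) (by simp)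
      have htake : (x i).take (Nat.nth P t.length) ++ [a] =
          (x i).take (Nat.nth P t.length + 1) := by
        rw [List.take_add_one, ha, Option.toList_some]
      rw [hg _ i hi, hg t i (prefix_of_snoc_prefix hi), htake]
      exact List.take_prefix_take_left (hmono (by simp)))
  refine ⟨e, he, fun i => ?_⟩
  rw [heg ⟨i, List.prefix_rfl⟩, hg _ i List.prefix_rfl, ← hlen, List.take_length]

end Trace

theorem ncard_image_le_of_factorsThrough {β γ δ : Type*} [Nonempty δ] {f : β → γ} {g : β → δ}
    (h : g.FactorsThrough f) {s : Set β} (hs : s.Finite) : (g '' s).ncard ≤ (f '' s).ncard := by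
  have hg : g = Function.extend f g (Function.const γ (Classical.arbitrary δ)) ∘ f :=
    funext fun b => (h.extend_apply _ b).symm
  rw [hg, Set.image_comp]
  exact Set.ncard_image_le (hs.image f)

/-- `r` is a value of `f` or exceeds all of them. The values of a map on a finite type come first in
the increasing enumeration `Nat.nth (IsValueOrAbove f)`; the second alternative makes it total. -/
def IsValueOrAbove {κ : Type*} (f : κ → ℕ) (r : ℕ) : Prop :=
  (∃ k, f k = r) ∨ ∀ k, f k < r

section IsValueOrAbove

variable {κ : Type*} {f g : κ → ℕ} {k : κ}

theorem infinite_isValueOrAbove [Finite κ] (f : κ → ℕ) : {r | IsValueOrAbove f r}.Infinite := by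
  obtain ⟨M, hM⟩ := (Set.finite_range f).bddAbove
  exact (Set.Ioi_infinite M).mono fun r hr => .inr fun k =>
    (hM (Set.mem_range_self k)).trans_lt hr

open scoped Classical in
theorem count_isValueOrAbove (f : κ → ℕ) (k : κ) :
    Nat.count (IsValueOrAbove f) (f k) = (f '' {k' | f k' < f k}).ncard := by
  rw [Nat.count_eq_card_filter_range, ← Set.ncard_coe_finset]
  congr 1
  ext r
  simp only [Finset.coe_filter, Finset.mem_range, Set.mem_ofPred_eq, Set.mem_image]
  constructor
  · rintro ⟨hr, ⟨k', rfl⟩ | h⟩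
    · exact ⟨k', hr, rfl⟩
    · exact absurd (h k) hr.not_gt
  · rintro ⟨k', hk', rfl⟩
    exact ⟨hk', .inl ⟨k', rfl⟩⟩

open scoped Classical in
theorem count_isValueOrAbove_le [Finite κ] (f : κ → ℕ) (k : κ) :
    Nat.count (IsValueOrAbove f) (f k) ≤ Nat.card κ := by
  rw [count_isValueOrAbove, ← Set.ncard_univ]
  exact (Set.ncard_image_le (Set.toFinite _)).trans (Set.ncard_le_ncard (Set.subset_univ _))

open scoped Classical in
theorem count_isValueOrAbove_congr [Finite κ] (h : ∀ k k', f k < f k' ↔ g k < g k') (k : κ) :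
    Nat.count (IsValueOrAbove f) (f k) = Nat.count (IsValueOrAbove g) (g k) := by
  have heq (k k') : f k = f k' ↔ g k = g k' := by
    have := h k k'
    have := h k' k
    omega
  rw [count_isValueOrAbove, count_isValueOrAbove]
  simp only [h]
  exact le_antisymm
    (ncard_image_le_of_factorsThrough (fun _ _ => (heq _ _).2) (Set.toFinite _))
    (ncard_image_le_of_factorsThrough (fun _ _ => (heq _ _).1) (Set.toFinite _))

open scoped Classical in
theorem exists_nth_isValueOrAbove [Finite κ] (h : ∀ k k', f k < f k' ↔ g k < g k') {r : ℕ}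
    (hr : r < Nat.count (IsValueOrAbove f) (f k)) : ∃ k', f k' < f k ∧
      Nat.nth (IsValueOrAbove f) r = f k' ∧ Nat.nth (IsValueOrAbove g) r = g k' := by
  have hlt := Nat.nth_lt_of_lt_count hr
  obtain ⟨k', hk'⟩ := (Nat.nth_mem_of_infinite (infinite_isValueOrAbove f) r).resolve_right
    fun habove => (habove k).not_gt hlt
  refine ⟨k', hk' ▸ hlt, hk'.symm, ?_⟩
  rw [← Nat.count_nth_of_infinite (infinite_isValueOrAbove f) r, ← hk',
    count_isValueOrAbove_congr h]
  exact Nat.nth_count (.inl ⟨k', rfl⟩)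

end IsValueOrAbove

section Envelope

variable {n : ℕ} [NeZero n] {ι : Type*} [Finite ι]

open scoped Classical in
theorem trace_skew_congr {p q : ι → List (Fin n)} (h : moveType p = moveType q) (i : ι) :
    trace (IsValueOrAbove (rank ∘ meets p)) (skew (p i)) =
      trace (IsValueOrAbove (rank ∘ meets q)) (skew (q i)) := by
  have hlt (k k') : (rank ∘ meets p) k < (rank ∘ meets p) k' ↔
      (rank ∘ meets q) k < (rank ∘ meets q) k' := by
    simp only [Function.comp_apply, ← lprec_iff_rank_lt, lprec_meets_iff h]
  have hdiag (p : ι → List (Fin n)) : (skew (p i)).length = (rank ∘ meets p) (i, i) := by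
    rw [length_skew, Function.comp_apply, meets_diag]
  apply trace_congr <;> simp only [hdiag]
  · exact count_isValueOrAbove_congr hlt _
  · intro r hr
    obtain ⟨k, hk, hp, hq⟩ := exists_nth_isValueOrAbove hlt hr
    rw [hp, hq]
    refine getElem?_skew_congr ?_ ?_ fun a => ?_
    · simpa [meets_diag] using hk
    · simpa [meets_diag] using (hlt _ _).1 hk
    · simpa only [meets_diag] using snoc_prefix_meets_iff h (p := k) (q := (i, i)) (i := a)

theorem exists_common_pattern {p q : ι → List (Fin n)} (h : moveType p = moveType q) :
    ∃ (e e' : List (Fin n) → List (Fin n)) (θ : ι → List (Fin n)), StrongEmb e ∧ StrongEmb e' ∧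
      (∀ i, (θ i).length ≤ Nat.card (ι × ι)) ∧ skew ∘ p = e ∘ θ ∧ skew ∘ q = e' ∘ θ := by
  classical
  have hex (p : ι → List (Fin n)) : ∃ e, StrongEmb e ∧
      ∀ i, e (trace (IsValueOrAbove (rank ∘ meets p)) (skew (p i))) = skew (p i) :=
    exists_strongEmb_trace (infinite_isValueOrAbove _) fun k => .inl ⟨k, by
      rw [Function.comp_apply, ← length_skew, meets, meets, preservesMoves_skew.map_lmeet]⟩
  obtain ⟨e, he, hep⟩ := hex p
  obtain ⟨e', he', heq⟩ := hex q
  refine ⟨e, e', fun i => trace (IsValueOrAbove (rank ∘ meets p)) (skew (p i)), he, he',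
    fun i => ?_, funext fun i => (hep i).symm, funext fun i => ?_⟩
  · rw [length_trace, length_skew, ← meets_diag p i]
    exact count_isValueOrAbove_le (rank ∘ meets p) (i, i)
  · exact (trace_skew_congr h i ▸ heq i).symm

end Envelope

theorem exists_moveType_homogeneous {n m : ℕ} [NeZero n] (ι : Type*) [Finite ι] (N : ℕ)
    (φ : List (Fin n) → List (Fin m)) : ∃ E, StrongEmb E ∧
      ∀ f g, StrongEmb f → StrongEmb g → ∀ θ : ι → List (Fin n), (∀ i, (θ i).length ≤ N) →
        moveType (φ ∘ E ∘ f ∘ θ) = moveType (φ ∘ E ∘ g ∘ θ) := by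
  have : Finite {l : List (Fin n) // l.length < N + 1} :=
    (List.finite_length_lt (Fin n) (N + 1)).to_subtype
  obtain ⟨E, hE, hom⟩ := milliken (N + 1)
    fun (f : {l : List (Fin n) // l.length < N + 1} → List (Fin n)) (θ : ι → _) =>
      moveType (φ ∘ f ∘ θ)
  exact ⟨E, hE, fun f g hf hg θ hθ =>
    congrFun (hom f g hf hg) fun i => ⟨θ i, Nat.lt_succ_of_le (hθ i)⟩⟩

theorem exists_moveType_preserving {n m : ℕ} (φ : List (Fin n) → List (Fin m)) :
    ∃ F : List (Fin n) → List (Fin n), PreservesMoves F ∧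
      (∀ s t, lprec (F s) (F t) ↔ lprec s t) ∧ ∀ {ι : Type} (p q : ι → List (Fin n)),
        moveType p = moveType q → moveType (φ ∘ F ∘ p) = moveType (φ ∘ F ∘ q) := by
  rcases n.eq_zero_or_pos with rfl | hn
  · exact ⟨id, PreservesMoves.id, fun _ _ => Iff.rfl, fun p q _ => by
      rw [Subsingleton.elim p q]⟩
  have : NeZero n := ⟨hn.ne'⟩
  obtain ⟨E, hE, hom⟩ := exists_moveType_homogeneous (Fin 4) (Nat.card (Fin 4 × Fin 4)) φ
  refine ⟨E ∘ skew, hE.preservesMoves.comp preservesMoves_skew,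
    fun s t => hE.lprec_iff.trans (lprec_skew s t), fun p q h => ?_⟩
  refine moveType_eq_of_fin_four fun v => ?_
  obtain ⟨e, e', θ, he, he', hθ, hp, hq⟩ := exists_common_pattern (moveType_comp_congr h v)
  have hcomp (p : _ → List (Fin n)) : (φ ∘ (E ∘ skew) ∘ p) ∘ v = φ ∘ E ∘ skew ∘ p ∘ v := rfl
  rw [hcomp, hcomp, hp, hq, hom e e' he he' θ hθ]

/-- for every φ : n^{<ω} → m^{<ω} there is a first-move copy T of the
n-adic tree on which φ preserves first-move equivalence. -/
theorem statement_13 (n m : ℕ) (φ : List (Fin n) → List (Fin m)) :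
    ∃ T : Set (List (Fin n)), FME T Set.univ ∧
      ∀ A B : Set (List (Fin n)), A ∪ B ⊆ T → FME A B →
        FME (φ '' A) (φ '' B) := by
  obtain ⟨F, hF, hlprec, hφ⟩ := exists_moveType_preserving φ
  refine ⟨Set.range F, ?_, fun A B hAB h => ?_⟩
  · rw [← Set.range_id]
    exact fme_range_of_moveType_eq (hF.moveType_comp hlprec id)
  · obtain ⟨f, rfl, hf⟩ := h.exists_moveType_eq
    choose p hp using fun a : A => hAB (.inl a.2)
    choose q hq using fun a : A => hAB (.inr (Set.mem_image_of_mem f a.2))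
    replace hp : F ∘ p = fun a : A => (a : List (Fin n)) := funext hp
    replace hq : F ∘ q = fun a : A => f a := funext hq
    have hpq : moveType p = moveType q := by
      rw [← hF.moveType_comp hlprec p, ← hF.moveType_comp hlprec q, hp, hq, hf]
    rw [Set.image_image, Set.image_eq_range, Set.image_eq_range]
    have := fme_range_of_moveType_eq (hφ p q hpq)
    rwa [hp, hq] at this
end

section
/- If Γ = {Γ_i : i < n} is an analytic n-gap with n ≥ 2, then there exists B ⊆ {0,…,n−1} of cardinality 2 such that Γ can be B-broken. -/
open Set

/-- `a ⊆* b`: all but finitely many elements of `a` belong to `b`. -/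
def AlmostSub {N : Type*} (a b : Set N) : Prop := (a \ b).Finite

/-- Two families of sets are orthogonal if any two members intersect in a finite set. -/
def OrthFam {N : Type*} (I J : Set (Set N)) : Prop := ∀ x ∈ I, ∀ y ∈ J, (x ∩ y).Finite

/-- The families `Γ i` are separated if there are sets `a i` with `x ⊆* a i` for
every `x ∈ Γ i` and `⋂ i, a i` finite. -/
def SepFam {N ι : Type*} (Γ : ι → Set (Set N)) : Prop :=
  ∃ a : ι → Set N, (∀ i, ∀ x ∈ Γ i, (x \ a i).Finite) ∧ (⋂ i, a i).Finite

/-- The families `Γ i` are countably separated. -/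
def CSepFam {N ι : Type*} (Γ : ι → Set (Set N)) : Prop :=
  ∃ C : Set (Set N), C.Countable ∧ ∀ x : ι → Set N, (∀ i, x i ∈ Γ i) →
    ∃ c : ι → Set N, (∀ i, c i ∈ C) ∧ (∀ i, x i ⊆ c i) ∧ (⋂ i, c i) = ∅

/-- A family is infinitely hereditary if every infinite subset of a member is a member. -/
def HerFam {N : Type*} (I : Set (Set N)) : Prop := ∀ x ∈ I, ∀ y ⊆ x, y.Infinite → y ∈ I

/-- `Γ` is an `n∗`-gap. -/
def NStarGap {N ι : Type*} (Γ : ι → Set (Set N)) : Prop :=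
  (∀ x : ι → Set N, (∀ i, x i ∈ Γ i) → (⋂ i, x i).Finite) ∧
  ¬ SepFam Γ ∧ (∀ i, HerFam (Γ i))

/-- `Γ` is an `n`-gap: an `n∗`-gap with pairwise orthogonal families. -/
def NGap {N ι : Type*} (Γ : ι → Set (Set N)) : Prop :=
  NStarGap Γ ∧ ∀ i j, i ≠ j → OrthFam (Γ i) (Γ j)

/-- The orthogonal of a family of sets. -/
def orthFamC {N : Type*} (I : Set (Set N)) : Set (Set N) := {y | ∀ x ∈ I, (x ∩ y).Finite}

/-- A family of subsets of `N`, viewed as a subset of the Cantor space `2^N`,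
is analytic. -/
def AnalyticFam {N : Type*} (Γ : Set (Set N)) : Prop :=
  MeasureTheory.AnalyticSet {f : N → Bool | {x | f x = true} ∈ Γ}

/-- A family of subsets of `N`, viewed as a subset of the Cantor space `2^N`, is closed. -/
def ClosedFam {N : Type*} (Γ : Set (Set N)) : Prop :=
  IsClosed {f : N → Bool | {x | f x = true} ∈ Γ}

/-- The order `≤` between multiple gaps: an injection preserving the families
and their orthogonals. -/
def GapLE {A B ι : Type*} (Γ : ι → Set (Set A)) (Δ : ι → Set (Set B)) : Prop :=
  ∃ φ : A → B, Function.Injective φ ∧ ∀ i,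
    (∀ x ∈ Γ i, φ '' x ∈ Δ i) ∧ (∀ y ∈ orthFamC (Γ i), φ '' y ∈ orthFamC (Δ i))

/-- `X` is an `i`-chain in the `n`-adic tree: `X = {x₀,x₁,…}` with `x_k⌢i ≤ x_{k+1}`. -/
def IChain {n : ℕ} (i : Fin n) (X : Set (List (Fin n))) : Prop :=
  ∃ x : ℕ → List (Fin n), X = Set.range x ∧ ∀ k, (x k ++ [i]) <+: x (k + 1)

/-- `X` is an `[i]`-chain in the `n`-adic tree: `X = {x₀,x₁,…}` with
`x_{k+1} = x_k⌢i⌢w_k` where all entries of `w_k` are `≤ i`. -/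
def BChain {n : ℕ} (i : Fin n) (X : Set (List (Fin n))) : Prop :=
  ∃ x : ℕ → List (Fin n), X = Set.range x ∧
    ∀ k, ∃ w : List (Fin n), (∀ j ∈ w, j ≤ i) ∧ x (k + 1) = x k ++ i :: w

/-- The n-gap Γ is B-broken: there is an infinite M ⊆ N orthogonal to every Γ_i with
i ∉ B such that the restrictions {Γ_i|_M : i ∈ B} form a gap. -/
def BBroken {N : Type*} {n : ℕ} (Γ : Fin n → Set (Set N)) (B : Set (Fin n)) : Prop :=
  ∃ M : Set N, M.Infinite ∧
    (∀ i : Fin n, i ∉ B → ∀ x ∈ Γ i, (M ∩ x).Finite) ∧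
    NGap (fun i : B => {x ∈ Γ i.1 | x ⊆ M})

/-!
It suffices to isolate two of the families: to find a set on which they cannot be separated and to
which every other family is orthogonal. Maps from trees to `N` pull the families back to trees,
and isolation on a tree is transported back to `N`.

If some two families are not countably separated, a Cantor scheme of codes yields the binary tree,
whose 0-chains lie in the one family and whose 1-chains in the other. Either the remaining families
all become orthogonal to some copy of the tree, or one of them stays alive on all copies. The
surviving family then contains infinite combs, and codes of combs are fused into columns, each a
0-chain, such that every fast sequence through the columns lies in the surviving family; the columns
isolate it together with the family of the 0-chains.

If all pairs are countably separated, the unseparated pair contains a family not countably generated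
in the orthogonal of the other, and this yields an ω-branching tree whose successor sets lie in one
family and whose chains in the other. The separating sets colour the nodes, and the colours become
homogeneous on a subtree. Then either almost all successors of all nodes form a set orthogonal to
the remaining families, or one of these is not countably generated on the fans above some node; a
tree built inside that fan has colours stabilising along its nodes, which isolates that family.
-/

namespace AnalyticGap

variable {M N ι : Type*}

/-- The families `A` and `B` cannot be separated within `M`. -/
def NonSepOn (A B : Set (Set N)) (M : Set N) : Prop :=
  ∀ a b : Set N, (∀ x ∈ A, x ⊆ M → (x \ a).Finite) → (∀ y ∈ B, y ⊆ M → (y \ b).Finite) →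
    (a ∩ b).Infinite

/-- On `M` the families `Γ a` and `Γ b` form a gap, and all other families are trivial: this is
what it takes to break `Γ` along `{a, b}`. -/
structure Isolated (Γ : ι → Set (Set N)) (a b : ι) (M : Set N) : Prop where
  ne : a ≠ b
  nonSep : NonSepOn (Γ a) (Γ b) M
  orth : ∀ k, k ≠ a → k ≠ b → ∀ x ∈ Γ k, (M ∩ x).Finite

theorem NonSepOn.infinite {A B : Set (Set N)} {M : Set N} (h : NonSepOn A B M) : M.Infinite := by
  have hM : ∀ x : Set N, x ⊆ M → (x \ M).Finite := fun x hx => by simp [sdiff_eq_empty.2 hx]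
  simpa using h M M (fun x _ => hM x) (fun y _ => hM y)

theorem Isolated.bBroken {n : ℕ} {Γ : Fin n → Set (Set N)} (hΓ : NGap Γ) {a b : Fin n} {M : Set N}
    (h : Isolated Γ a b M) : BBroken Γ {a, b} := by
  have hab : OrthFam (Γ a) (Γ b) := hΓ.2 a b h.ne
  refine ⟨M, h.nonSep.infinite, fun i hi x hx => ?_,
    ⟨fun x hx => ?_, ?_, fun i x hx y hy hinf => ?_⟩,
    fun i j hij x hx y hy => hΓ.2 i j (Subtype.coe_injective.ne hij) x hx.1 y hy.1⟩
  · exact h.orth i (fun e => hi (by simp [e])) (fun e => hi (by simp [e])) x hx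
  · exact (hab _ (hx ⟨a, by simp⟩).1 _ (hx ⟨b, by simp⟩).1).subset
      (subset_inter (iInter_subset _ _) (iInter_subset _ _))
  · rintro ⟨c, hc, hfin⟩
    refine h.nonSep (c ⟨a, by simp⟩) (c ⟨b, by simp⟩) (fun x hx hM => hc _ x ⟨hx, hM⟩)
      (fun x hx hM => hc _ x ⟨hx, hM⟩) (hfin.subset fun p hp => mem_iInter.2 ?_)
    rintro ⟨i, rfl | rfl⟩
    exacts [hp.1, hp.2]
  · exact ⟨hΓ.1.2.2 i.1 x hx.1 y hy hinf, hy.trans hx.2⟩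

theorem _root_.NGap.nonSepOn {n : ℕ} {Γ : Fin n → Set (Set N)} (hΓ : NGap Γ) {a b : Fin n}
    (hab : a ≠ b) : NonSepOn (Γ a) (Γ b) univ := by
  intro c d hc hd hfin
  refine hΓ.1.2.1 ⟨Function.update (Function.update (fun _ => univ) a c) b d, fun i x hx => ?_,
    hfin.subset fun p hp => ?_⟩
  · rcases eq_or_ne i b with rfl | hb
    · simpa using hd x hx (subset_univ x)
    rcases eq_or_ne i a with rfl | ha
    · simpa [hb] using hc x hx (subset_univ x)
    · simp [hb, ha]
  · have ha := mem_iInter.1 hp a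
    have hb := mem_iInter.1 hp b
    simp only [Function.update_of_ne hab, Function.update_self] at ha hb
    exact ⟨ha, hb⟩

/-! ### Analytic families -/

/-- `F` parametrises the nonempty members of `Γ` by the Baire space, with closed membership
conditions. Allowing `∅` as a value makes the empty family codable too. -/
structure Coding (Γ : Set (Set N)) (F : (ℕ → ℕ) → Set N) : Prop where
  isClosed : ∀ x, IsClosed {g | x ∈ F g}
  mem : ∀ g, (F g).Nonempty → F g ∈ Γ
  surj : ∀ y ∈ Γ, ∃ g, F g = y

theorem _root_.AnalyticFam.exists_coding {Γ : Set (Set N)} (h : AnalyticFam Γ) :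
    ∃ F, Coding Γ F := by
  classical
  rw [AnalyticFam, MeasureTheory.AnalyticSet] at h
  rcases h with h | ⟨f, hf, hr⟩
  · refine ⟨fun _ => ∅, fun x => by simp, by simp, fun y hy => ?_⟩
    have : (fun p => decide (p ∈ y)) ∈ {f : N → Bool | {x | f x = true} ∈ Γ} := by simpa using hy
    simp [h] at this
  · refine ⟨fun g => {x | f g x = true},
      fun x => isClosed_eq ((continuous_apply x).comp hf) continuous_const,
      fun g _ => hr.subset (mem_range_self g), fun y hy => ?_⟩
    obtain ⟨g, hg⟩ : (fun p => decide (p ∈ y)) ∈ range f := hr ▸ (by simpa using hy)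
    exact ⟨g, by simp [hg]⟩

/-- The sets each of whose points is related by `R` to almost all of its points. -/
def Almost (R : N → N → Prop) : Set (Set N) := {x | ∀ s ∈ x, {t ∈ x | ¬ R s t}.Finite}

theorem measurableSet_almost [Countable N] (R : N → N → Prop) :
    MeasurableSet {f : N → Bool | {x | f x = true} ∈ Almost R} := by
  have hcoord (t : N) : Measurable fun f : N → Bool => f t = true :=
    measurableSet_setOfPred.1 (measurableSet_eq_fun (measurable_pi_apply t) measurable_const)
  have hfin (f : N → Bool) (s : N) : {t ∈ {x | f x = true} | ¬ R s t}.Finite ↔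
      ∃ E : Finset N, ∀ t, f t = true → R s t ∨ t ∈ E :=
    ⟨fun h => ⟨h.toFinset, fun t ht => or_iff_not_imp_left.2 fun hR => h.mem_toFinset.2 ⟨ht, hR⟩⟩,
      fun ⟨E, hE⟩ => E.finite_toSet.subset fun t ht => (hE t ht.1).resolve_left ht.2⟩
  refine measurableSet_setOfPred.2 ?_
  simp only [Almost, mem_ofPred_eq (p := fun _ : Set N => _), hfin]
  exact .forall fun s => (hcoord s).imp
    (.exists fun E => .forall fun t => (hcoord t).imp measurable_const)

theorem _root_.AnalyticFam.inter_almost [Countable N] {Γ : Set (Set N)} (h : AnalyticFam Γ)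
    (R : N → N → Prop) : AnalyticFam (Γ ∩ Almost R) := by
  obtain ⟨β, _, _, φ, hφ, hr⟩ := MeasureTheory.analyticSet_iff_exists_polishSpace_range.1 h
  borelize β
  have himage := (hφ.measurable (measurableSet_almost R)).analyticSet_image hφ.measurable
  rwa [image_preimage_eq_range_inter, hr] at himage

/-! ### Pullbacks -/

/-- The sets which `u` maps injectively into a member of `Γ`. The injectivity makes up for `u` not
being injective itself. -/
def pullback (u : M → N) (Γ : Set (Set N)) : Set (Set M) :=
  {A | InjOn u A ∧ ∃ x ∈ Γ, MapsTo u A x}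

theorem herFam_pullback (u : M → N) (Γ : Set (Set N)) : HerFam (pullback u Γ) :=
  fun _ hA _ hBA _ => ⟨hA.1.mono hBA, hA.2.imp fun _ hx => ⟨hx.1, hx.2.mono_left hBA⟩⟩

theorem pullback_mono (u : M → N) {Γ Δ : Set (Set N)} (h : Γ ⊆ Δ) : pullback u Γ ⊆ pullback u Δ :=
  fun _ ⟨hA, x, hx, hAx⟩ => ⟨hA, x, h hx, hAx⟩

theorem _root_.OrthFam.pullback {Γ Δ : Set (Set N)} (h : OrthFam Γ Δ) (u : M → N) :
    OrthFam (pullback u Γ) (pullback u Δ) := by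
  rintro A ⟨hA, x, hx, hAx⟩ B ⟨-, y, hy, hBy⟩
  exact .of_finite_image ((h x hx y hy).subset ((hAx.inter_inter hBy).image_subset))
    (hA.mono inter_subset_left)

theorem _root_.AnalyticFam.pullback [Countable M] {Γ : Set (Set N)} (h : AnalyticFam Γ)
    (u : M → N) : AnalyticFam (pullback u Γ) := by
  obtain ⟨β, _, _, φ, hφ, hr⟩ := MeasureTheory.analyticSet_iff_exists_polishSpace_range.1 h
  let C : Set (β × (M → Bool)) :=
    {p | (∀ s t, p.2 s = true → p.2 t = true → u s = u t → s = t) ∧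
      ∀ s, p.2 s = true → φ p.1 (u s) = true}
  have hopen (s : M) : IsOpen {p : β × (M → Bool) | p.2 s = true} :=
    (isOpen_discrete {true}).preimage (f := fun p : β × (M → Bool) => p.2 s) (by fun_prop)
  have hclosed : IsClosed C := by
    simp only [C, ofPred_and, ofPred_forall]
    refine .inter (isClosed_iInter fun s => isClosed_iInter fun t => ?_)
      (isClosed_iInter fun s => isClosed_imp (hopen s) ?_)
    · exact isClosed_imp (hopen s) (isClosed_imp (hopen t) isClosed_const)
    · exact isClosed_eq (((continuous_apply _).comp hφ).comp continuous_fst) continuous_const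
  have : PolishSpace (M → Bool) := {}
  suffices hC : Prod.snd '' C = {f | {s | f s = true} ∈ AnalyticGap.pullback u Γ} by
    exact (hC ▸ hclosed.analyticSet.image_of_continuous continuous_snd :)
  ext f
  constructor
  · rintro ⟨⟨g, f⟩, ⟨hinj, hmaps⟩, rfl⟩
    exact ⟨fun s hs t ht => hinj s t hs ht, _, hr.subset (mem_range_self g), hmaps⟩
  · rintro ⟨hinj, x, hx, hmaps⟩
    classical
    obtain ⟨g, hg⟩ : (fun p => decide (p ∈ x)) ∈ range φ := hr ▸ (by simpa using hx)
    exact ⟨(g, f), ⟨fun s t hs ht => hinj hs ht, fun s hs => by simpa [hg] using hmaps hs⟩, rfl⟩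

theorem Isolated.of_pullback {Γ : ι → Set (Set N)} (her : ∀ i, HerFam (Γ i)) {u : M → N} {a b : ι}
    {S : Set M} (h : Isolated (fun i => pullback u (Γ i)) a b S) : Isolated Γ a b (u '' S) := by
  have himage {i : ι} {A : Set M} (hA : A ∈ pullback u (Γ i)) (hinf : A.Infinite) :
      u '' A ∈ Γ i :=
    let ⟨hinj, x, hx, hAx⟩ := hA
    her i x hx _ hAx.image_subset (hinf.image hinj)
  refine ⟨h.ne, fun c d hc hd hfin => ?_, fun k hka hkb x hx => ?_⟩
  · -- Replacing `c` by `c \ d` makes the preimages disjoint even where `u` has infinite fibres.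
    have hpull {i : ι} {e e' : Set N} (he : ∀ x ∈ Γ i, x ⊆ u '' S → (x \ e).Finite)
        (hee' : e \ e' ⊆ c ∩ d) (A : Set M) (hA : A ∈ pullback u (Γ i)) (hAS : A ⊆ S) :
        (A \ u ⁻¹' e').Finite := by
      by_cases hinf : A.Infinite
      · refine .of_finite_image (((he _ (himage hA hinf) (image_mono hAS)).union hfin).subset ?_)
          (hA.1.mono sdiff_subset)
        rintro _ ⟨s, hs, rfl⟩
        by_cases hse : u s ∈ e
        exacts [.inr (hee' ⟨hse, hs.2⟩), .inl ⟨mem_image_of_mem u hs.1, hse⟩]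
      · exact (not_infinite.1 hinf).subset sdiff_subset
    refine h.nonSep (u ⁻¹' (c \ d)) (u ⁻¹' d) (hpull hc ?_) (hpull hd (by simp)) ?_
    · exact fun p hp => ⟨hp.1, not_not.1 fun hpd => hp.2 ⟨hp.1, hpd⟩⟩
    · exact finite_empty.subset fun s hs => hs.1.2 hs.2
  · have hsurj : SurjOn u (S ∩ u ⁻¹' x) (u '' S ∩ x) := (image_inter_preimage u S x).ge
    obtain ⟨A, hAS, hA⟩ := hsurj.exists_bijOn_subset
    have := h.orth k hka hkb A ⟨hA.injOn, x, hx, fun s hs => (hAS hs).2⟩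
    rw [← hA.image_eq]
    exact (this.subset fun s hs => ⟨(hAS hs).1, hs⟩).image u

/-! ### Columns -/

theorem isolated_of_columns {Γ : ι → Set (Set N)} (orth : Pairwise fun i j => OrthFam (Γ i) (Γ j))
    {a b : ι} (hab : a ≠ b) (X : ℕ × ℕ → N) (hX : Function.Injective X)
    (hcol : ∀ q, range (fun j => X (q, j)) ∈ Γ a)
    (hfast : ∀ p : ℕ → ℕ × ℕ, (∀ i, max (p i).1 (p i).2 < (p (i + 1)).1) →
      range (X ∘ p) ∈ Γ b) :
    Isolated Γ a b (range X) := by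
  have hselect (G : Set N) (hG : ∀ Q, ∃ p : ℕ × ℕ, Q < p.1 ∧ X p ∈ G) :
      ∃ z ∈ Γ b, z ⊆ G ∧ z ⊆ range X ∧ z.Infinite := by
    obtain ⟨p, hpG, hp⟩ := exists_seq_of_forall_finset_exists (fun p => X p ∈ G)
      (fun p p' : ℕ × ℕ => max p.1 p.2 < p'.1) fun s _ =>
        let ⟨p, hlt, hp⟩ := hG (s.sup fun p => max p.1 p.2)
        ⟨p, hp, fun p' hp' => (Finset.le_sup (f := fun p : ℕ × ℕ => max p.1 p.2) hp').trans_lt hlt⟩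
    have hmono : StrictMono fun i => (p i).1 :=
      fun i j hij => (le_max_left _ _).trans_lt (hp i j hij)
    exact ⟨_, hfast p fun i => hp i _ i.lt_succ_self, range_subset_iff.2 hpG,
      range_comp_subset_range p X,
      infinite_range_of_injective (hX.comp (.of_comp (f := Prod.fst) hmono.injective))⟩
  have hcolinf (q : ℕ) : (range fun j => X (q, j)).Infinite :=
    infinite_range_of_injective fun j j' e => (Prod.mk.inj (hX e)).2
  have hcolsub (q : ℕ) : range (fun j => X (q, j)) ⊆ range X :=
    range_subset_iff.2 fun j => mem_range_self _
  refine ⟨hab, fun c d hc hd hfin => ?_, fun k hka hkb y hy => ?_⟩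
  · obtain ⟨z, hz, hzG, hzX, hzinf⟩ := hselect (c \ d) fun Q => by
      obtain ⟨_, ⟨j, rfl⟩, hj⟩ :=
        ((hcolinf (Q + 1)).sdiff ((hc _ (hcol (Q + 1)) (hcolsub _)).union hfin)).nonempty
      simp only [mem_union, mem_sdiff, mem_range_self, true_and, not_or, not_not] at hj
      exact ⟨(Q + 1, j), Q.lt_succ_self, hj.1, fun h => hj.2 ⟨hj.1, h⟩⟩
    exact hzinf ((hd z hz hzX).subset fun p hp => ⟨hp, (hzG hp).2⟩)
  · by_contra hinf
    obtain ⟨z, hz, hzy, -, hzinf⟩ := hselect y fun Q => by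
      have hsmall : (⋃ q ∈ Iic Q, range (fun j => X (q, j)) ∩ y).Finite :=
        (finite_Iic Q).biUnion fun q _ => orth hka.symm _ (hcol q) y hy
      obtain ⟨_, ⟨⟨p, rfl⟩, hpy⟩, hp⟩ := (Infinite.sdiff hinf hsmall).nonempty
      refine ⟨p, not_le.1 fun hpQ => hp (mem_biUnion hpQ ⟨⟨p.2, rfl⟩, hpy⟩), hpy⟩
    exact hzinf ((orth hkb y hy z hz).subset fun p hp => ⟨hzy hp, hp⟩)

/-! ### Trees of sets of codes -/

theorem exists_forall_mem_closure {P : ℕ → Set (ℕ → ℕ)} (hP : Antitone P)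
    (hne : ∀ k, (P k).Nonempty) (hfix : ∀ k, ∀ g ∈ P k, ∀ g' ∈ P k, ∀ i < k, g i = g' i) :
    ∃ g, ∀ k, g ∈ closure (P k) := by
  choose g hg using hne
  refine ⟨fun i => g (i + 1) i, fun k =>
    mem_closure_of_tendsto (f := g) (b := Filter.atTop) (tendsto_pi_nhds.2 fun i => ?_) ?_⟩
  · refine tendsto_const_nhds.congr' ?_
    filter_upwards [Filter.eventually_ge_atTop (i + 1)] with m hm
    exact hfix (i + 1) _ (hg _) _ (hP hm (hg m)) i i.lt_succ_self
  · filter_upwards [Filter.eventually_ge_atTop k] with m hm using hP hm (hg m)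

theorem rel_of_suffix {α β : Type*} (r : β → β → Prop) [Std.Refl r] [IsTrans β r]
    {f : List α → β} (h : ∀ i s, r (f s) (f (i :: s))) {s t : List α} (hst : s <:+ t) :
    r (f s) (f t) := by
  obtain ⟨w, rfl⟩ := hst
  induction w with
  | nil => exact refl _
  | cons i w ih => exact _root_.trans ih (h i (w ++ s))

theorem exists_cons_suffix_iff {α : Type*} {s t : List α} :
    (∃ i, (i :: s) <:+ t) ↔ s <:+ t ∧ s.length < t.length := by
  refine ⟨fun ⟨i, hi⟩ => ⟨(List.suffix_cons i s).trans hi, hi.length_le⟩, ?_⟩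
  rintro ⟨⟨w, rfl⟩, hlt⟩
  rcases w.eq_nil_or_concat with rfl | ⟨v, i, rfl⟩
  · simp at hlt
  · exact ⟨i, v, by simp⟩

theorem eq_or_exists_cons_suffix {α : Type*} {s t : List α} (h : s <:+ t) :
    t = s ∨ ∃ i, (i :: s) <:+ t :=
  h.length_le.eq_or_lt.imp (fun e => (h.eq_of_length e).symm) fun hlt =>
    exists_cons_suffix_iff.2 ⟨h, hlt⟩

theorem suffix_of_cons_suffix_cons {α : Type*} {i j : α} {s t : List α}
    (h : (i :: s) <:+ (j :: t)) : s <:+ t :=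
  List.suffix_of_suffix_length_le ((List.suffix_cons i s).trans h) (List.suffix_cons j t)
    (by simpa using h.length_le)

/-- A chain in the tree of lists, whose root is the end of the lists. -/
def IsChainSeq {α : Type*} (t : ℕ → List α) : Prop := ∀ k, ∃ i, (i :: t k) <:+ t (k + 1)

/-- Nonempty sets of codes attached to the nodes of a tree, decreasing along the branches and
fixing more and more coordinates. -/
structure IsCodeTree {α : Type*} (P : List α → Set (ℕ → ℕ)) : Prop where
  nonempty : ∀ s, (P s).Nonempty
  cons_subset : ∀ i s, P (i :: s) ⊆ P s
  fix : ∀ i s, ∀ g ∈ P (i :: s), ∀ g' ∈ P (i :: s), g s.length = g' s.length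

theorem IsChainSeq.strictMono_length {α : Type*} {t : ℕ → List α} (ht : IsChainSeq t) :
    StrictMono fun k => (t k).length :=
  strictMono_nat_of_lt_succ fun k => (ht k).choose_spec.length_le

theorem IsChainSeq.injective {α : Type*} {t : ℕ → List α} (ht : IsChainSeq t) :
    Function.Injective t :=
  .of_comp (f := List.length) ht.strictMono_length.injective

theorem IsChainSeq.suffix {α : Type*} {t : ℕ → List α} (ht : IsChainSeq t) (k : ℕ) :
    t k <:+ t (k + 1) :=
  (List.suffix_cons _ _).trans (ht k).choose_spec

theorem IsCodeTree.subset_of_suffix {α : Type*} {P : List α → Set (ℕ → ℕ)} (hP : IsCodeTree P)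
    {s t : List α} (h : s <:+ t) : P t ⊆ P s :=
  rel_of_suffix (f := P) (· ⊇ ·) hP.cons_subset h

theorem IsCodeTree.exists_mem_closure {α : Type*} {P : List α → Set (ℕ → ℕ)} (hP : IsCodeTree P)
    {t : ℕ → List α} (ht : IsChainSeq t) : ∃ g, ∀ k, g ∈ closure (P (t k)) := by
  have hfix (s : List α) : ∀ g ∈ P s, ∀ g' ∈ P s, ∀ i < s.length, g i = g' i := by
    induction s with
    | nil => simp
    | cons a s ih =>
      intro g hg g' hg' i hi
      rcases Nat.lt_succ_iff_lt_or_eq.1 hi with h | rfl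
      · exact ih g (hP.cons_subset a s hg) g' (hP.cons_subset a s hg') i h
      · exact hP.fix a s g hg g' hg'
  exact exists_forall_mem_closure
    (antitone_nat_of_succ_le fun k => hP.subset_of_suffix (ht.suffix k)) (fun k => hP.nonempty _)
    fun k g hg g' hg' i hi => hfix _ g hg g' hg' i (hi.trans_le ht.strictMono_length.le_apply)

theorem Coding.exists_mem_of_chain {α : Type*} {Γ : Set (Set N)} {F : (ℕ → ℕ) → Set N}
    (hF : Coding Γ F) {P : List α → Set (ℕ → ℕ)} (hP : IsCodeTree P) {t : ℕ → List α}
    (ht : IsChainSeq t) {x : ℕ → N} (hx : ∀ k, ∀ g ∈ P (t (k + 1)), x k ∈ F g) :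
    ∃ y ∈ Γ, ∀ k, x k ∈ y := by
  obtain ⟨g, hg⟩ := hP.exists_mem_closure ht
  have hxg (k : ℕ) : x k ∈ F g := closure_minimal (hx k) (hF.isClosed (x k)) (hg (k + 1))
  exact ⟨F g, hF.mem g ⟨_, hxg 0⟩, hxg⟩

/-! ### Countable separation -/

/-- Countably many sets separate, up to finite sets, the sets with codes in `P false` and the sets
with codes in `P true`. -/
def CSep (F : Bool → (ℕ → ℕ) → Set N) (P : Bool → Set (ℕ → ℕ)) : Prop :=
  ∃ C : Set (Set N), C.Countable ∧ ∀ g ∈ P false, ∀ h ∈ P true,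
    ∃ c ∈ C, (F false g \ c).Finite ∧ (F true h ∩ c).Finite

section CSep

variable {F : Bool → (ℕ → ℕ) → Set N} {P : Bool → Set (ℕ → ℕ)}

theorem cSep_of_subset_iUnion {κ : Type*} [Countable κ] (o : Bool) {Q : κ → Set (ℕ → ℕ)}
    (hPQ : P o ⊆ ⋃ i, Q i) (h : ∀ i, CSep F (Function.update P o (Q i))) : CSep F P := by
  choose C hC h using h
  refine ⟨⋃ i, C i, countable_iUnion hC, fun g hg g' hg' => ?_⟩
  cases o
  · obtain ⟨i, hi⟩ := mem_iUnion.1 (hPQ hg)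
    obtain ⟨c, hc, hsep⟩ := h i g (by simpa using hi) g' (by simpa using hg')
    exact ⟨c, mem_iUnion_of_mem i hc, hsep⟩
  · obtain ⟨i, hi⟩ := mem_iUnion.1 (hPQ hg')
    obtain ⟨c, hc, hsep⟩ := h i g (by simpa using hg) g' (by simpa using hi)
    exact ⟨c, mem_iUnion_of_mem i hc, hsep⟩

theorem exists_not_cSep_update (h : ¬ CSep F P) (o : Bool) {κ : Type*} [Countable κ]
    {Q : κ → Set (ℕ → ℕ)} (hPQ : P o ⊆ ⋃ i, Q i) : ∃ i, ¬ CSep F (Function.update P o (Q i)) := by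
  by_contra! hcon
  exact h (cSep_of_subset_iUnion o hPQ hcon)

theorem nonempty_of_not_cSep (h : ¬ CSep F P) (o : Bool) : (P o).Nonempty := by
  by_contra hP
  obtain ⟨i, -⟩ := exists_not_cSep_update h o (κ := Empty) (Q := fun _ => ∅)
    (by simp [not_nonempty_iff_eq_empty.1 hP])
  exact i.elim

theorem exists_not_cSep_fix (h : ¬ CSep F P) (n : ℕ) :
    ∃ P' ≤ P, (∀ o, ∀ g ∈ P' o, ∀ g' ∈ P' o, g n = g' n) ∧ ¬ CSep F P' := by
  have hcover (Q : Set (ℕ → ℕ)) : Q ⊆ ⋃ i, {g ∈ Q | g n = i} := fun g hg =>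
    mem_iUnion.2 ⟨g n, hg, rfl⟩
  obtain ⟨i, hi⟩ := exists_not_cSep_update h false (hcover _)
  obtain ⟨j, hj⟩ := exists_not_cSep_update hi true (hcover _)
  refine ⟨_, fun o g hg => ?_, fun o g hg g' hg' => ?_, hj⟩
  · cases o
    exacts [hg.1, hg.1]
  · cases o
    exacts [hg.2.trans hg'.2.symm, hg.2.trans hg'.2.symm]

/-- If every point outside `E` could be discarded from one of the two sides, then the points
discardable from the `false` side would themselves separate what is left. -/
theorem exists_point_not_cSep [Countable N] (h : ¬ CSep F P) {E : Set N} (hE : E.Finite) :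
    ∃ p ∉ E, ∀ o, ¬ CSep F (Function.update P o {g ∈ P o | p ∈ F o g}) := by
  by_contra! hcon
  let D (o : Bool) : Set N := {p | CSep F (Function.update P o {g ∈ P o | p ∈ F o g})}
  have hD (p : N) (hpE : p ∉ E) : p ∈ D false ∨ p ∈ D true := by
    obtain ⟨_ | _, ho⟩ := hcon p hpE
    exacts [.inl ho, .inr ho]
  have hrest (o : Bool) : ∃ C : Set (Set N), C.Countable ∧ ∀ g ∈ P false, ∀ h ∈ P true,
      (∃ p ∈ D o, p ∈ F o (bif o then h else g)) →
        ∃ c ∈ C, (F false g \ c).Finite ∧ (F true h ∩ c).Finite := by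
    obtain ⟨C, hC, hsep⟩ : CSep F (Function.update P o (⋃ p : D o, {g ∈ P o | p.1 ∈ F o g})) :=
      cSep_of_subset_iUnion o (Q := fun p : D o => {g ∈ P o | p.1 ∈ F o g}) (by simp)
        fun p => by rw [Function.update_idem]; exact p.2
    refine ⟨C, hC, fun g hg g' hg' ⟨p, hpD, hp⟩ => ?_⟩
    cases o
    · exact hsep g (by simpa using ⟨hg, p, hpD, hp⟩) g' (by simpa using hg')
    · exact hsep g (by simpa using hg) g' (by simpa using ⟨hg', p, hpD, hp⟩)
  choose C hC hsep using hrest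
  refine h ⟨insert (D true) (⋃ o, C o), (countable_iUnion hC).insert _, fun g hg g' hg' => ?_⟩
  by_cases hmeet : ∃ o, ∃ p ∈ D o, p ∈ F o (bif o then g' else g)
  · obtain ⟨o, ho⟩ := hmeet
    obtain ⟨c, hc, hfin⟩ := hsep o g hg g' hg' ho
    exact ⟨c, .inr (mem_iUnion_of_mem o hc), hfin⟩
  · push Not at hmeet
    refine ⟨D true, .inl rfl, hE.subset fun p hp => ?_, finite_empty.subset fun p hp => ?_⟩
    · by_contra hpE
      exact (hD p hpE).elim (fun h => hmeet false p h hp.1) hp.2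
    · exact hmeet true p hp.2 hp.1

end CSep

theorem exists_chains_of_not_cSep [Countable N] {Γ : Bool → Set (Set N)}
    {F : Bool → (ℕ → ℕ) → Set N} (hF : ∀ o, Coding (Γ o) (F o)) (h : ¬ CSep F fun _ => univ) :
    ∃ u : List Bool → N, (∀ i s t, (i :: s) <:+ t → u t ≠ u s) ∧
      ∀ o, ∀ t : ℕ → List Bool, (∀ k, (o :: t k) <:+ t (k + 1)) → ∃ y ∈ Γ o, ∀ k, u (t k) ∈ y := by
  have hstep (n : ℕ) (S : {S : (Bool → Set (ℕ → ℕ)) × Finset N // ¬ CSep F S.1}) :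
      ∃ p ∉ S.1.2, ∀ o, ∃ P' : Bool → Set (ℕ → ℕ), ¬ CSep F P' ∧ P' ≤ S.1.1 ∧
        (∀ g ∈ P' o, p ∈ F o g) ∧ ∀ i, ∀ g ∈ P' i, ∀ g' ∈ P' i, g n = g' n := by
    obtain ⟨p, hp, hpo⟩ := exists_point_not_cSep S.2 S.1.2.finite_toSet
    refine ⟨p, hp, fun o => ?_⟩
    obtain ⟨P', hle, hfix, hP'⟩ := exists_not_cSep_fix (hpo o) n
    refine ⟨P', hP', hle.trans ?_, fun g hg => ?_, hfix⟩
    · exact update_le_self_iff.2 fun g hg => hg.1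
    · exact (by simpa using hle o : P' o ⊆ {g ∈ S.1.1 o | p ∈ F o g}) hg |>.2
  choose p hp P' hP' hle hmem hfix using hstep
  classical
  let S : List Bool → {S : (Bool → Set (ℕ → ℕ)) × Finset N // ¬ CSep F S.1} :=
    List.rec ⟨(fun _ => univ, ∅), h⟩ fun o s S =>
      ⟨(P' s.length S o, insert (p s.length S) S.1.2), hP' s.length S o⟩
  have hcode (i : Bool) : IsCodeTree fun s => (S s).1.1 i :=
    ⟨fun s => nonempty_of_not_cSep (S s).2 i, fun o s => hle s.length (S s) o i,
      fun o s => hfix s.length (S s) o i⟩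
  have hused {s t : List Bool} (hst : s <:+ t) : (S s).1.2 ⊆ (S t).1.2 :=
    rel_of_suffix (· ⊆ ·) (f := fun s => (S s).1.2) (fun _ _ => Finset.subset_insert _ _) hst
  refine ⟨fun s => p s.length (S s), fun o s t hst (e : p _ (S t) = p _ (S s)) => ?_,
    fun o t ht => ?_⟩
  · exact hp t.length (S t) (e ▸ hused hst (Finset.mem_insert_self _ _))
  · exact (hF o).exists_mem_of_chain (hcode o) (fun k => ⟨o, ht k⟩) fun k g hg =>
      hmem _ _ o g ((hcode o).subset_of_suffix (ht k) hg)

/-! ### Copies of the binary tree -/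

/-- The nodes `s` and `t` split at some node, `s` going in the direction `o`. -/
def Split (o : Bool) (s t : List Bool) : Prop := ∃ ζ, (o :: ζ) <:+ s ∧ ((!o) :: ζ) <:+ t

theorem eq_of_cons_suffix {α : Type*} {i j : α} {ζ t : List α} (h : (i :: ζ) <:+ t)
    (h' : (j :: ζ) <:+ t) : i = j :=
  (List.cons.inj ((List.suffix_of_suffix_length_le h h' (by simp)).eq_of_length (by simp))).1

theorem suffix_of_cons_suffix {α : Type*} {i j : α} {ζ ξ t : List α} (h : (i :: ζ) <:+ t)
    (h' : (j :: ξ) <:+ t) (hl : ζ.length < ξ.length) : (i :: ζ) <:+ ξ :=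
  List.suffix_of_suffix_length_le h ((List.suffix_cons _ _).trans h') (by simpa using hl)

theorem Split.not_suffix {o : Bool} {s t : List Bool} : Split o s t → ¬ s <:+ t :=
  fun ⟨_, hs, ht⟩ hst => by simpa using eq_of_cons_suffix (hs.trans hst) ht

theorem Split.symm {o : Bool} {s t : List Bool} : Split o s t → Split (!o) t s :=
  fun ⟨ζ, hs, ht⟩ => ⟨ζ, ht, by simpa using hs⟩

theorem Split.trans {o : Bool} {r s t : List Bool} : Split o r s → Split o s t → Split o r t := by
  rintro ⟨ζ, hr, hs⟩ ⟨ξ, hs', ht⟩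
  rcases lt_trichotomy ζ.length ξ.length with hl | hl | hl
  · exact ⟨ζ, hr, (suffix_of_cons_suffix hs hs' hl).trans ((List.suffix_cons _ _).trans ht)⟩
  · simpa using (List.suffix_of_suffix_length_le hs hs' (by simp [hl])).eq_of_length (by simp [hl])
  · exact ⟨ξ, (suffix_of_cons_suffix hs' hs hl).trans ((List.suffix_cons _ _).trans hr), ht⟩

theorem comparable_or_split (s t : List Bool) :
    s = t ∨ (∃ i, (i :: s) <:+ t) ∨ (∃ i, (i :: t) <:+ s) ∨ ∃ o, Split o s t := by
  induction s with
  | nil =>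
    exact (eq_or_exists_cons_suffix t.nil_suffix).imp Eq.symm .inl
  | cons i s ih =>
    rcases ih with rfl | ⟨j, hj⟩ | ⟨j, hj⟩ | ⟨o, ζ, hs, ht⟩
    · exact .inr (.inr (.inl ⟨i, List.suffix_rfl⟩))
    · obtain rfl | rfl := Bool.eq_or_eq_not j i
      · exact (eq_or_exists_cons_suffix hj).imp Eq.symm .inl
      · exact .inr (.inr (.inr ⟨i, s, List.suffix_rfl, hj⟩))
    · exact .inr (.inr (.inl ⟨j, hj.trans (List.suffix_cons _ _)⟩))
    · exact .inr (.inr (.inr ⟨o, ζ, hs.trans (List.suffix_cons _ _), ht⟩))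

/-- An embedding of the binary tree into itself. Nodes are lists with the root at the end. -/
structure Copy where
  toFun : List Bool → List Bool
  cons_suffix' : ∀ i η, (i :: toFun η) <:+ toFun (i :: η)

namespace Copy

instance : CoeFun Copy fun _ => List Bool → List Bool := ⟨Copy.toFun⟩

/-- The set of nodes of a copy. Copies are ordered by the inclusion of their sets of nodes. -/
def nodes (φ : Copy) : Set (List Bool) := range φ

instance : Preorder Copy := .lift nodes

theorem apply_mem (φ : Copy) (η : List Bool) : φ η ∈ φ.nodes := ⟨η, rfl⟩

theorem suffix (φ : Copy) {s t : List Bool} (h : s <:+ t) : φ s <:+ φ t :=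
  rel_of_suffix (· <:+ ·) (fun i s => (List.suffix_cons i _).trans (φ.cons_suffix' i s)) h

theorem cons_suffix (φ : Copy) {i : Bool} {s t : List Bool} (h : (i :: s) <:+ t) :
    (i :: φ s) <:+ φ t := (φ.cons_suffix' i s).trans (φ.suffix h)

theorem split (φ : Copy) {o : Bool} {s t : List Bool} : Split o s t → Split o (φ s) (φ t) :=
  fun ⟨ζ, hs, ht⟩ => ⟨φ ζ, φ.cons_suffix hs, φ.cons_suffix ht⟩

theorem suffix_iff (φ : Copy) {s t : List Bool} : φ s <:+ φ t ↔ s <:+ t := by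
  refine ⟨fun h => ?_, φ.suffix⟩
  rcases comparable_or_split s t with rfl | ⟨i, hi⟩ | ⟨i, hi⟩ | ⟨o, ho⟩
  · exact List.suffix_rfl
  · exact (List.suffix_cons i s).trans hi
  · exact absurd ((φ.cons_suffix hi).trans h).length_le (by simp)
  · exact absurd h (φ.split ho).not_suffix

theorem cons_suffix_iff (φ : Copy) {i : Bool} {s t : List Bool} :
    (i :: φ s) <:+ φ t ↔ (i :: s) <:+ t := by
  refine ⟨fun h => ?_, φ.cons_suffix⟩
  obtain rfl | ⟨j, hj⟩ :=
    eq_or_exists_cons_suffix (φ.suffix_iff.1 ((List.suffix_cons _ _).trans h))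
  · exact absurd h.length_le (by simp)
  · rwa [eq_of_cons_suffix h (φ.cons_suffix hj)]

theorem split_iff (φ : Copy) {o : Bool} {s t : List Bool} :
    Split o (φ s) (φ t) ↔ Split o s t := by
  refine ⟨fun h => ?_, φ.split⟩
  rcases comparable_or_split s t with rfl | ⟨i, hi⟩ | ⟨i, hi⟩ | ⟨o', h'⟩
  · exact absurd List.suffix_rfl h.not_suffix
  · exact absurd (φ.suffix ((List.suffix_cons _ _).trans hi)) h.not_suffix
  · exact absurd (φ.suffix ((List.suffix_cons _ _).trans hi)) h.symm.not_suffix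
  · obtain rfl | rfl := Bool.eq_or_eq_not o' o
    · exact h'
    · exact absurd List.suffix_rfl (h.trans (by simpa using (φ.split h').symm)).not_suffix

/-- The composition of two copies. -/
def comp (φ ψ : Copy) : Copy := ⟨fun η => φ (ψ η), fun i η => φ.cons_suffix (ψ.cons_suffix' i η)⟩

theorem comp_le (φ ψ : Copy) : φ.comp ψ ≤ φ := range_subset_iff.2 fun η => φ.apply_mem (ψ η)

/-- The part of a copy above a node. -/
def cone (φ : Copy) (ν : List Bool) : Copy :=
  ⟨fun ξ => φ (ξ ++ ν), fun i ξ => φ.cons_suffix' i (ξ ++ ν)⟩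

theorem cone_le (φ : Copy) (ν : List Bool) : φ.cone ν ≤ φ :=
  range_subset_iff.2 fun _ => φ.apply_mem _

theorem mem_nodes_cone (φ : Copy) {ν ξ : List Bool} (h : ν <:+ ξ) : φ ξ ∈ (φ.cone ν).nodes := by
  obtain ⟨w, rfl⟩ := h
  exact (φ.cone ν).apply_mem w

theorem cons_suffix_of_mem_cone (φ : Copy) {i : Bool} {x : List Bool}
    (hx : x ∈ (φ.cone [i]).nodes) : (i :: φ []) <:+ x := by
  obtain ⟨ξ, rfl⟩ := hx
  exact φ.cons_suffix ⟨ξ, rfl⟩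

/-- The identical copy. -/
def id : Copy := ⟨fun η => η, fun _ _ => List.suffix_rfl⟩

theorem finite_inter_nodes (φ : Copy) {A : Set (List Bool)} (n : ℕ)
    (h : ∀ μ, μ.length = n → (A ∩ (φ.cone μ).nodes).Finite) : (A ∩ φ.nodes).Finite := by
  refine (((List.finite_length_le Bool n).image φ).union
    ((List.finite_length_eq Bool n).biUnion h)).subset ?_
  rintro _ ⟨hA, σ, rfl⟩
  by_cases hσ : σ.length ≤ n
  · exact .inl ⟨σ, hσ, rfl⟩
  · have hd : (σ.drop (σ.length - n)).length = n := by simp; omega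
    exact .inr (mem_biUnion hd ⟨hA, φ.mem_nodes_cone (List.drop_suffix _ _)⟩)

/-- The copy whose node `η` is the root of `T η`, for a tree `T` of copies. -/
def diag (T : List Bool → Copy) (hT : ∀ i η, T (i :: η) ≤ (T η).cone [i]) : Copy :=
  ⟨fun η => T η [], fun i η => (T η).cons_suffix_of_mem_cone (hT i η ((T _).apply_mem []))⟩

theorem cone_diag_le {T : List Bool → Copy} (hT : ∀ i η, T (i :: η) ≤ (T η).cone [i])
    (η : List Bool) : (diag T hT).cone η ≤ T η := by
  rintro _ ⟨ξ, rfl⟩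
  exact rel_of_suffix (· ≥ ·) (f := T)
    (fun i s => (hT i s).trans ((T s).cone_le [i])) ⟨ξ, rfl⟩ ((T (ξ ++ η)).apply_mem [])

theorem diag_le {T : List Bool → Copy} (hT : ∀ i η, T (i :: η) ≤ (T η).cone [i]) :
    diag T hT ≤ T [] := by
  rintro _ ⟨η, rfl⟩
  exact cone_diag_le hT [] (mem_nodes_cone _ η.nil_suffix)

theorem exists_fusion (φ : Copy) (R : ℕ → (Bool → Copy) → Prop)
    (h : ∀ n, ∀ g ≤ φ, ∃ G : Bool → Copy, (∀ i, G i ≤ g.cone [i]) ∧ R n G) :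
    ∃ φ' ≤ φ, ∀ η : List Bool, ∃ G, R η.length G ∧ ∀ i, φ'.cone (i :: η) ≤ G i := by
  choose! G hG hR using h
  let T : List Bool → Copy := List.rec φ fun i s g => G s.length g i
  have hle (η : List Bool) : T η ≤ φ := by
    induction η with
    | nil => exact le_rfl
    | cons i η ih => exact (hG _ _ ih i).trans ((cone_le _ _).trans ih)
  have hT (i : Bool) (η : List Bool) : T (i :: η) ≤ (T η).cone [i] := hG _ _ (hle η) i
  exact ⟨diag T hT, diag_le hT, fun η =>
    ⟨G η.length (T η), hR _ _ (hle η), fun i => cone_diag_le hT (i :: η)⟩⟩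

theorem exists_mono (χ : List Bool → Prop) : ∃ ψ : Copy, (∀ η, χ (ψ η)) ∨ ∀ η, ¬ χ (ψ η) := by
  by_cases h : ∀ ν, ∃ ξ, ν <:+ ξ ∧ χ ξ
  · choose e he hχ using h
    let f : List Bool → List Bool := List.rec (e []) fun i _ s => e (i :: s)
    refine ⟨⟨f, fun i η => he (i :: f η)⟩, .inl fun η => ?_⟩
    cases η with
    | nil => exact hχ _
    | cons i η => exact hχ _
  · push Not at h
    obtain ⟨ν, hν⟩ := h
    exact ⟨Copy.id.cone ν, .inr fun η => hν _ ⟨η, rfl⟩⟩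

end Copy

/-! ### Killing families on copies -/

theorem exists_le_forall_finite {α β : Type*} [Preorder β] {E : Set α} (hE : E.Finite)
    {p : α → β → Prop} (hp : ∀ a, Antitone (p a)) (φ : β)
    (h : ∀ a ∈ E, ∀ φ' ≤ φ, ∃ ψ ≤ φ', p a ψ) : ∃ ψ ≤ φ, ∀ a ∈ E, p a ψ := by
  induction E, hE using Set.Finite.induction_on with
  | empty => exact ⟨φ, le_rfl, by simp⟩
  | insert _ _ ih =>
    obtain ⟨φ', hφ', hE⟩ := ih fun a ha => h a (mem_insert_of_mem _ ha)
    obtain ⟨ψ, hψ, ha⟩ := h _ (mem_insert _ _) φ' hφ'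
    exact ⟨ψ, hψ.trans hφ', forall_mem_insert.2 ⟨ha, fun a haE => hp a hψ (hE a haE)⟩⟩

/-- All members of the family `D` are almost disjoint from the copy `φ`. -/
def Kills (D : Set (Set (List Bool))) (φ : Copy) : Prop := ∀ y ∈ D, (y ∩ φ.nodes).Finite

/-- The family `D` is not killed by passing to any smaller copy. -/
def Alive (D : Set (Set (List Bool))) (φ : Copy) : Prop := ∀ φ' ≤ φ, ¬ Kills D φ'

/-- The members of a family containing a given point. -/
def through (D : Set (Set N)) (x : N) : Set (Set N) := {y ∈ D | x ∈ y}

section Copy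

variable {D D' : Set (Set (List Bool))} {φ ψ g l : Copy}

theorem Kills.mono (h : Kills D φ) (hψ : ψ ≤ φ) : Kills D ψ := fun y hy =>
  (h y hy).subset (inter_subset_inter_right y hψ)

theorem Alive.mono (h : Alive D φ) (hD : D ⊆ D') : Alive D' φ := fun ψ hψ hk =>
  h ψ hψ fun y hy => hk y (hD hy)

theorem Alive.of_le (h : Alive D φ) (hψ : ψ ≤ φ) : Alive D ψ := fun χ hχ => h χ (hχ.trans hψ)

theorem exists_kills_of_not_alive (h : ¬ Alive D φ) : ∃ ψ ≤ φ, Kills D ψ := by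
  simpa only [Alive, not_forall, not_not, exists_prop] using h

theorem Alive.exists_of_iUnion {Q : ℕ → Set (Set (List Bool))} (h : Alive D φ)
    (hDQ : D ⊆ ⋃ n, Q n) : ∃ n, ∃ ψ ≤ φ, Alive (Q n) ψ := by
  by_contra! hcon
  obtain ⟨φ', hφ', hk⟩ := φ.exists_fusion (fun n G => ∀ i, Kills (Q n) (G i)) fun n g hg => by
    choose G hG hk using fun i => exists_kills_of_not_alive (hcon n _ ((g.cone_le [i]).trans hg))
    exact ⟨G, hG, hk⟩
  refine h φ' hφ' fun y hy => ?_
  obtain ⟨n, hn⟩ := mem_iUnion.1 (hDQ hy)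
  refine φ'.finite_inter_nodes (n + 1) fun μ hμ => ?_
  obtain ⟨i, η, rfl⟩ := List.exists_cons_of_length_eq_add_one hμ
  obtain ⟨G, hG, hle⟩ := hk η
  obtain rfl : η.length = n := by simpa using hμ
  exact ((hG i).mono (hle i)) y hn

/-- On no pair of smaller copies do all points of the first have the members of `D` through them
alive on the second. -/
def Barren (D : Set (Set (List Bool))) (g l : Copy) : Prop :=
  ∀ g' ≤ g, ∀ l' ≤ l, ∃ x ∈ g'.nodes, ¬ Alive (through D x) l'

theorem Barren.of_le {g' l' : Copy} (h : Barren D g l) (hg : g' ≤ g) (hl : l' ≤ l) :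
    Barren D g' l' := fun g'' hg'' l'' hl'' => h g'' (hg''.trans hg) l'' (hl''.trans hl)

theorem Barren.exists_kills {I : Set (List Bool)} (hI : I.Finite) {L : List Bool → Copy}
    (h : ∀ μ, Barren D g (L μ)) :
    ∃ g' ≤ g, ∃ L' ≤ L, ∀ μ ∈ I, Kills (through D (g' [])) (L' μ) := by
  obtain ⟨g', hg', hdead⟩ := exists_le_forall_finite hI
    (p := fun μ g' => ∀ x ∈ g'.nodes, ¬ Alive (through D x) (L μ))
    (fun μ φ ψ hle hψ x hx => hψ x (mem_of_subset_of_mem hle hx)) g fun μ _ g' hg' => by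
      obtain ⟨ψ, hψ | hψ⟩ := Copy.exists_mono fun η => Alive (through D (g' η)) (L μ)
      · obtain ⟨_, ⟨η, rfl⟩, hη⟩ := h μ _ ((g'.comp_le ψ).trans hg') _ le_rfl
        exact absurd (hψ η) hη
      · exact ⟨g'.comp ψ, g'.comp_le ψ, forall_mem_range.2 hψ⟩
  have hL (μ : List Bool) : ∃ l ≤ L μ, μ ∈ I → Kills (through D (g' [])) l := by
    by_cases hμ : μ ∈ I
    · obtain ⟨l, hl, hk⟩ := exists_kills_of_not_alive (hdead μ hμ _ (g'.apply_mem []))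
      exact ⟨l, hl, fun _ => hk⟩
    · exact ⟨_, le_rfl, fun h => absurd h hμ⟩
  choose L' hL' hk using hL
  exact ⟨g', hg', L', hL', hk⟩

theorem Barren.exists_forall_kills {I : Set (List Bool)} (hI : I.Finite) {G L : List Bool → Copy}
    (h : ∀ η μ, Barren D (G η) (L μ)) :
    ∃ G' ≤ G, ∃ L' ≤ L, ∀ η ∈ I, ∀ μ ∈ I, Kills (through D (G' η [])) (L' μ) := by
  obtain ⟨L', hL', hk⟩ := exists_le_forall_finite hI
    (p := fun η L' => ∃ g ≤ G η, ∀ μ ∈ I, Kills (through D (g [])) (L' μ))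
    (fun η L₂ L₁ hle hL₁ => hL₁.imp fun g hg => ⟨hg.1, fun μ hμ => (hg.2 μ hμ).mono (hle μ)⟩) L
    fun η _ L₁ hL₁ => by
      obtain ⟨g, hg, L₂, hL₂, hk⟩ := exists_kills hI fun μ => (h η μ).of_le le_rfl (hL₁ μ)
      exact ⟨L₂, hL₂, g, hg, hk⟩
  have hG (η : List Bool) : ∃ g ≤ G η, η ∈ I → ∀ μ ∈ I, Kills (through D (g [])) (L' μ) := by
    by_cases hη : η ∈ I
    · obtain ⟨g, hg, hk⟩ := hk η hη
      exact ⟨g, hg, fun _ => hk⟩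
    · exact ⟨_, le_rfl, fun h => absurd h hη⟩
  choose G' hG' hk using hG
  exact ⟨G', hG', L', hL', hk⟩

theorem Barren.exists_forall_nodes_kills (hb : Barren D g l) :
    ∃ g' ≤ g, ∃ l' ≤ l, ∀ x ∈ g'.nodes, Kills (through D x) l' := by
  let Stage := {S : (List Bool → Copy) × (List Bool → Copy) // ∀ η μ, Barren D (S.1 η) (S.2 μ)}
  have hstep (n : ℕ) (S : Stage) : ∃ S' ≤ S, ∀ η μ : List Bool, η.length = n → μ.length = n →
      Kills (through D (S'.1.1 η [])) (S'.1.2 μ) := by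
    obtain ⟨G, hG, L, hL, hk⟩ := Barren.exists_forall_kills (List.finite_length_eq Bool n) S.2
    exact ⟨⟨(G, L), fun η μ => (S.2 η μ).of_le (hG η) (hL μ)⟩, ⟨hG, hL⟩,
      fun η μ hη hμ => hk η hη μ hμ⟩
  choose next hnext hkill using hstep
  let branch (G : List Bool → Copy) (η : List Bool) : Copy := (G η.tail).cone [η.headD false]
  let S : ℕ → Stage := Nat.rec (next 0 ⟨(fun _ => g, fun _ => l), fun _ _ => hb⟩) fun n S =>
    next (n + 1) ⟨(branch S.1.1, branch S.1.2),
      fun _ _ => (S.2 _ _).of_le (Copy.cone_le _ _) (Copy.cone_le _ _)⟩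
  let G (η : List Bool) : Copy := (S η.length).1.1 η
  let L (η : List Bool) : Copy := (S η.length).1.2 η
  have hG (i : Bool) (η : List Bool) : G (i :: η) ≤ (G η).cone [i] := (hnext _ _).1 (i :: η)
  have hL (i : Bool) (η : List Bool) : L (i :: η) ≤ (L η).cone [i] := (hnext _ _).2 (i :: η)
  have hS (n : ℕ) (η μ : List Bool) (hη : η.length = n) (hμ : μ.length = n) :
      Kills (through D (G η [])) (L μ) := by
    simp only [G, L, hη, hμ]
    cases n <;> exact hkill _ _ η μ hη hμ
  refine ⟨Copy.diag _ hG, (Copy.diag_le hG).trans ((hnext 0 _).1 []),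
    Copy.diag _ hL, (Copy.diag_le hL).trans ((hnext 0 _).2 []), ?_⟩
  rintro _ ⟨η, rfl⟩ y hy
  exact Copy.finite_inter_nodes _ η.length fun μ hμ =>
    ((hS _ η μ rfl hμ).mono (Copy.cone_diag_le hL μ)) y hy

theorem exists_alive_or_kills (D : Set (Set (List Bool))) (g l : Copy) :
    ∃ g' ≤ g, ∃ l' ≤ l, (∀ x ∈ g'.nodes, Alive (through D x) l') ∨
      ∀ x ∈ g'.nodes, Kills (through D x) l' := by
  by_cases hb : Barren D g l
  · obtain ⟨g', hg', l', hl', hx⟩ := hb.exists_forall_nodes_kills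
    exact ⟨g', hg', l', hl', .inr hx⟩
  · simp only [Barren, not_forall, not_exists, not_and, not_not] at hb
    obtain ⟨g', hg', l', hl', hx⟩ := hb
    exact ⟨g', hg', l', hl', .inl hx⟩

end Copy

/-! ### Combs -/

/-- At each of its nodes, the members of `D` through any point in direction `o` are alive on the
other side. -/
def Fertile (o : Bool) (D : Set (Set (List Bool))) (φ : Copy) : Prop :=
  ∀ ζ, ∀ x ∈ (φ.cone (o :: ζ)).nodes, Alive (through D x) (φ.cone ((!o) :: ζ))

theorem Copy.cone_le_cone {φ ψ : Copy} (h : ψ ≤ φ) {η τ : List Bool} (hη : φ η = ψ τ) (i : Bool) :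
    ψ.cone (i :: τ) ≤ φ.cone (i :: η) := by
  rintro _ ⟨ξ, rfl⟩
  obtain ⟨σ, hσ⟩ := h (ψ.apply_mem (ξ ++ i :: τ))
  have hτ : (i :: φ η) <:+ φ σ := hσ ▸ hη ▸ ψ.cons_suffix ⟨ξ, rfl⟩
  exact mem_of_eq_of_mem hσ.symm (φ.mem_nodes_cone (φ.cons_suffix_iff.1 hτ))

theorem Fertile.of_le {o : Bool} {D : Set (Set (List Bool))} {φ ψ : Copy} (h : Fertile o D φ)
    (hψ : ψ ≤ φ) : Fertile o D ψ := fun ζ x hx => by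
  obtain ⟨η, hη⟩ := hψ (ψ.apply_mem ζ)
  exact (h η x (Copy.cone_le_cone hψ hη o hx)).of_le (Copy.cone_le_cone hψ hη (!o))

theorem exists_fertile_or_kills (o : Bool) (D : Set (Set (List Bool))) (φ : Copy) :
    ∃ ψ ≤ φ, Fertile o D ψ ∨
      ∀ ζ, ∀ x ∈ (ψ.cone (o :: ζ)).nodes, Kills (through D x) (ψ.cone ((!o) :: ζ)) := by
  obtain ⟨φ', hφ', hφ⟩ := φ.exists_fusion (fun _ G =>
    (∀ x ∈ (G o).nodes, Alive (through D x) (G !o)) ∨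
      ∀ x ∈ (G o).nodes, Kills (through D x) (G !o)) fun _ g _ => by
    obtain ⟨g', hg', l', hl', h⟩ := exists_alive_or_kills D (g.cone [o]) (g.cone [!o])
    refine ⟨Function.update (fun _ => l') o g', fun i => ?_, by simpa using h⟩
    obtain rfl | rfl := Bool.eq_or_eq_not i o
    exacts [by simpa using hg', by simpa using hl']
  have hcolour (η : List Bool) :
      (∀ x ∈ (φ'.cone (o :: η)).nodes, Alive (through D x) (φ'.cone ((!o) :: η))) ∨
      ∀ x ∈ (φ'.cone (o :: η)).nodes, Kills (through D x) (φ'.cone ((!o) :: η)) := by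
    obtain ⟨G, hG, hle⟩ := hφ η
    exact hG.imp (fun h x hx => (h x (hle o hx)).of_le (hle !o))
      fun h x hx => (h x (hle o hx)).mono (hle !o)
  obtain ⟨χ, hχ⟩ := Copy.exists_mono fun η =>
    ∀ x ∈ (φ'.cone (o :: η)).nodes, Alive (through D x) (φ'.cone ((!o) :: η))
  have hcone (i : Bool) (ζ : List Bool) : (φ'.comp χ).cone (i :: ζ) ≤ φ'.cone (i :: χ ζ) :=
    Copy.cone_le_cone (φ'.comp_le χ) rfl i
  exact ⟨φ'.comp χ, (φ'.comp_le χ).trans hφ',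
    hχ.imp (fun h ζ x hx => (h ζ x (hcone o ζ hx)).of_le (hcone (!o) ζ))
      fun h ζ x hx => ((hcolour _).resolve_left (h ζ) x (hcone o ζ hx)).mono (hcone (!o) ζ)⟩

theorem Alive.exists_fertile {o : Bool} {D : Set (Set (List Bool))} {φ : Copy} (h : Alive D φ)
    (hD : D ⊆ Almost (Split o)) : ∃ ψ ≤ φ, Fertile o D ψ := by
  obtain ⟨ψ, hψ, hf | hk⟩ := exists_fertile_or_kills o D φ
  · exact ⟨ψ, hψ, hf⟩
  refine absurd (fun y hy => ?_) (h ψ hψ)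
  by_contra hinf
  obtain ⟨_, hxy, τ, rfl⟩ := (not_finite.1 hinf).nonempty
  have hτ : {ζ | ζ <:+ τ}.Finite := τ.tails.finite_toSet.subset fun ζ => (List.mem_tails ζ τ).2
  refine hinf (((hD hy _ hxy).union (hτ.biUnion (t := fun ζ =>
    {x ∈ y | (o :: ζ) <:+ τ ∧ x ∈ (ψ.cone ((!o) :: ζ)).nodes}) fun ζ _ => ?_)).subset ?_)
  · by_cases hζ : (o :: ζ) <:+ τ
    · exact (hk ζ _ (ψ.mem_nodes_cone hζ) y ⟨hy, hxy⟩).subset fun x hx => ⟨hx.1, hx.2.2⟩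
    · exact finite_empty.subset fun x hx => hζ hx.2.1
  · rintro _ ⟨hσy, σ, rfl⟩
    by_cases hs : Split o (ψ τ) (ψ σ)
    · obtain ⟨ζ, hζτ, hζσ⟩ := ψ.split_iff.1 hs
      exact .inr (mem_biUnion ((List.suffix_cons _ _).trans hζτ)
        ⟨hσy, hζτ, ψ.mem_nodes_cone hζσ⟩)
    · exact .inl ⟨hσy, hs⟩

theorem exists_strictMono_forall_rel {α κ : Type*} [Finite κ] {r : κ → α → α → Prop}
    [∀ c, IsTrans α (r c)] {t : ℕ → α} (h : ∀ m n, m < n → ∃ c, r c (t m) (t n)) :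
    ∃ c, ∃ g : ℕ → ℕ, StrictMono g ∧ ∀ m n, m < n → r c (t (g m)) (t (g n)) := by
  by_contra! hcon
  have havoid {E : Set κ} (hE : E.Finite) : ∃ g : ℕ → ℕ, StrictMono g ∧
      ∀ c ∈ E, ∀ m n, m < n → ¬ r c (t (g m)) (t (g n)) := by
    induction E, hE using Set.Finite.induction_on with
    | empty => exact ⟨id, strictMono_id, by simp⟩
    | @insert c _ _ _ ih =>
      obtain ⟨g, hg, hr⟩ := ih
      obtain ⟨g', hc | hc⟩ := exists_increasing_or_nonincreasing_subseq (r c) (t ∘ g)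
      · obtain ⟨m, n, hmn, hnot⟩ := hcon c _ (hg.comp g'.strictMono)
        exact absurd (hc m n hmn) hnot
      · exact ⟨_, hg.comp g'.strictMono, forall_mem_insert.2
          ⟨hc, fun c hcE m n hmn => hr c hcE _ _ (g'.strictMono hmn)⟩⟩
  obtain ⟨g, hg, hnot⟩ := havoid finite_univ
  obtain ⟨c, hc⟩ := h _ _ (hg zero_lt_one)
  exact hnot c trivial 0 1 zero_lt_one hc

theorem range_mem_almost {R : N → N → Prop} {t : ℕ → N} (h : ∀ m n, m < n → R (t m) (t n)) :
    range t ∈ Almost R := by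
  rintro _ ⟨m, rfl⟩
  refine ((finite_Iic m).image t).subset ?_
  rintro _ ⟨⟨n, rfl⟩, hn⟩
  exact mem_image_of_mem t (not_lt.1 fun hmn => hn (h m n hmn))

theorem exists_chain_or_comb {y : Set (List Bool)} (hy : y.Infinite) :
    (∃ o, ∃ t : ℕ → List Bool, (∀ k, (o :: t k) <:+ t (k + 1)) ∧ range t ⊆ y) ∨
      ∃ o, ∃ z ⊆ y, z.Infinite ∧ z ∈ Almost (Split o) := by
  obtain ⟨t, hty, ht⟩ := exists_seq_of_forall_finset_exists (fun s => s ∈ y)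
    (fun s t => s.length < t.length) fun E _ => by
      obtain ⟨s, hs, hsE⟩ := (hy.sdiff (List.finite_length_le Bool (E.sup List.length))).nonempty
      exact ⟨s, hs, fun r hr => (Finset.le_sup (f := List.length) hr).trans_lt (not_le.1 hsE)⟩
  let r : Bool ⊕ Bool → List Bool → List Bool → Prop :=
    Sum.elim (fun o s t => (o :: s) <:+ t) Split
  have (c : Bool ⊕ Bool) : IsTrans (List Bool) (r c) := by
    refine ⟨fun _ _ _ h h' => ?_⟩
    cases c
    exacts [h.trans ((List.suffix_cons _ _).trans h'), Split.trans h h']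
  obtain ⟨o | o, g, hg, hr⟩ := exists_strictMono_forall_rel (r := r) (t := t) fun m n hmn => by
    rcases comparable_or_split (t m) (t n) with h | ⟨o, h⟩ | ⟨_, h⟩ | ⟨o, h⟩
    · exact absurd (congrArg List.length h) (ht m n hmn).ne
    · exact ⟨.inl o, h⟩
    · exact absurd ((List.suffix_cons _ _).trans h).length_le (ht m n hmn).not_ge
    · exact ⟨.inr o, h⟩
  · exact .inl ⟨o, t ∘ g, fun k => hr k _ k.lt_succ_self, range_subset_iff.2 fun k => hty _⟩
  · exact .inr ⟨o, range (t ∘ g), range_subset_iff.2 fun k => hty _,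
      infinite_range_of_injective (.of_comp (f := List.length)
        (StrictMono.injective fun m n hmn => ht _ _ (hg hmn))), range_mem_almost hr⟩

theorem Alive.exists_comb {D : Set (Set (List Bool))} {φ : Copy} (h : Alive D φ) (her : HerFam D)
    (hchain : ∀ y ∈ D, ∀ o, ∀ t : ℕ → List Bool, (∀ k, (o :: t k) <:+ t (k + 1)) →
      ¬ range t ⊆ y) : ∃ o, ∃ ψ ≤ φ, Alive (D ∩ Almost (Split o)) ψ := by
  by_contra! hcon
  obtain ⟨ψ, hψ, hk⟩ := exists_le_forall_finite (finite_univ (α := Bool))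
    (p := fun o ψ => Kills (D ∩ Almost (Split o)) ψ) (fun o _ _ hle hk => hk.mono hle) φ
    fun o _ ψ hψ => exists_kills_of_not_alive (hcon o ψ hψ)
  refine h ψ hψ fun y hy => not_infinite.1 fun hinf => ?_
  obtain ⟨o, t, ht, hty⟩ | ⟨o, z, hz, hzinf, hzo⟩ := exists_chain_or_comb hinf
  · exact hchain y hy o t ht (hty.trans inter_subset_left)
  · exact hzinf ((hk o trivial z ⟨her y hy z (hz.trans inter_subset_left) hzinf, hzo⟩).subset
      fun x hx => ⟨hx, (hz hx).2⟩)

/-! ### Columns of combs -/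

theorem Alive.nonempty {D : Set (Set (List Bool))} {φ : Copy} (h : Alive D φ) : D.Nonempty :=
  nonempty_iff_ne_empty.2 fun e => h φ le_rfl fun y hy => absurd hy (e ▸ notMem_empty y)

/-- A stage in the construction of columns. The columns still to be built lie in `copy`. Each
sequence in `live` comes from a column built so far: its `j`-th term consists of codes of sets
containing the `j`-th point of that column. -/
structure ColumnStage (F : (ℕ → ℕ) → Set (List Bool)) where
  copy : Copy
  live : Set (ℕ → Set (ℕ → ℕ))
  finite : live.Finite
  alive : ∀ r ∈ live, ∀ j, Alive (F '' r j) copy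

/-- The leftmost branch of `φ` above its root in direction `o`. -/
def column (φ : Copy) (o : Bool) (j : ℕ) : List Bool := φ (List.replicate j false ++ [o])

theorem cons_column_suffix (φ : Copy) (o : Bool) (j : ℕ) :
    (false :: column φ o j) <:+ column φ o (j + 1) := φ.cons_suffix' _ _

theorem injective_column {ψ : ℕ → Copy} {o : Bool} (h : ∀ n, ψ (n + 1) ≤ (ψ n).cone [!o]) :
    Function.Injective fun q : ℕ × ℕ => column (ψ q.1) o q.2 := by
  have hanti : Antitone ψ := antitone_nat_of_succ_le fun n => (h n).trans (Copy.cone_le _ _)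
  have hsplit {q q' : ℕ} (hq : q < q') (j j' : ℕ) :
      column (ψ q) o j ≠ column (ψ q') o j' := fun e => by
    have ho : (o :: ψ q []) <:+ column (ψ q) o j := (ψ q).cons_suffix ⟨_, rfl⟩
    have hno : ((!o) :: ψ q []) <:+ column (ψ q') o j' := (ψ q).cons_suffix_of_mem_cone
      (((hanti (Nat.succ_le_of_lt hq)).trans (h q)) ((ψ q').apply_mem _))
    exact absurd (eq_of_cons_suffix ho (e ▸ hno)) (by simp)
  rintro ⟨q, j⟩ ⟨q', j'⟩ e
  obtain rfl : q = q' := by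
    by_contra hne
    exact (lt_or_gt_of_ne hne).elim (fun h => hsplit h j j' e) fun h => hsplit h j' j e.symm
  have hmono : StrictMono fun j => (column (ψ q) o j).length :=
    strictMono_nat_of_lt_succ fun j => (cons_column_suffix (ψ q) o j).length_le
  exact congrArg (Prod.mk q) (hmono.injective (congrArg List.length e))

section Columns

variable {F : (ℕ → ℕ) → Set (List Bool)} {o : Bool}

theorem exists_fertile_fix (hF : ∀ g, F g ∈ Almost (Split o)) {P : Set (ℕ → ℕ)} {φ : Copy}
    (h : Alive (F '' P) φ) (n : ℕ) : ∃ ψ ≤ φ, ∃ Q ⊆ P,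
      (∀ g ∈ Q, ∀ g' ∈ Q, ∀ i ≤ n, g i = g' i) ∧ Fertile o (F '' Q) ψ := by
  let code (g : ℕ → ℕ) : ℕ := Encodable.encode fun i : Fin (n + 1) => g i
  obtain ⟨m, φ', hφ', hm⟩ := h.exists_of_iUnion (Q := fun m => F '' {g ∈ P | code g = m}) <| by
    rintro _ ⟨g, hg, rfl⟩
    exact mem_iUnion_of_mem (code g) (mem_image_of_mem F ⟨hg, rfl⟩)
  obtain ⟨ψ, hψ, hf⟩ := hm.exists_fertile (image_subset_iff.2 fun g _ => hF g)
  refine ⟨ψ, hψ.trans hφ', _, sep_subset _ _, fun g hg g' hg' i hi => ?_, hf⟩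
  exact congrFun (Encodable.encode_injective (hg.2.trans hg'.2.symm)) ⟨i, Nat.lt_succ_of_le hi⟩

theorem ColumnStage.exists_next (hF : ∀ g, F g ∈ Almost (Split o)) (S : ColumnStage F) (n : ℕ) :
    ∃ ψ ≤ S.copy, ∃ S' : ColumnStage F, S'.copy = ψ.cone [!o] ∧ S.live ⊆ S'.live ∧
      ∀ r ∈ S.live, ∀ j ≤ n, ∃ r' ∈ S'.live, ∀ i,
        r' i ⊆ {g ∈ r j | column ψ o i ∈ F g} ∧
        ∀ g ∈ r' i, ∀ g' ∈ r' i, ∀ k ≤ n, g k = g' k := by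
  obtain ⟨ψ, hψ, hE⟩ := exists_le_forall_finite (S.finite.prod (finite_Iic n))
    (p := fun e ψ => ∃ Q ⊆ e.1 e.2, (∀ g ∈ Q, ∀ g' ∈ Q, ∀ i ≤ n, g i = g' i) ∧
      Fertile o (F '' Q) ψ)
    (fun e _ _ hle h => h.imp fun Q hQ => ⟨hQ.1, hQ.2.1, hQ.2.2.of_le hle⟩) S.copy
    fun e he φ hφ => exists_fertile_fix hF ((S.alive e.1 he.1 e.2).of_le hφ) n
  choose! Q hQ hfix hfert using hE
  let sched (e : (ℕ → Set (ℕ → ℕ)) × ℕ) (i : ℕ) : Set (ℕ → ℕ) := {g ∈ Q e | column ψ o i ∈ F g}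
  refine ⟨ψ, hψ, ⟨ψ.cone [!o], S.live ∪ sched '' S.live ×ˢ Iic n,
    S.finite.union ((S.finite.prod (finite_Iic n)).image _), ?_⟩, rfl, subset_union_left,
    fun r hr j hj => ?_⟩
  swap
  · have he : (r, j) ∈ S.live ×ˢ Iic n := ⟨hr, hj⟩
    exact ⟨sched (r, j), .inr (mem_image_of_mem _ he), fun i =>
      ⟨fun g hg => ⟨hQ _ he hg.1, hg.2⟩, fun g hg g' hg' => hfix _ he g hg.1 g' hg'.1⟩⟩
  rintro r (hr | ⟨e, he, rfl⟩) j
  · exact (S.alive r hr j).of_le ((ψ.cone_le _).trans hψ)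
  · refine (hfert e he [] (column ψ o j) (ψ.mem_nodes_cone ⟨_, rfl⟩)).mono ?_
    rintro _ ⟨⟨g, hg, rfl⟩, hj⟩
    exact mem_image_of_mem F ⟨hg, hj⟩

theorem exists_columnStages (hF : ∀ g, F g ∈ Almost (Split o)) {φ : Copy}
    (h : Alive (F '' univ) φ) : ∃ (ψ : ℕ → Copy) (S : ℕ → ColumnStage F),
      (∀ n, ψ (n + 1) ≤ (ψ n).cone [!o]) ∧ Monotone (fun n => (S n).live) ∧
      (fun _ => univ) ∈ (S 0).live ∧ ∀ n, ∀ r ∈ (S n).live, ∀ j ≤ n, ∃ r' ∈ (S (n + 1)).live,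
        ∀ i, r' i ⊆ {g ∈ r j | column (ψ n) o i ∈ F g} ∧
          ∀ g ∈ r' i, ∀ g' ∈ r' i, ∀ k ≤ n, g k = g' k := by
  choose ψ hψ next hcopy hlive hnext using fun n S => ColumnStage.exists_next hF S n
  let S : ℕ → ColumnStage F := Nat.rec ⟨φ, {fun _ => univ}, finite_singleton _, fun r hr j => by
    rwa [mem_singleton_iff.1 hr]⟩ next
  exact ⟨fun n => ψ n (S n), S, fun n => (hψ (n + 1) (S (n + 1))).trans (hcopy n (S n)).le,
    monotone_nat_of_le_succ fun n => hlive n (S n), mem_singleton _, fun n => hnext n (S n)⟩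

theorem Coding.exists_columns {B : Set (Set (List Bool))} (hcode : Coding B F)
    (hF : ∀ g, F g ∈ Almost (Split o)) {φ : Copy} (h : Alive B φ) :
    ∃ X : ℕ × ℕ → List Bool, Function.Injective X ∧
      (∀ q j, (false :: X (q, j)) <:+ X (q, j + 1)) ∧
      ∀ p : ℕ → ℕ × ℕ, (∀ i, max (p i).1 (p i).2 < (p (i + 1)).1) → ∃ y ∈ B, ∀ i, X (p i) ∈ y := by
  obtain ⟨ψ, S, hψ, hmono, huniv, hnext⟩ :=
    exists_columnStages hF (h.mono fun y hy => image_univ ▸ hcode.surj y hy)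
  refine ⟨fun q => column (ψ q.1) o q.2, injective_column hψ,
    fun q j => cons_column_suffix (ψ q) o j, fun p hp => ?_⟩
  choose! T hT hTsub using hnext
  let E : ℕ → (ℕ → Set (ℕ → ℕ)) × ℕ := Nat.rec (fun _ => univ, 0)
    fun i e => (T (p i).1 e.1 e.2, (p i).2)
  have hlt (i : ℕ) : (p i).1 < (p (i + 1)).1 := (le_max_left _ _).trans_lt (hp i)
  have hidx : StrictMono fun i => (p i).1 := strictMono_nat_of_lt_succ hlt
  have hE (i : ℕ) : (E i).1 ∈ (S (p i).1).live ∧ (E i).2 ≤ (p i).1 := by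
    induction i with
    | zero => exact ⟨hmono (Nat.zero_le _) huniv, Nat.zero_le _⟩
    | succ i ih =>
      exact ⟨hmono (hlt i) (hT _ _ ih.1 _ ih.2), ((le_max_right _ _).trans_lt (hp i)).le⟩
  let P (i : ℕ) : Set (ℕ → ℕ) := (E i).1 (E i).2
  have hP (i : ℕ) : P (i + 1) ⊆ {g ∈ P i | column (ψ (p i).1) o (p i).2 ∈ F g} ∧
      ∀ g ∈ P (i + 1), ∀ g' ∈ P (i + 1), ∀ k ≤ (p i).1, g k = g' k :=
    hTsub _ _ (hE i).1 _ (hE i).2 _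
  obtain ⟨g, hg⟩ := exists_forall_mem_closure (P := fun i => P (i + 1))
    (antitone_nat_of_succ_le fun i g hg => ((hP (i + 1)).1 hg).1)
    (fun i => ((S _).alive _ (hE (i + 1)).1 _).nonempty.of_image)
    fun i g hg g' hg' k hk => (hP i).2 g hg g' hg' k (hk.le.trans hidx.le_apply)
  have hpt (i : ℕ) : column (ψ (p i).1) o (p i).2 ∈ F g :=
    closure_minimal (fun g hg => ((hP i).1 hg).2) (hcode.isClosed _) (hg i)
  exact ⟨F g, hcode.mem g ⟨_, hpt 0⟩, hpt⟩

end Columns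

section Chains

variable {Γ : ι → Set (Set (List Bool))} {a b : ι}

theorem nonSepOn_nodes (hchain : ∀ o, ∀ t : ℕ → List Bool, (∀ k, (o :: t k) <:+ t (k + 1)) →
    range t ∈ Γ (bif o then b else a)) (φ : Copy) : NonSepOn (Γ a) (Γ b) φ.nodes := by
  intro c d hc hd hfin
  obtain ⟨ψ, hψ⟩ := Copy.exists_mono fun η => φ η ∈ c
  let t (o : Bool) (k : ℕ) : List Bool := φ (ψ (List.replicate k o))
  have ht (o : Bool) (k : ℕ) : (o :: t o k) <:+ t o (k + 1) :=
    φ.cons_suffix (ψ.cons_suffix' o (List.replicate k o))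
  have hinf (o : Bool) : (range (t o)).Infinite := infinite_range_of_injective <|
    .of_comp (f := List.length) (IsChainSeq.strictMono_length fun k => ⟨o, ht o k⟩).injective
  have hnodes (o : Bool) : range (t o) ⊆ φ.nodes := range_subset_iff.2 fun k => φ.apply_mem _
  rcases hψ with hψ | hψ
  · refine hinf true (((hd _ (hchain true _ (ht true)) (hnodes true)).union hfin).subset ?_)
    rintro _ ⟨k, rfl⟩
    by_cases hk : t true k ∈ d
    exacts [.inr ⟨hψ _, hk⟩, .inl ⟨⟨k, rfl⟩, hk⟩]
  · refine hinf false ((hc _ (hchain false _ (ht false)) (hnodes false)).subset ?_)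
    rintro _ ⟨k, rfl⟩
    exact ⟨⟨k, rfl⟩, hψ _⟩

theorem exists_isolated_of_chains [Finite ι] (her : ∀ i, HerFam (Γ i))
    (orth : Pairwise fun i j => OrthFam (Γ i) (Γ j)) (ana : ∀ i, AnalyticFam (Γ i)) (hab : a ≠ b)
    (hchain : ∀ o, ∀ t : ℕ → List Bool, (∀ k, (o :: t k) <:+ t (k + 1)) →
      range t ∈ Γ (bif o then b else a)) : ∃ a b M, Isolated Γ a b M := by
  by_cases halive : ∃ k, k ≠ a ∧ k ≠ b ∧ ∃ φ, Alive (Γ k) φ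
  · obtain ⟨k, hka, hkb, φ, hφ⟩ := halive
    obtain ⟨o, ψ, -, hψ⟩ := hφ.exists_comb (her k) fun y hy o t ht hty => by
      have hk : (bif o then b else a) ≠ k := by cases o; exacts [hka.symm, hkb.symm]
      refine infinite_range_of_injective (.of_comp (f := List.length)
        (IsChainSeq.strictMono_length fun k => ⟨o, ht k⟩).injective) ?_
      simpa only [inter_eq_left.2 hty] using orth hk _ (hchain o t ht) y hy
    obtain ⟨F, hF⟩ := ((ana k).inter_almost (Split o)).exists_coding
    obtain ⟨X, hX, hcol, hfast⟩ := hF.exists_columns (fun g => by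
      rcases (F g).eq_empty_or_nonempty with h | h
      exacts [by rw [h]; exact fun _ hs => absurd hs (notMem_empty _), (hF.mem g h).2]) hψ
    refine ⟨a, k, range X, isolated_of_columns orth hka.symm X hX
      (fun q => hchain false _ (hcol q)) fun p hp => ?_⟩
    obtain ⟨y, hy, hpy⟩ := hfast p hp
    have hmono : StrictMono fun i => (p i).1 :=
      strictMono_nat_of_lt_succ fun i => (le_max_left _ _).trans_lt (hp i)
    exact her k y hy.1 _ (range_subset_iff.2 hpy)
      (infinite_range_of_injective (hX.comp (.of_comp (f := Prod.fst) hmono.injective)))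
  · push Not at halive
    obtain ⟨φ, -, hφ⟩ := exists_le_forall_finite (toFinite {k | k ≠ a ∧ k ≠ b})
      (p := fun k φ => Kills (Γ k) φ) (fun k _ _ hle hk => hk.mono hle) Copy.id
      fun k hk φ _ => exists_kills_of_not_alive (halive k hk.1 hk.2 φ)
    refine ⟨a, b, φ.nodes, hab, nonSepOn_nodes hchain φ, fun k hka hkb x hx => ?_⟩
    exact inter_comm x _ ▸ hφ k ⟨hka, hkb⟩ x hx

end Chains

theorem exists_isolated_of_not_cSep [Finite ι] [Countable N] {Γ : ι → Set (Set N)}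
    (her : ∀ i, HerFam (Γ i)) (orth : Pairwise fun i j => OrthFam (Γ i) (Γ j))
    (ana : ∀ i, AnalyticFam (Γ i)) {a b : ι} (hab : a ≠ b) {F : Bool → (ℕ → ℕ) → Set N}
    (hF : ∀ o, Coding (Γ (bif o then b else a)) (F o)) (h : ¬ CSep F fun _ => univ) :
    ∃ a b M, Isolated Γ a b M := by
  obtain ⟨u, hu, huchain⟩ := exists_chains_of_not_cSep hF h
  obtain ⟨a, b, S, hS⟩ := exists_isolated_of_chains (fun i => herFam_pullback u (Γ i))
    (fun i j hij => (orth hij).pullback u) (fun i => (ana i).pullback u) hab fun o t ht => by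
      have hlt {k l : ℕ} (hkl : k < l) : u (t l) ≠ u (t k) := by
        have htr : IsTrans (List Bool) fun s t => (o :: s) <:+ t :=
          ⟨fun _ _ _ h h' => h.trans ((List.suffix_cons _ _).trans h')⟩
        exact hu o _ _ (Nat.rel_of_forall_rel_succ_of_lt (fun s t => (o :: s) <:+ t) ht hkl)
      obtain ⟨y, hy, hty⟩ := huchain o t ht
      refine ⟨?_, y, hy, forall_mem_range.2 hty⟩
      rintro _ ⟨k, rfl⟩ _ ⟨l, rfl⟩ e
      obtain hkl | rfl | hkl := lt_trichotomy k l
      exacts [absurd e.symm (hlt hkl), rfl, absurd e (hlt hkl)]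
  exact ⟨a, b, _, hS.of_pullback her⟩

/-! ### Countable generation -/

/-- Countably many members of the ideal `I` almost contain all members of `B`. -/
def CountablyGeneratedIn (B I : Set (Set N)) : Prop :=
  ∃ C ⊆ I, C.Countable ∧ ∀ y ∈ B, ∃ c ∈ C, AlmostSub y c

section CountablyGeneratedIn

variable {A B B' I : Set (Set N)}

theorem CountablyGeneratedIn.mono (h : CountablyGeneratedIn B I) (hB : B' ⊆ B) :
    CountablyGeneratedIn B' I :=
  let ⟨C, hCI, hC, hBC⟩ := h
  ⟨C, hCI, hC, fun y hy => hBC y (hB hy)⟩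

theorem countablyGeneratedIn_iUnion {κ : Type*} [Countable κ] {D : κ → Set (Set N)}
    (h : ∀ i, CountablyGeneratedIn (D i) I) : CountablyGeneratedIn (⋃ i, D i) I := by
  choose C hCI hC hDC using h
  refine ⟨⋃ i, C i, iUnion_subset hCI, countable_iUnion hC, fun y hy => ?_⟩
  obtain ⟨i, hi⟩ := mem_iUnion.1 hy
  obtain ⟨c, hc, hyc⟩ := hDC i y hi
  exact ⟨c, mem_iUnion_of_mem i hc, hyc⟩

theorem exists_separating_set (hA : CountablyGeneratedIn A (orthFamC B))
    (hB : CountablyGeneratedIn B (orthFamC A)) :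
    ∃ T, (∀ x ∈ A, (x \ T).Finite) ∧ ∀ y ∈ B, (y ∩ T).Finite := by
  obtain ⟨D, hDB, hD, hAD⟩ := hA
  obtain ⟨C, hCA, hC, hBC⟩ := hB
  obtain ⟨f, hf⟩ := countable_iff_exists_injOn.1 hD
  obtain ⟨g, hg⟩ := countable_iff_exists_injOn.1 hC
  refine ⟨{p | ∃ d ∈ D, p ∈ d ∧ ∀ c ∈ C, g c ≤ f d → p ∉ c}, fun x hx => ?_, fun y hy => ?_⟩
  · obtain ⟨d, hd, hxd⟩ := hAD x hx
    have hfin : {c ∈ C | g c ≤ f d}.Finite :=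
      .of_injOn (fun c hc => hc.2) (hg.mono fun c hc => hc.1) (finite_Iic (f d))
    refine (hxd.union (hfin.biUnion fun c hc => hCA hc.1 x hx)).subset fun p ⟨hpx, hp⟩ => ?_
    by_cases hpd : p ∈ d
    · by_contra hcon
      refine hp ⟨d, hd, hpd, fun c hc hle hpc => hcon (.inr ?_)⟩
      exact mem_biUnion (show c ∈ {c ∈ C | g c ≤ f d} from ⟨hc, hle⟩) ⟨hpx, hpc⟩
    · exact .inl ⟨hpx, hpd⟩
  · obtain ⟨c, hc, hyc⟩ := hBC y hy
    have hfin : {d ∈ D | f d < g c}.Finite :=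
      .of_injOn (fun d hd => hd.2) (hf.mono fun d hd => hd.1) (finite_Iio (g c))
    refine (hyc.union (hfin.biUnion fun d hd => hDB hd.1 y hy)).subset ?_
    rintro p ⟨hpy, d, hd, hpd, hpC⟩
    by_cases hpc : p ∈ c
    · exact .inr (mem_biUnion (show d ∈ {d ∈ D | f d < g c} from
        ⟨hd, not_le.1 fun hle => hpC c hc hle hpc⟩) ⟨hpy, hpd⟩)
    · exact .inl ⟨hpy, hpc⟩

theorem exists_infinite_not_countablyGeneratedIn [Countable N]
    (h : ¬ CountablyGeneratedIn B (orthFamC A)) {G : Set N} (hG : ∀ y ∈ B, (y ∩ G).Finite) :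
    ∃ z ∈ A, {p ∈ z \ G | ¬ CountablyGeneratedIn (through B p) (orthFamC A)}.Infinite := by
  by_contra! hcon
  let S : Set N := {p | ¬ CountablyGeneratedIn (through B p) (orthFamC A)}
  obtain ⟨C, hCA, hC, hBC⟩ := countablyGeneratedIn_iUnion fun p : ↥Sᶜ => not_not.1 p.2
  refine h ⟨insert (S \ G) C, insert_subset (fun z hz => ?_) hCA, hC.insert _, fun y hy => ?_⟩
  · exact (hcon z hz).subset fun p hp => ⟨⟨hp.1, hp.2.2⟩, hp.2.1⟩
  · by_cases hyS : y ⊆ S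
    · refine ⟨S \ G, mem_insert _ _, (hG y hy).subset fun p hp => ⟨hp.1, ?_⟩⟩
      exact not_not.1 fun hpG => hp.2 ⟨hyS hp.1, hpG⟩
    · obtain ⟨p, hpy, hpS⟩ := not_subset.1 hyS
      obtain ⟨c, hc, hyc⟩ := hBC y (mem_iUnion.2 ⟨⟨p, hpS⟩, hy, hpy⟩)
      exact ⟨c, mem_insert_of_mem _ hc, hyc⟩

end CountablyGeneratedIn

/-! ### Splitting trees -/

/-- The immediate successors of the node `s`. -/
def successors (s : List ℕ) : Set (List ℕ) := range fun q => q :: s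

/-- The successors of each node belong to `A`, and the chains without the root to `B`. -/
structure IsSplitting (A B : Set (Set (List ℕ))) : Prop where
  successors_mem : ∀ s, successors s ∈ A
  chain_mem : ∀ t : ℕ → List ℕ, IsChainSeq t → range (fun k => t (k + 1)) ∈ B

theorem IsSplitting.mono {A A' B B' : Set (Set (List ℕ))} (h : IsSplitting A B) (hA : A ⊆ A')
    (hB : B ⊆ B') : IsSplitting A' B' :=
  ⟨fun s => hA (h.successors_mem s), fun t ht => hB (h.chain_mem t ht)⟩

theorem infinite_successors (s : List ℕ) : (successors s).Infinite :=
  infinite_range_of_injective fun _ _ h => (List.cons.inj h).1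

theorem IsSplitting.nonSepOn {A B : Set (Set (List ℕ))} (h : IsSplitting A B) (hA : HerFam A)
    {T : Set (List ℕ)} (hT : ∀ s, (successors s \ T).Finite) : NonSepOn A B T := by
  intro c d hc hd hfin
  have hnext (s : List ℕ) : ∃ q, q :: s ∈ T ∩ (c \ d) := by
    have hinf : (successors s ∩ T).Infinite := by
      simpa only [sdiff_sdiff_right_self] using (infinite_successors s).sdiff (hT s)
    have hmem := hA _ (h.successors_mem s) _ inter_subset_left hinf
    obtain ⟨_, ⟨⟨q, rfl⟩, hqT⟩, hq⟩ :=
      (hinf.sdiff ((hc _ hmem inter_subset_right).union hfin)).nonempty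
    have hqc : q :: s ∈ c := not_not.1 fun hqc => hq (.inl ⟨⟨⟨q, rfl⟩, hqT⟩, hqc⟩)
    exact ⟨q, hqT, hqc, fun hqd => hq (.inr ⟨hqc, hqd⟩)⟩
  choose e he using hnext
  let t : ℕ → List ℕ := Nat.rec [] fun _ s => e s :: s
  have ht : IsChainSeq t := fun k => ⟨e (t k), List.suffix_rfl⟩
  have hinj : Function.Injective fun k => t (k + 1) := ht.injective.comp (add_left_injective 1)
  refine infinite_range_of_injective hinj ((hd _ (h.chain_mem t ht) ?_).subset ?_)
  · exact range_subset_iff.2 fun k => (he (t k)).1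
  · exact range_subset_iff.2 fun k => ⟨mem_range_self k, (he (t k)).2.2⟩

theorem exists_tree_of_step {κ α : Type*} {p : α → Prop} {R : List κ → α → (κ → α) → Prop} {a : α}
    (ha : p a) (h : ∀ s a, p a → ∃ f, (∀ i, p (f i)) ∧ R s a f) :
    ∃ S : List κ → α, (∀ s, p (S s)) ∧ ∀ s, R s (S s) fun i => S (i :: s) := by
  choose f hf hR using h
  let S : List κ → {x // p x} := List.rec ⟨a, ha⟩ fun i s x => ⟨f s x.1 x.2 i, hf s x.1 x.2 i⟩
  exact ⟨fun s => (S s).1, fun s => (S s).2, fun s => hR s _ (S s).2⟩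

theorem IsChainSeq.cons_suffix_of_lt {α : Type*} {t : ℕ → List α} (ht : IsChainSeq t) {j k : ℕ}
    (h : j < k) : ∃ i, (i :: t j) <:+ t k := by
  obtain ⟨i, hi⟩ := ht j
  exact ⟨i, hi.trans (Nat.rel_of_forall_rel_succ_of_le (· <:+ ·) ht.suffix h)⟩

theorem IsChainSeq.exists_eq_cons {α : Type*} {t : ℕ → List α} (ht : IsChainSeq t) (k : ℕ) :
    ∃ i s, t (k + 1) = i :: s :=
  let ⟨_, hi⟩ := ht k
  List.exists_cons_of_ne_nil (hi.ne_nil (List.cons_ne_nil _ _))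

theorem isSplitting_pullback {A B : Set (Set N)} {u : List ℕ → N}
    (hsucc : ∀ s, ∃ z ∈ A, ∀ q, u (q :: s) ∈ z)
    (hchain : ∀ t, IsChainSeq t → ∃ y ∈ B, ∀ k, u (t (k + 1)) ∈ y)
    (hinj : ∀ s, Function.Injective fun q => u (q :: s))
    (hne : ∀ q s w, w ≠ [] → w <:+ s → u (q :: s) ≠ u w) :
    IsSplitting (pullback u A) (pullback u B) := by
  refine ⟨fun s => ?_, fun t ht => ?_⟩
  · obtain ⟨z, hz, huz⟩ := hsucc s
    exact ⟨Function.Injective.injOn_range (hinj s), z, hz, mapsTo_range_iff.2 huz⟩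
  · obtain ⟨y, hy, huy⟩ := hchain t ht
    refine ⟨Function.Injective.injOn_range (.of_lt_imp_ne fun j k hjk => ?_), y, hy,
      mapsTo_range_iff.2 huy⟩
    obtain ⟨q, s, hqs⟩ := ht.exists_eq_cons k
    obtain ⟨i, hi⟩ := ht.cons_suffix_of_lt (Nat.succ_lt_succ hjk)
    obtain ⟨j', v, hjv⟩ := ht.exists_eq_cons j
    have := hne q s (t (j + 1)) (hjv ▸ List.cons_ne_nil _ _)
      (suffix_of_cons_suffix_cons (hqs ▸ hi))
    simpa only [Function.comp_apply, hqs] using this.symm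

section Coding

variable [Countable N] {A B : Set (Set N)} {F : (ℕ → ℕ) → Set N}

theorem exists_points_not_countablyGeneratedIn {P : Set (ℕ → ℕ)} {G : Set N}
    (h : ¬ CountablyGeneratedIn (F '' P) (orthFamC A)) (hG : ∀ g ∈ P, (F g ∩ G).Finite) (n : ℕ) :
    ∃ (x : ℕ → N) (Q : ℕ → Set (ℕ → ℕ)), x.Injective ∧ (∃ z ∈ A, ∀ q, x q ∈ z) ∧
      ∀ q, x q ∉ G ∧ Q q ⊆ P ∧ (∀ g ∈ Q q, x q ∈ F g) ∧
        (∀ g ∈ Q q, ∀ g' ∈ Q q, g n = g' n) ∧ ¬ CountablyGeneratedIn (F '' Q q) (orthFamC A) := by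
  obtain ⟨z, hz, hinf⟩ := exists_infinite_not_countablyGeneratedIn h (forall_mem_image.2 hG)
  let x := hinf.natEmbedding
  have hfix (q : ℕ) : ∃ m, ¬ CountablyGeneratedIn
      (F '' {g ∈ P | (x q).1 ∈ F g ∧ g n = m}) (orthFamC A) := by
    by_contra! hcon
    refine (x q).2.2 ((countablyGeneratedIn_iUnion hcon).mono ?_)
    rintro _ ⟨⟨g, hg, rfl⟩, hx⟩
    exact mem_iUnion_of_mem (g n) (mem_image_of_mem F ⟨hg, hx, rfl⟩)
  choose m hm using hfix
  exact ⟨fun q => (x q).1, _, Subtype.val_injective.comp x.injective,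
    ⟨z, hz, fun q => (x q).2.1.1⟩, fun q => ⟨(x q).2.1.2, fun g hg => hg.1, fun g hg => hg.2.1,
      fun g hg g' hg' => hg.2.2.trans hg'.2.2.symm, hm q⟩⟩

theorem Coding.exists_isSplitting (hF : Coding B F) (h : ¬ CountablyGeneratedIn B (orthFamC A))
    {G : List ℕ → Set N} (hG : ∀ s, ∀ y ∈ B, (y ∩ G s).Finite) :
    ∃ u : List ℕ → N, IsSplitting (pullback u A) (pullback u B) ∧ ∀ q s, u (q :: s) ∉ G s := by
  classical
  have hFG (g : ℕ → ℕ) (s : List ℕ) (E : Finset N) : (F g ∩ (G s ∪ E)).Finite := by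
    rw [inter_union_distrib_left]
    refine .union ?_ (E.finite_toSet.inter_of_right _)
    rcases (F g).eq_empty_or_nonempty with h | h
    exacts [by simp [h], hG s _ (hF.mem g h)]
  obtain ⟨S, hS, hstep⟩ := exists_tree_of_step (a := ((univ : Set (ℕ → ℕ)), (∅ : Finset N)))
    (p := fun S => ¬ CountablyGeneratedIn (F '' S.1) (orthFamC A))
    (R := fun s S T => ∃ x : ℕ → N, x.Injective ∧ (∃ z ∈ A, ∀ q, x q ∈ z) ∧
      ∀ q, x q ∉ G s ∪ S.2 ∧ (T q).1 ⊆ S.1 ∧ (∀ g ∈ (T q).1, x q ∈ F g) ∧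
        (∀ g ∈ (T q).1, ∀ g' ∈ (T q).1, g s.length = g' s.length) ∧ (T q).2 = insert (x q) S.2)
    (fun hcon => h (hcon.mono fun y hy => by simpa using hF.surj y hy)) fun s S hS => by
      obtain ⟨x, Q, hx, hz, hQ⟩ := exists_points_not_countablyGeneratedIn hS
        (fun g _ => hFG g s S.2) s.length
      exact ⟨fun q => (Q q, insert (x q) S.2), fun q => (hQ q).2.2.2.2, x, hx, hz,
        fun q => ⟨(hQ q).1, (hQ q).2.1, (hQ q).2.2.1, (hQ q).2.2.2.1, rfl⟩⟩
  choose x hx hz hxG hsub hmem hfix hused using hstep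
  let u : List ℕ → N := fun w => x w.tail (w.headD 0)
  have hcode : IsCodeTree fun s => (S s).1 :=
    ⟨fun s => nonempty_iff_ne_empty.2 fun e => hS s ⟨∅, by simp [e]⟩, fun q s => hsub s q,
      fun q s => hfix s q⟩
  have hmono {s t : List ℕ} (h : s <:+ t) : (S s).2 ⊆ (S t).2 :=
    rel_of_suffix (· ⊆ ·) (f := fun s => (S s).2)
      (fun q s => (hused s q).symm ▸ Finset.subset_insert _ _) h
  refine ⟨u, isSplitting_pullback hz (fun t ht => hF.exists_mem_of_chain hcode ht fun k => ?_) hx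
    fun q s w hw hws e => hxG s q (.inr (hmono hws ?_)), fun q s h => hxG s q (.inl h)⟩
  · obtain ⟨q, s, hqs⟩ := ht.exists_eq_cons k
    rw [hqs]
    exact hmem s q
  · obtain ⟨r, v, rfl⟩ := List.exists_cons_of_ne_nil hw
    rw [show x s q = x v r from e, hused]
    exact Finset.mem_insert_self _ _

end Coding

/-! ### Homogeneous subtrees -/

open Filter

/-- A map of the tree of lists which respects strict extension and maps the successors of each node
injectively to successors of a node. -/
structure IsSubtree (φ : List ℕ → List ℕ) : Prop where
  column : ∀ s, ∃ t, MapsTo φ (successors s) (successors t) ∧ InjOn φ (successors s)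
  step : ∀ q s t, (q :: s) <:+ t → ∃ i, (i :: φ s) <:+ φ t

theorem IsSplitting.pullback {A B : Set (Set (List ℕ))} (h : IsSplitting A B)
    {φ : List ℕ → List ℕ} (hφ : IsSubtree φ) : IsSplitting (pullback φ A) (pullback φ B) := by
  refine ⟨fun s => ?_, fun t ht => ?_⟩
  · obtain ⟨t, hmaps, hinj⟩ := hφ.column s
    exact ⟨hinj, _, h.successors_mem t, hmaps⟩
  · have hφt : IsChainSeq (φ ∘ t) := fun k => let ⟨q, hq⟩ := ht k; hφ.step q _ _ hq
    have hinj : Function.Injective fun k => φ (t (k + 1)) :=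
      hφt.injective.comp (add_left_injective 1)
    exact ⟨Function.Injective.injOn_range hinj, _, h.chain_mem _ hφt,
      mapsTo_range_iff.2 mem_range_self⟩

theorem exists_isSubtree {τ : List ℕ → List ℕ} {r : List ℕ → ℕ → ℕ} (hr : ∀ s, (r s).Injective)
    (hτ : ∀ q s, (r s q :: τ s) <:+ τ (q :: s)) :
    ∃ φ, IsSubtree φ ∧ ∀ q s, φ (q :: s) = r s q :: τ s := by
  let φ : List ℕ → List ℕ := List.rec [] fun q s _ => r s q :: τ s
  have hφτ (s : List ℕ) : φ s <:+ τ s := by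
    cases s
    exacts [List.nil_suffix, hτ _ _]
  refine ⟨φ, ⟨fun s => ⟨τ s, ?_, ?_⟩, fun q s t hst => ?_⟩, fun q s => rfl⟩
  · exact mapsTo_range_iff.2 fun q => ⟨r s q, rfl⟩
  · rintro _ ⟨q, rfl⟩ _ ⟨q', rfl⟩ e
    exact congrArg (· :: s) (hr s (List.cons.inj e).1)
  · obtain ⟨q', t, rfl⟩ := List.exists_cons_of_ne_nil (hst.ne_nil (List.cons_ne_nil q s))
    have hsuff : φ s <:+ τ t := (hφτ s).trans (rel_of_suffix (· <:+ ·)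
      (fun q s => (List.suffix_cons _ _).trans (hτ q s)) (suffix_of_cons_suffix_cons hst))
    exact exists_cons_suffix_iff.2
      ⟨hsuff.trans (List.suffix_cons _ _), Nat.lt_succ_of_le hsuff.length_le⟩

/-- The `j`-th colour is constant on the nodes strictly above any node longer than `j`, and on the
nodes strictly above almost all successors of any node. -/
structure Homogeneous (κ : List ℕ → ℕ → Bool) : Prop where
  level : ∀ s, ∀ j < s.length, ∃ e, ∀ q t, (q :: s) <:+ t → κ t j = e
  tail : ∀ s j, ∃ e, ∀ᶠ q in atTop, ∀ r t, (r :: q :: s) <:+ t → κ t j = e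

section Persistent

variable {β : Type*} {E : Set β}

/-- Above `τ`, infinitely many successors of densely many nodes have their colour in `E`. -/
def Persistent (κ : List ℕ → β) (E : Set β) (τ : List ℕ) : Prop :=
  ∀ τ', τ <:+ τ' → ∃ t, τ' <:+ t ∧ {q | κ (q :: t) ∈ E}.Infinite

theorem Persistent.of_suffix {κ : List ℕ → β} {τ τ' : List ℕ} (h : Persistent κ E τ)
    (hτ : τ <:+ τ') : Persistent κ E τ' := fun σ hσ => h σ (hτ.trans hσ)

theorem Persistent.mono {κ : List ℕ → β} {E' : Set β} {τ : List ℕ} (h : Persistent κ E τ)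
    (hE : E ⊆ E') : Persistent κ E' τ := fun σ hσ =>
  let ⟨t, ht, hinf⟩ := h σ hσ
  ⟨t, ht, hinf.mono fun _ hq => hE hq⟩

theorem Persistent.exists_of_union {κ : List ℕ → β} {E' : Set β} {τ : List ℕ}
    (h : Persistent κ (E ∪ E') τ) : ∃ τ', τ <:+ τ' ∧ (Persistent κ E τ' ∨ Persistent κ E' τ') := by
  by_contra! hcon
  obtain ⟨τ₁, hτ₁, h₁⟩ : ∃ τ₁, τ <:+ τ₁ ∧ ∀ t, τ₁ <:+ t → {q | κ (q :: t) ∈ E}.Finite := by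
    simpa [Persistent] using (hcon τ List.suffix_rfl).1
  refine (hcon τ₁ hτ₁).2 fun τ' hτ' => ?_
  obtain ⟨t, ht, hinf⟩ := h τ' (hτ₁.trans hτ')
  exact ⟨t, ht, (infinite_union.1 hinf).resolve_left (not_infinite.2 (h₁ t (hτ'.trans ht)))⟩

theorem Persistent.exists_cylinder {κ : List ℕ → ℕ → Bool} {E : Set (ℕ → Bool)} {τ : List ℕ}
    (h : Persistent κ E τ) (n : ℕ) :
    ∃ ε τ', τ <:+ τ' ∧ Persistent κ (E ∩ PiNat.cylinder ε n) τ' := by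
  induction n with
  | zero => exact ⟨fun _ => false, τ, List.suffix_rfl, by simpa using h⟩
  | succ n ih =>
    obtain ⟨ε, τ₁, hτ₁, h₁⟩ := ih
    rw [← PiNat.iUnion_cylinder_update, inter_iUnion, ← iSup_eq_iUnion, iSup_bool_eq] at h₁
    obtain ⟨τ₂, hτ₂, h₂ | h₂⟩ := h₁.exists_of_union
    exacts [⟨_, τ₂, hτ₁.trans hτ₂, h₂⟩, ⟨_, τ₂, hτ₁.trans hτ₂, h₂⟩]

theorem Persistent.exists_step {κ : List ℕ → ℕ → Bool} {E : Set (ℕ → Bool)} {τ : List ℕ}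
    (h : Persistent κ E τ) (n : ℕ) :
    ∃ (t : List ℕ) (r : ℕ → ℕ) (T : ℕ → List ℕ) (ε : ℕ → ℕ → Bool),
      τ <:+ t ∧ r.Injective ∧ (∀ j, ∃ e, ∀ᶠ q in atTop, ε q j = e) ∧
      ∀ q, κ (r q :: t) ∈ E ∧ (r q :: t) <:+ T q ∧
        Persistent κ (E ∩ PiNat.cylinder (ε q) (n + q)) (T q) := by
  obtain ⟨t, ht, hinf⟩ := h τ List.suffix_rfl
  let r := hinf.natEmbedding
  choose ε T hT hP using fun q =>
    (h.of_suffix (ht.trans (List.suffix_cons (r q).1 t))).exists_cylinder (n + q)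
  obtain ⟨e, φ, hφ, hlim⟩ := CompactSpace.tendsto_subseq ε
  refine ⟨t, fun q => (r (φ q)).1, T ∘ φ, ε ∘ φ, ht,
    Subtype.val_injective.comp (r.injective.comp hφ.injective), fun j => ⟨e j, ?_⟩, fun q =>
    ⟨(r (φ q)).2, hT _, (hP (φ q)).mono (inter_subset_inter_right E ?_)⟩⟩
  · simpa only [nhds_discrete, tendsto_pure] using tendsto_pi_nhds.1 hlim j
  · exact PiNat.cylinder_anti _ (Nat.add_le_add_left (hφ.le_apply) n)

end Persistent

theorem exists_homogeneous (κ : List ℕ → ℕ → Bool) :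
    ∃ φ, IsSubtree φ ∧ Homogeneous (κ ∘ φ) := by
  have h₀ : Persistent κ univ [] := fun τ _ =>
    ⟨τ, List.suffix_rfl, by simpa using infinite_univ⟩
  obtain ⟨S, -, hstep⟩ := exists_tree_of_step (a := ([], univ))
    (p := fun S : List ℕ × Set (ℕ → Bool) => Persistent κ S.2 S.1)
    (R := fun s S T => ∃ (t : List ℕ) (r : ℕ → ℕ) (ε : ℕ → ℕ → Bool),
      S.1 <:+ t ∧ r.Injective ∧ (∀ j, ∃ e, ∀ᶠ q in atTop, ε q j = e) ∧
      ∀ q, κ (r q :: t) ∈ S.2 ∧ (r q :: t) <:+ (T q).1 ∧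
        (T q).2 = S.2 ∩ PiNat.cylinder (ε q) (s.length + 1 + q)) h₀ fun s S hS => by
      obtain ⟨t, r, T, ε, ht, hr, hε, hT⟩ := hS.exists_step (s.length + 1)
      exact ⟨fun q => (T q, _), fun q => (hT q).2.2, t, r, ε, ht, hr, hε,
        fun q => ⟨(hT q).1, (hT q).2.1, rfl⟩⟩
  choose τ r ε hSτ hr hε hκ hτS hcyl using hstep
  obtain ⟨φ, hφ, hφτ⟩ := exists_isSubtree hr fun q s => (hτS s q).trans (hSτ (q :: s))
  have hmem (q : ℕ) (s t : List ℕ) (hst : (q :: s) <:+ t) : κ (φ t) ∈ (S s).2 := by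
    obtain ⟨q', t, rfl⟩ := List.exists_cons_of_ne_nil (hst.ne_nil (List.cons_ne_nil q s))
    rw [hφτ]
    exact rel_of_suffix (f := fun s => (S s).2) (· ⊇ ·)
      (fun q s => (hcyl s q).trans_subset inter_subset_left) (suffix_of_cons_suffix_cons hst)
      (hκ t q')
  refine ⟨φ, hφ, fun s j hj => ?_, fun s j => ?_⟩
  · obtain ⟨q', s, rfl⟩ := List.exists_cons_of_length_pos (Nat.zero_lt_of_lt hj)
    refine ⟨ε s q' j, fun q t hst => ?_⟩
    have := hmem q _ t hst
    rw [hcyl] at this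
    exact this.2 j (by rw [List.length_cons] at hj; lia)
  · obtain ⟨e, he⟩ := hε s j
    refine ⟨e, ?_⟩
    filter_upwards [he, eventually_ge_atTop j] with q hq hjq r t hst
    have := hmem r _ t hst
    rw [hcyl] at this
    exact (this.2 j (by lia)).trans hq

/-! ### Isolation by homogeneous colours -/

/-- Two members of different families are told apart, up to finite sets, by one of the countably
many two-colourings `κ`. -/
def Separates (κ : N → ℕ → Bool) (Γ : ι → Set (Set N)) : Prop :=
  ∀ a b, a ≠ b → ∀ x ∈ Γ a, ∀ y ∈ Γ b,
    ∃ j, {p ∈ x | κ p j = false}.Finite ∧ {p ∈ y | κ p j = true}.Finite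

theorem Separates.pullback {κ : N → ℕ → Bool} {Γ : ι → Set (Set N)} (h : Separates κ Γ)
    (u : M → N) : Separates (κ ∘ u) fun i => pullback u (Γ i) := by
  rintro a b hab A ⟨hA, x, hx, hAx⟩ B ⟨hB, y, hy, hBy⟩
  obtain ⟨j, hxj, hyj⟩ := h a b hab x hx y hy
  refine ⟨j, .of_finite_image (hxj.subset ?_) (hA.mono (sep_subset _ _)),
    .of_finite_image (hyj.subset ?_) (hB.mono (sep_subset _ _))⟩
  · exact image_subset_iff.2 fun s hs => ⟨hAx hs.1, hs.2⟩
  · exact image_subset_iff.2 fun s hs => ⟨hBy hs.1, hs.2⟩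

section Tree

variable {Γ : ι → Set (Set (List ℕ))} {κ : List ℕ → ℕ → Bool} {a b : ι}

theorem IsChainSeq.eventually_eq_false {t : ℕ → List ℕ} (ht : IsChainSeq t) {j : ℕ}
    (h : {p ∈ range fun k => t (k + 1) | κ p j = true}.Finite) :
    ∀ᶠ k in cofinite, κ (t (k + 1)) j = false := by
  filter_upwards [(ht.injective.comp (add_left_injective 1)).tendsto_cofinite.eventually
    h.compl_mem_cofinite] with k hk
  exact Bool.eq_false_of_not_eq_true fun htrue => hk ⟨mem_range_self k, htrue⟩

theorem IsSplitting.isolated_univ (h : IsSplitting (Γ a) (Γ b)) (her : HerFam (Γ a))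
    (orth : Pairwise fun i j => OrthFam (Γ i) (Γ j)) (hab : a ≠ b) (hκ : Separates κ Γ)
    (htail : ∀ j, ∃ e, ∀ᶠ s in cofinite, ∀ q, κ (q :: s) j = e) : Isolated Γ a b univ := by
  refine ⟨hab, h.nonSepOn her (by simp), fun k hka hkb y hy => ?_⟩
  let t (m : ℕ) : List ℕ := List.replicate m 0
  have ht : IsChainSeq t := fun m => ⟨0, List.suffix_rfl⟩
  obtain ⟨j, hyj, htj⟩ := hκ k b hkb y hy _ (h.chain_mem t ht)
  obtain ⟨e, he⟩ := htail j
  obtain ⟨m, hm, hmj⟩ := ((ht.injective.tendsto_cofinite.eventually he).and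
    (ht.eventually_eq_false htj)).exists
  obtain rfl : e = false := (hm 0).symm.trans hmj
  rw [univ_inter]
  refine ((hyj.union (he.biUnion fun s _ => orth hka.symm _ (h.successors_mem s) y hy)).union
    (finite_singleton [])).subset fun w hw => ?_
  cases w with
  | nil => exact .inr rfl
  | cons q s =>
    by_cases hs : ∀ q, κ (q :: s) j = false
    · exact .inl (.inl ⟨hw, hs q⟩)
    · exact .inl (.inr (mem_biUnion hs ⟨mem_range_self q, hw⟩))

/-- The node `t` lies strictly above a successor `q :: s` of `s` with `q` large compared to `w`. -/
def Fan (s w t : List ℕ) : Prop := ∃ q ≥ Encodable.encode w, ∃ r, (r :: q :: s) <:+ t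

theorem finite_of_mem_almost_fan {s w : List ℕ} {y : Set (List ℕ)} (hy : y ∈ Almost (Fan s)) :
    (y ∩ {t | ¬ Fan s w t}).Finite := by
  by_cases hw : ∃ w' ∈ y, Encodable.encode w ≤ Encodable.encode w'
  · obtain ⟨w', hw', hle⟩ := hw
    exact (hy w' hw').subset fun t ht =>
      ⟨ht.1, fun ⟨q, hq, r, hr⟩ => ht.2 ⟨q, hle.trans hq, r, hr⟩⟩
  · push Not at hw
    exact .of_injOn (fun t ht => hw t ht.1) Encodable.encode_injective.injOn
      (finite_Iio (Encodable.encode w))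

theorem exists_isolated_of_fan (her : ∀ i, HerFam (Γ i))
    (orth : Pairwise fun i j => OrthFam (Γ i) (Γ j)) (ana : ∀ i, AnalyticFam (Γ i))
    (hκ : Separates κ Γ) (hom : Homogeneous κ) (ha : ∀ s, successors s ∈ Γ a) (hab : a ≠ b)
    {s : List ℕ}
    (h : ¬ CountablyGeneratedIn (Γ b ∩ Almost (Fan s)) (orthFamC (range successors))) :
    ∃ T, Isolated Γ a b T := by
  obtain ⟨F, hF⟩ := ((ana b).inter_almost (Fan s)).exists_coding
  obtain ⟨u, hu, hsu⟩ := hF.exists_isSplitting h (G := fun w => {t | ¬ Fan s w t})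
    fun w y hy => finite_of_mem_almost_fan hy.2
  have hsplit : IsSplitting (pullback u (Γ a)) (pullback u (Γ b)) :=
    hu.mono (pullback_mono u (range_subset_iff.2 ha)) (pullback_mono u inter_subset_left)
  refine ⟨_, (IsSplitting.isolated_univ (Γ := fun i => pullback u (Γ i)) hsplit
    (herFam_pullback u _) (fun i j hij => (orth hij).pullback u) hab (hκ.pullback u)
    fun j => ?_).of_pullback her⟩
  obtain ⟨e, he⟩ := hom.tail s j
  refine ⟨e, ?_⟩
  filter_upwards [(Encodable.encode_injective (α := List ℕ)).tendsto_cofinite.eventually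
    (Nat.cofinite_eq_atTop ▸ eventually_forall_ge_atTop.2 he)] with w hw q
  obtain ⟨q', hq', r, hr⟩ := not_not.1 (hsu q w)
  exact hw q' hq' r _ hr

theorem exists_chain_or_fan {y : Set (List ℕ)} (hy : y.Infinite)
    (hsucc : ∀ s, (successors s ∩ y).Finite) :
    (∃ t, IsChainSeq t ∧ ∀ k, {w ∈ y | t k <:+ w}.Infinite) ∨
      ∃ s, ∃ z ⊆ y, z.Infinite ∧ z ∈ Almost (Fan s) := by
  by_cases hbig : ∀ s, {w ∈ y | s <:+ w}.Infinite → ∃ q, {w ∈ y | (q :: s) <:+ w}.Infinite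
  · choose f hf using hbig
    let t : ℕ → {s // {w ∈ y | s <:+ w}.Infinite} :=
      Nat.rec ⟨[], by simpa using hy⟩ fun _ s => ⟨f s.1 s.2 :: s.1, hf s.1 s.2⟩
    exact .inl ⟨fun k => (t k).1, fun k => ⟨f _ (t k).2, List.suffix_rfl⟩, fun k => (t k).2⟩
  · push Not at hbig
    obtain ⟨s, hs, hsq⟩ := hbig
    refine .inr ⟨s, {w ∈ y | ∃ q r, (r :: q :: s) <:+ w}, sep_subset _ _, fun hfin => hs ?_,
      fun w _ => ?_⟩
    · refine ((hfin.union (hsucc s)).union (finite_singleton s)).subset fun w ⟨hwy, hw⟩ => ?_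
      obtain rfl | ⟨q, hq⟩ := eq_or_exists_cons_suffix hw
      · exact .inr rfl
      obtain rfl | ⟨r, hr⟩ := eq_or_exists_cons_suffix hq
      · exact .inl (.inr ⟨mem_range_self q, hwy⟩)
      · exact .inl (.inl ⟨hwy, q, r, hr⟩)
    · refine ((finite_Iio (Encodable.encode w)).biUnion fun q _ => hsq q).subset ?_
      rintro t ⟨⟨hty, q, r, hr⟩, ht⟩
      have hq : q < Encodable.encode w := not_le.1 fun hle => ht ⟨q, hle, r, hr⟩
      exact mem_biUnion hq ⟨hty, (List.suffix_cons _ _).trans hr⟩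

theorem Homogeneous.finite_of_chain {y : Set (List ℕ)} (hom : Homogeneous κ) {t : ℕ → List ℕ}
    (ht : IsChainSeq t) {j : ℕ} (hyj : {p ∈ y | κ p j = false}.Finite)
    (htj : {p ∈ range fun k => t (k + 1) | κ p j = true}.Finite) :
    ∃ k, {w ∈ y | t k <:+ w}.Finite := by
  obtain ⟨e, he⟩ := hom.level (t (j + 1)) j ht.strictMono_length.le_apply
  obtain ⟨m, hm, hjm⟩ := ((Nat.cofinite_eq_atTop ▸ ht.eventually_eq_false htj).and
    (eventually_gt_atTop j)).exists
  obtain ⟨i, hi⟩ := ht.cons_suffix_of_lt (Nat.succ_lt_succ hjm)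
  obtain rfl : e = false := (he i _ hi).symm.trans hm
  exact ⟨m + 1, hyj.subset fun w hw => ⟨hw.1, he i w (hi.trans hw.2)⟩⟩

theorem IsSplitting.exists_isolated_of_forall_fan [Countable ι] (h : IsSplitting (Γ a) (Γ b))
    (her : ∀ i, HerFam (Γ i)) (orth : Pairwise fun i j => OrthFam (Γ i) (Γ j)) (hab : a ≠ b)
    (hκ : Separates κ Γ) (hom : Homogeneous κ) (hfan : ∀ s, ∀ k ≠ a,
      CountablyGeneratedIn (Γ k ∩ Almost (Fan s)) (orthFamC (range successors))) :
    ∃ T, Isolated Γ a b T := by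
  obtain ⟨T, hsucc, hT⟩ := exists_separating_set
    (A := range successors) (B := ⋃ p : List ℕ × {k // k ≠ a}, Γ p.2 ∩ Almost (Fan p.1))
    ⟨range successors, range_subset_iff.2 fun s y hy => by
        obtain ⟨p, hp⟩ := mem_iUnion.1 hy
        exact inter_comm y _ ▸ orth p.2.2.symm _ (h.successors_mem s) y hp.1,
      countable_range _, fun y hy => ⟨y, hy, by simp [AlmostSub]⟩⟩
    (countablyGeneratedIn_iUnion fun p => hfan p.1 p.2 p.2.2)
  refine ⟨T, hab, h.nonSepOn (her a) (fun s => hsucc _ (mem_range_self s)),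
    fun k hka hkb y hy => ?_⟩
  by_contra hinf
  have hTy : T ∩ y ∈ Γ k := her k y hy _ inter_subset_right hinf
  rcases exists_chain_or_fan hinf fun s => orth hka.symm _ (h.successors_mem s) _ hTy with
    ⟨t, ht, hbig⟩ | ⟨s, z, hzy, hz, hzs⟩
  · obtain ⟨j, hyj, htj⟩ := hκ k b hkb _ hTy _ (h.chain_mem t ht)
    obtain ⟨m, hm⟩ := hom.finite_of_chain ht hyj htj
    exact hbig m hm
  · refine hz ((hT z (mem_iUnion.2 ⟨⟨s, k, hka⟩, her k _ hTy z hzy hz, hzs⟩)).subset fun w hw => ?_)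
    exact ⟨hw, (hzy hw).1⟩

end Tree

/-! ### Isolating two families -/

section Isolating

variable {Γ : ι → Set (Set N)} {a b : ι}

theorem exists_separates [Countable ι] {F : ι → (ℕ → ℕ) → Set N}
    (hF : ∀ i, Coding (Γ i) (F i))
    (h : ∀ a b, a ≠ b → CSep (fun o => F (bif o then b else a)) fun _ => univ) :
    ∃ κ, Separates κ Γ := by
  classical
  choose! C hC hsep using h
  let D : Set (Set N) := ⋃ p : {p : ι × ι // p.1 ≠ p.2}, C p.1.1 p.1.2
  have hD : D.Countable := countable_iUnion fun p => hC p.1.1 p.1.2 p.2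
  obtain ⟨c, hc⟩ := countable_iff_exists_subset_range.1 hD
  refine ⟨fun p j => decide (p ∈ c j), fun a b hab x hx y hy => ?_⟩
  obtain ⟨g, rfl⟩ := (hF a).surj x hx
  obtain ⟨g', rfl⟩ := (hF b).surj y hy
  obtain ⟨d, hd, hxd, hyd⟩ := hsep a b hab g (mem_univ g) g' (mem_univ g')
  obtain ⟨j, rfl⟩ := hc (mem_iUnion.2 ⟨⟨(a, b), hab⟩, hd⟩)
  exact ⟨j, hxd.subset fun p hp => ⟨hp.1, of_decide_eq_false hp.2⟩,
    hyd.subset fun p hp => ⟨hp.1, of_decide_eq_true hp.2⟩⟩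

theorem NonSepOn.not_countablyGeneratedIn {A B : Set (Set N)} (h : NonSepOn A B univ) :
    ¬ CountablyGeneratedIn A (orthFamC B) ∨ ¬ CountablyGeneratedIn B (orthFamC A) := by
  by_contra! ⟨hA, hB⟩
  obtain ⟨T, hAT, hBT⟩ := exists_separating_set hA hB
  refine h T Tᶜ (fun x hx _ => hAT x hx) (fun y hy _ => ?_) (by simp)
  simpa only [sdiff_compl] using hBT y hy

theorem IsSplitting.exists_isolated [Countable ι] {Γ : ι → Set (Set (List ℕ))}
    {κ : List ℕ → ℕ → Bool} (h : IsSplitting (Γ a) (Γ b)) (her : ∀ i, HerFam (Γ i))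
    (orth : Pairwise fun i j => OrthFam (Γ i) (Γ j)) (ana : ∀ i, AnalyticFam (Γ i)) (hab : a ≠ b)
    (hκ : Separates κ Γ) : ∃ a b T, Isolated Γ a b T := by
  obtain ⟨φ, hφ, hom⟩ := exists_homogeneous κ
  let Δ (i : ι) := AnalyticGap.pullback φ (Γ i)
  have hΔ : IsSplitting (Δ a) (Δ b) := h.pullback hφ
  have her' (i : ι) : HerFam (Δ i) := herFam_pullback φ (Γ i)
  have orth' : Pairwise fun i j => OrthFam (Δ i) (Δ j) := fun i j hij => (orth hij).pullback φ
  suffices ∃ k T, Isolated Δ a k T from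
    let ⟨k, T, hT⟩ := this
    ⟨a, k, φ '' T, hT.of_pullback her⟩
  by_cases hfan : ∀ s, ∀ k ≠ a,
    CountablyGeneratedIn (Δ k ∩ Almost (Fan s)) (orthFamC (range successors))
  · exact ⟨b, hΔ.exists_isolated_of_forall_fan her' orth' hab (hκ.pullback φ) hom hfan⟩
  · push Not at hfan
    obtain ⟨s, k, hka, hk⟩ := hfan
    exact ⟨k, exists_isolated_of_fan her' orth' (fun i => (ana i).pullback φ) (hκ.pullback φ) hom
      hΔ.successors_mem hka.symm hk⟩

theorem exists_isolated_of_separates [Countable ι] [Countable N] (her : ∀ i, HerFam (Γ i))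
    (orth : Pairwise fun i j => OrthFam (Γ i) (Γ j)) (ana : ∀ i, AnalyticFam (Γ i)) (hab : a ≠ b)
    (h : ¬ CountablyGeneratedIn (Γ b) (orthFamC (Γ a))) {κ : N → ℕ → Bool} (hκ : Separates κ Γ) :
    ∃ a b M, Isolated Γ a b M := by
  obtain ⟨F, hF⟩ := (ana b).exists_coding
  obtain ⟨u, hu, -⟩ := hF.exists_isSplitting h (G := fun _ => ∅) (by simp)
  obtain ⟨a', b', T, hT⟩ := IsSplitting.exists_isolated (Γ := fun i => pullback u (Γ i)) hu
    (fun i => herFam_pullback u _) (fun i j hij => (orth hij).pullback u)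
    (fun i => (ana i).pullback u) hab (hκ.pullback u)
  exact ⟨a', b', _, hT.of_pullback her⟩

theorem exists_isolated [Finite ι] [Countable N] (her : ∀ i, HerFam (Γ i))
    (orth : Pairwise fun i j => OrthFam (Γ i) (Γ j)) (ana : ∀ i, AnalyticFam (Γ i)) (hab : a ≠ b)
    (h : NonSepOn (Γ a) (Γ b) univ) : ∃ a b M, Isolated Γ a b M := by
  choose F hF using fun i => (ana i).exists_coding
  by_cases hsep : ∀ a b, a ≠ b → CSep (fun o => F (bif o then b else a)) fun _ => univ
  · obtain ⟨κ, hκ⟩ := exists_separates hF hsep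
    rcases h.not_countablyGeneratedIn with ha | hb
    · exact exists_isolated_of_separates her orth ana hab.symm ha hκ
    · exact exists_isolated_of_separates her orth ana hab hb hκ
  · push Not at hsep
    obtain ⟨a, b, hab, hsep⟩ := hsep
    exact exists_isolated_of_not_cSep her orth ana hab (fun o => hF _) hsep

end Isolating

end AnalyticGap

/-- every analytic n-gap (n ≥ 2) can be B-broken for some two-element
set B ⊆ {0,…,n−1}. -/
theorem statement_14 (n : ℕ) (hn : 2 ≤ n) (N : Type) [Countable N]
    (Γ : Fin n → Set (Set N)) (hgap : NGap Γ) (hana : ∀ i, AnalyticFam (Γ i)) :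
    ∃ B : Set (Fin n), B.ncard = 2 ∧ BBroken Γ B := by
  have h01 : (⟨0, by omega⟩ : Fin n) ≠ ⟨1, by omega⟩ := by simp
  obtain ⟨a, b, M, h⟩ := AnalyticGap.exists_isolated hgap.1.2.2 (fun i j => hgap.2 i j) hana h01
    (hgap.nonSepOn h01)
  exact ⟨{a, b}, ncard_pair h.ne, h.bBroken hgap⟩
end
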